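/- arXiv:1301.3552 — 3 statements merged into one kernel-verified Lean document; each statement's English description precedes it below -/
import Mathlib

section
/- Let (A,B,C,D) be a minimal state-space realization of an m×m transfer function R(s) = C(sI − A)⁻¹B + D. Then the system is strictly negative imaginary if and only if the following conditions all hold: (1) A is Hurwitz, D = Dᵀ, and rank(B) = rank(C) = m; (2) there exist a real symmetric matrix Y ≻ 0 and a real matrix L with LᵀL = −AY − YAᵀ such that AY + YAᵀ ⪯ 0 and B + AYCᵀ = 0; and (3) for Y and L as in (2), the matrix M(jω) = L·Y⁻¹·A⁻¹·(jωI − A)⁻¹·B has full column rank m for every ω ∈ (0,∞). -/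
open Matrix Filter Topology ComplexOrder

/-- The (complex) eigenvalues of a real square matrix. -/
noncomputable def eigs {k : Type*} [Fintype k] [DecidableEq k] (A : Matrix k k ℝ) : Set ℂ :=
  spectrum ℂ (A.map Complex.ofReal)

/-- A real square matrix is Hurwitz if all of its (complex) eigenvalues have negative real
part. -/
noncomputable def IsHurwitz {k : Type*} [Fintype k] [DecidableEq k] (A : Matrix k k ℝ) : Prop :=
  ∀ μ ∈ eigs A, μ.re < 0

/-- Transfer function `R(s) = C (sI - A)⁻¹ B + D` of a real state-space system, as a
complex matrix. -/
noncomputable def tf {n m : ℕ} (A : Matrix (Fin n) (Fin n) ℝ) (B : Matrix (Fin n) (Fin m) ℝ)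
    (C : Matrix (Fin m) (Fin n) ℝ) (D : Matrix (Fin m) (Fin m) ℝ) (s : ℂ) :
    Matrix (Fin m) (Fin m) ℂ :=
  C.map (Complex.ofReal) * (s • (1 : Matrix (Fin n) (Fin n) ℂ) - A.map Complex.ofReal)⁻¹ *
      B.map Complex.ofReal + D.map Complex.ofReal

/-- A state-space realization `(A,B,C,D)` is minimal if the controllability matrix and the
observability matrix both have rank `n`. -/
def IsMinimal {n m : ℕ} (A : Matrix (Fin n) (Fin n) ℝ) (B : Matrix (Fin n) (Fin m) ℝ)
    (C : Matrix (Fin m) (Fin n) ℝ) : Prop :=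
  (Matrix.of fun (i : Fin n) (p : Fin n × Fin m) => (A ^ (p.1 : ℕ) * B) i p.2).rank = n ∧
  (Matrix.of fun (p : Fin n × Fin m) (i : Fin n) => (C * A ^ (p.1 : ℕ)) p.2 i).rank = n

/-- The system `(A,B,C,D)` is negative imaginary (NI). -/
noncomputable def IsNI {n m : ℕ} (A : Matrix (Fin n) (Fin n) ℝ) (B : Matrix (Fin n) (Fin m) ℝ)
    (C : Matrix (Fin m) (Fin n) ℝ) (D : Matrix (Fin m) (Fin m) ℝ) : Prop :=
  (∀ μ ∈ eigs A, μ ≠ 0 ∧ μ.re ≤ 0) ∧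
  (∀ ω : ℝ, 0 < ω → (Complex.I * ω) ∉ eigs A →
    (Complex.I • (tf A B C D (Complex.I * ω) - (tf A B C D (Complex.I * ω))ᴴ)).PosSemidef) ∧
  (∀ ω : ℝ, 0 < ω → (Complex.I * ω) ∈ eigs A →
    ∃ K : Matrix (Fin m) (Fin m) ℂ,
      Tendsto (fun s : ℂ => (s - Complex.I * ω) • Complex.I • tf A B C D s)
        (𝓝[≠] (Complex.I * ω)) (𝓝 K) ∧ K.PosSemidef)

/-- The system `(A,B,C,D)` is strictly negative imaginary (SNI). -/
noncomputable def IsSNI {n m : ℕ} (A : Matrix (Fin n) (Fin n) ℝ) (B : Matrix (Fin n) (Fin m) ℝ)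
    (C : Matrix (Fin m) (Fin n) ℝ) (D : Matrix (Fin m) (Fin m) ℝ) : Prop :=
  IsHurwitz A ∧
  (∀ ω : ℝ, 0 < ω →
    (Complex.I • (tf A B C D (Complex.I * ω) - (tf A B C D (Complex.I * ω))ᴴ)).PosDef)


theorem aux_diag {𝕜 p : Type*} [RCLike 𝕜] [Fintype p] [DecidableEq p] {A : Matrix p p 𝕜}
    (hA : A.IsHermitian) : ∃ (V : Matrix p p 𝕜) (d : p → ℝ), Vᴴ * V = 1 ∧ V * Vᴴ = 1 ∧
      A = V * diagonal (fun i => (d i : 𝕜)) * Vᴴ ∧ d = hA.eigenvalues := by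
  refine ⟨hA.eigenvectorUnitary, hA.eigenvalues, ?_, ?_, ?_, rfl⟩
  · exact Unitary.coe_star_mul_self _
  · exact Unitary.coe_mul_star_self _
  · have := hA.spectral_theorem
    rw [Unitary.conjStarAlgAut_apply] at this
    exact this

theorem aux_factor {p : Type*} [Fintype p] [DecidableEq p] {A : Matrix p p ℝ}
    (hA : A.PosSemidef) : ∃ M : Matrix p p ℝ, A = Mᵀ * M := by
  obtain ⟨V, d, h1, h2, h3, h4⟩ := aux_diag hA.isHermitian
  have hd : ∀ i, 0 ≤ d i := by
    rw [h4]; exact hA.eigenvalues_nonneg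
  refine ⟨diagonal (fun i => Real.sqrt (d i)) * Vᴴ, ?_⟩
  rw [h3, transpose_mul, diagonal_transpose, conjTranspose_eq_transpose_of_trivial,
    transpose_transpose, Matrix.mul_assoc, Matrix.mul_assoc, ← Matrix.mul_assoc (diagonal _) (diagonal _),
    diagonal_mul_diagonal]
  simp [Real.mul_self_sqrt (hd _)]

theorem aux_ker {p : Type*} [Fintype p] [DecidableEq p] {A : Matrix p p ℝ}
    (hA : A.PosSemidef) (v : p → ℝ) (hv : v ⬝ᵥ (A *ᵥ v) = 0) : A *ᵥ v = 0 := by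
  obtain ⟨M, rfl⟩ := aux_factor hA
  have : M *ᵥ v = 0 := by
    rw [← dotProduct_self_eq_zero]
    rw [← hv, ← mulVec_mulVec, dotProduct_mulVec v, vecMul_transpose]
  rw [← mulVec_mulVec, this, mulVec_zero]

theorem aux_pinv {n p : Type*} [Fintype n] [Fintype p] [DecidableEq p] (G : Matrix n p ℂ) :
    ∃ Gp : Matrix p n ℂ, G * Gp * G = G ∧ (Gp * G)ᴴ = Gp * G := by
  obtain ⟨V, d, h1, h2, h3, -⟩ := aux_diag (isHermitian_conjTranspose_mul_self G)
  set T := Gᴴ * G with hT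
  set Tp := V * diagonal (fun i => ((d i)⁻¹ : ℂ)) * Vᴴ with hTp
  have hmul : ∀ a b : p → ℂ, (V * diagonal a * Vᴴ) * (V * diagonal b * Vᴴ) =
      V * diagonal (fun i => a i * b i) * Vᴴ := by
    intro a b
    calc _ = V * diagonal a * (Vᴴ * V) * diagonal b * Vᴴ := by simp only [Matrix.mul_assoc]
      _ = _ := by rw [h1, Matrix.mul_one, Matrix.mul_assoc V, diagonal_mul_diagonal]
  have hP : Tp * T = V * diagonal (fun i => ((d i)⁻¹ : ℂ) * (d i)) * Vᴴ := by
    rw [h3, hTp]; exact hmul _ _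
  have hPH : (Tp * T)ᴴ = Tp * T := by
    rw [hP]
    simp only [conjTranspose_mul, conjTranspose_conjTranspose, diagonal_conjTranspose, Matrix.mul_assoc]
    congr 3
    ext i; simp
  have hTPT : T * (Tp * T) = T := by
    rw [hP]
    conv_lhs => rw [h3]
    conv_rhs => rw [h3]
    refine (hmul _ _).trans ?_
    congr 3
    ext i
    by_cases h : d i = 0
    · simp [h]
    · have : (d i : ℂ) ≠ 0 := by exact_mod_cast h
      simp [this]
  have hz : G * (1 - Tp * T) = 0 := by
    rw [← conjTranspose_mul_self_eq_zero, conjTranspose_mul, Matrix.mul_assoc, ← Matrix.mul_assoc Gᴴ,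
      ← hT, Matrix.mul_sub, hTPT]
    simp
  refine ⟨Tp * Gᴴ, ?_, ?_⟩
  · rw [Matrix.mul_sub, sub_eq_zero, Matrix.mul_one] at hz
    rw [Matrix.mul_assoc, Matrix.mul_assoc Tp, ← hT, ← hz]
  · rw [Matrix.mul_assoc, ← hT, hPH]

theorem aux_trace_sum {p : Type*} [Fintype p] [DecidableEq p] (M P V : Matrix p p ℂ)
    (h2 : V * Vᴴ = 1) (hP : P * Pᴴ = P) :
    trace (M * P) = ∑ k, star (P.mulVec (V.col k)) ⬝ᵥ (M *ᵥ (P.mulVec (V.col k))) := by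
  have e : trace (M * P) = trace ((P * V)ᴴ * (M * (P * V))) := by
    rw [trace_mul_comm (P * V)ᴴ, conjTranspose_mul]
    congr 1
    calc M * P = M * (P * (V * Vᴴ) * Pᴴ) := by rw [h2, Matrix.mul_one, hP]
      _ = _ := by simp only [Matrix.mul_assoc]
  rw [e, trace]
  refine Finset.sum_congr rfl fun k _ => ?_
  rfl

theorem aux_skew {n p : Type*} [Fintype n] [Fintype p] [DecidableEq p] (F G : Matrix n p ℂ)
    (hFG : F * Gᴴ + G * Fᴴ = 0) (M : Matrix p p ℂ)
    (h1 : ∀ (v : p → ℂ) (ω : ℝ), F *ᵥ v = (Complex.I * ω) • (G *ᵥ v) → (star v ⬝ᵥ (M *ᵥ v)).re ≤ 0)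
    (h2 : ∀ (v : p → ℂ), G *ᵥ v = 0 → (star v ⬝ᵥ (M *ᵥ v)).re ≤ 0) :
    (trace M).re ≤ 0 := by
  obtain ⟨Gp, hg, hP⟩ := aux_pinv G
  set P := Gp * G with hPd
  have hGP : G * P = G := by rw [hPd, ← Matrix.mul_assoc, hg]
  have hPP : P * P = P := by rw [hPd, Matrix.mul_assoc, ← hPd, hGP]
  have hFG' : F * Gᴴ = - (G * Fᴴ) := eq_neg_of_add_eq_zero_left hFG
  set S := Gp * F * Gᴴ * Gpᴴ with hS
  have hPG : Gᴴ * Gpᴴ = P := by rw [← conjTranspose_mul, hP]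
  have hGS : G * S = F * P := by
    have e1 : F * P = - (G * (Fᴴ * Gpᴴ)) := by
      rw [← hPG, ← Matrix.mul_assoc, hFG', Matrix.neg_mul, Matrix.mul_assoc]
    have e2 : G * S = G * Gp * (F * P) := by
      rw [hS, ← hPG]; simp only [Matrix.mul_assoc]
    rw [e2, e1, Matrix.mul_neg, ← Matrix.mul_assoc, hg]
  have hSs : Sᴴ = - S := by
    rw [hS, Matrix.mul_assoc Gp, hFG']
    simp only [conjTranspose_mul, conjTranspose_neg, conjTranspose_conjTranspose, Matrix.mul_neg,
      Matrix.neg_mul, neg_neg, Matrix.mul_assoc]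
    rw [← Matrix.mul_assoc F Gᴴ, hFG']
    simp only [Matrix.mul_neg, Matrix.neg_mul, Matrix.mul_assoc, neg_neg]
  have hH : (-Complex.I • S).IsHermitian := by
    rw [IsHermitian, conjTranspose_smul, hSs]; simp
  obtain ⟨V, d, v1, v2, v3, -⟩ := aux_diag hH
  have hSV : S * V = V * diagonal (fun i => Complex.I * d i) := by
    have : S = Complex.I • (-Complex.I • S) := by simp [smul_smul]
    rw [this, v3, Matrix.smul_mul, Matrix.mul_assoc, v1, Matrix.mul_one, ← Matrix.mul_smul]
    congr 1
    ext i j; by_cases h : i = j <;> simp [diagonal, h]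
  have key : trace M = trace (M * P) + trace (M * (1 - P)) := by
    rw [← trace_add, ← Matrix.mul_add]; simp
  rw [key, aux_trace_sum M P V v2 (by rw [hP, hPP]),
    aux_trace_sum M (1 - P) V v2 (by rw [conjTranspose_sub, hP]; simp [Matrix.mul_sub, Matrix.sub_mul, hPP]),
    Complex.add_re, Complex.re_sum, Complex.re_sum]
  have n1 : ∀ k, (star (P.mulVec (V.col k)) ⬝ᵥ (M *ᵥ (P.mulVec (V.col k)))).re ≤ 0 := by
    intro k
    apply h1 _ (d k)
    rw [mulVec_mulVec, mulVec_mulVec, hGP, ← hGS]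
    have : (S * V).col k = (Complex.I * d k) • V.col k := by
      rw [hSV]; ext i; simp [mul_comm]
    rw [← mulVec_mulVec, ← mulVec_smul, ← this]
    rfl
  have n2 : ∀ k, (star ((1 - P).mulVec (V.col k)) ⬝ᵥ (M *ᵥ ((1 - P).mulVec (V.col k)))).re ≤ 0 := by
    intro k
    apply h2
    rw [mulVec_mulVec, Matrix.mul_sub, hGP]; simp
  have := Finset.sum_nonpos (fun k (_ : k ∈ Finset.univ) => n1 k)
  have := Finset.sum_nonpos (fun k (_ : k ∈ Finset.univ) => n2 k)
  linarith

theorem aux_closed {V W : Type*} [NormedAddCommGroup V] [NormedSpace ℝ V] [FiniteDimensional ℝ V]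
    [NormedAddCommGroup W] [NormedSpace ℝ W] (f : V →L[ℝ] W) (K : Set V) (hK : IsClosed K)
    (hcone : ∀ c : ℝ, 0 ≤ c → ∀ v ∈ K, c • v ∈ K) (hker : ∀ v ∈ K, f v = 0 → v = 0) :
    IsClosed (Set.image f K) := by
  have : ProperSpace V := FiniteDimensional.proper ℝ V
  obtain ⟨c, hc, hcb⟩ : ∃ c : ℝ, 0 < c ∧ ∀ v ∈ K, c * ‖v‖ ≤ ‖f v‖ := by
    have hcomp : IsCompact (K ∩ Metric.sphere (0 : V) 1) := (isCompact_sphere 0 1).inter_left hK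
    by_cases hne : (K ∩ Metric.sphere (0 : V) 1).Nonempty
    · obtain ⟨v0, hv0, hmin⟩ := hcomp.exists_isMinOn hne (f.continuous.norm.continuousOn)
      have hv0n : ‖v0‖ = 1 := by simpa using hv0.2
      refine ⟨‖f v0‖, ?_, fun v hv => ?_⟩
      · rw [norm_pos_iff]
        intro h
        have := hker v0 hv0.1 h
        simp [this] at hv0n
      · by_cases h0 : v = 0
        · simp [h0]
        have hn : 0 < ‖v‖ := norm_pos_iff.2 h0
        have : ‖f v0‖ ≤ ‖f (‖v‖⁻¹ • v)‖ := by
          apply hmin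
          refine ⟨hcone _ (by positivity) _ hv, ?_⟩
          simp [norm_smul, hn.ne']
        rw [map_smul, norm_smul, norm_inv, norm_norm] at this
        calc ‖f v0‖ * ‖v‖ ≤ ‖v‖⁻¹ * ‖f v‖ * ‖v‖ := by gcongr
          _ = ‖f v‖ := by field_simp
    · refine ⟨1, one_pos, fun v hv => ?_⟩
      by_cases h0 : v = 0
      · simp [h0]
      exfalso
      have hn : 0 < ‖v‖ := norm_pos_iff.2 h0
      exact hne ⟨‖v‖⁻¹ • v, hcone _ (by positivity) _ hv, by simp [norm_smul, hn.ne']⟩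
  refine isClosed_of_closure_subset fun w hw => ?_
  obtain ⟨x, hx, hxw⟩ := mem_closure_iff_seq_limit.1 hw
  choose v hvK hvx using hx
  obtain ⟨R, hR⟩ := (Metric.isBounded_range_of_tendsto x hxw).exists_norm_le
  have hb : ∀ k, v k ∈ Metric.closedBall (0 : V) (R / c) := by
    intro k
    rw [mem_closedBall_zero_iff, le_div_iff₀ hc, mul_comm]
    exact (hcb _ (hvK k)).trans (by rw [hvx]; exact hR _ ⟨k, rfl⟩)
  obtain ⟨a, -, φ, hφ, ha⟩ := tendsto_subseq_of_bounded Metric.isBounded_closedBall hb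
  refine ⟨a, hK.mem_of_tendsto ha (Eventually.of_forall fun k => hvK _), ?_⟩
  refine tendsto_nhds_unique ((f.continuous.tendsto a).comp ha) ?_
  have : (⇑f ∘ v ∘ φ) = x ∘ φ := by ext k; simp [hvx]
  rw [this]
  exact hxw.comp hφ.tendsto_atTop

theorem aux_functional {p : Type*} [Fintype p] [DecidableEq p] (f : Matrix p p ℝ →ₗ[ℝ] ℝ) :
    ∃ Z : Matrix p p ℝ, Zᵀ = Z ∧ ∀ N : Matrix p p ℝ, Nᵀ = N → f N = trace (Z * N) := by
  set Z0 : Matrix p p ℝ := Matrix.of fun i j => f (single j i 1) with hZ0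
  have h0 : ∀ N, f N = trace (Z0 * N) := by
    intro N
    conv_lhs => rw [matrix_eq_sum_single N]
    simp only [map_sum, trace, diag, mul_apply, hZ0, of_apply]
    rw [Finset.sum_comm]
    refine Finset.sum_congr rfl fun i _ => Finset.sum_congr rfl fun j _ => ?_
    have : single j i (N j i) = N j i • single j i (1 : ℝ) := by simp
    rw [this, map_smul, smul_eq_mul, mul_comm]
  refine ⟨(1 / 2 : ℝ) • (Z0 + Z0ᵀ), by simp [add_comm], fun N hN => ?_⟩
  have : trace (Z0ᵀ * N) = trace (Z0 * N) := by
    rw [← trace_transpose, transpose_mul, transpose_transpose, hN, trace_mul_comm]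
  rw [h0, Matrix.smul_mul, trace_smul, Matrix.add_mul, trace_add, this, smul_eq_mul]; ring

open scoped Matrix.Norms.Elementwise in
theorem aux_separation {n p : Type*} [Fintype n] [Fintype p] [DecidableEq n] [DecidableEq p]
    (F G : Matrix p n ℝ) (N : Matrix p p ℝ) (hN : Nᵀ = N)
    (hker : ∀ Y : Matrix n n ℝ, Yᵀ = Y → (-(F * Y * Gᵀ + G * Y * Fᵀ)).PosSemidef → Y = 0)
    (hno : ¬ ∃ Y : Matrix n n ℝ, Yᵀ = Y ∧ (-(N + (F * Y * Gᵀ + G * Y * Fᵀ))).PosSemidef) :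
    ∃ Z : Matrix p p ℝ, Z.PosSemidef ∧ Fᵀ * Z * G + Gᵀ * Z * F = 0 ∧ 0 < trace (Z * N) := by
  let T : Matrix n n ℝ →ₗ[ℝ] Matrix p p ℝ :=
    { toFun := fun Y => F * Y * Gᵀ + G * Y * Fᵀ
      map_add' := fun X Y => by simp only [Matrix.mul_add, Matrix.add_mul]; abel
      map_smul' := fun c Y => by simp }
  have hT : ∀ Y, T Y = F * Y * Gᵀ + G * Y * Fᵀ := fun _ => rfl
  have hTs : ∀ Y, Yᵀ = Y → (T Y)ᵀ = T Y := by
    intro Y hY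
    simp only [hT, transpose_add, transpose_mul, transpose_transpose, hY, Matrix.mul_assoc]
    rw [add_comm]
  let f0 : (Matrix n n ℝ × Matrix p p ℝ) →ₗ[ℝ] Matrix p p ℝ := T.coprod LinearMap.id
  let f : (Matrix n n ℝ × Matrix p p ℝ) →L[ℝ] Matrix p p ℝ := LinearMap.toContinuousLinearMap f0
  have hf : ∀ a, f a = T a.1 + a.2 := fun _ => rfl
  let K : Set (Matrix n n ℝ × Matrix p p ℝ) := {a | a.1ᵀ = a.1 ∧ a.2.PosSemidef}
  have hKc : IsClosed K := by
    have e : K = {a | a.1ᵀ = a.1} ∩ ({a | a.2ᵀ = a.2} ∩ ⋂ x : p → ℝ, {a | 0 ≤ x ⬝ᵥ (a.2 *ᵥ x)}) := by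
      ext a
      simp only [K, Set.mem_ofPred_eq, Set.mem_inter_iff, posSemidef_iff_dotProduct_mulVec,
        Set.mem_iInter, IsHermitian, conjTranspose_eq_transpose_of_trivial, star_trivial]
    rw [e]
    refine IsClosed.inter (isClosed_eq (by fun_prop) (by fun_prop)) (IsClosed.inter
      (isClosed_eq (by fun_prop) (by fun_prop)) (isClosed_iInter fun x => isClosed_le (by fun_prop) (by fun_prop)))
  have hcl : IsClosed (Set.image f K) := by
    apply aux_closed f K hKc
    · rintro c hc ⟨Y, Q⟩ ⟨h1, h2⟩
      exact ⟨by simpa using congrArg (c • ·) h1, h2.smul hc⟩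
    · rintro ⟨Y, Q⟩ ⟨h1, h2⟩ h
      simp only [hf] at h h1 h2
      have hQ : Q = - T Y := eq_neg_of_add_eq_zero_right h
      have hY : Y = 0 := hker Y h1 (by rw [← hT, ← hQ]; exact h2)
      rw [hY, map_zero, neg_zero] at hQ
      rw [hY, hQ]; rfl
  have hconv : Convex ℝ (Set.image f K) := by
    apply Convex.is_linear_image _ f.toLinearMap.isLinear
    rintro ⟨Y, Q⟩ ⟨h1, h2⟩ ⟨Y', Q'⟩ ⟨h1', h2'⟩ a b ha hb -
    simp only at h1 h2 h1' h2'
    exact ⟨by simp [h1, h1'], (h2.smul ha).add (h2'.smul hb)⟩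
  have hnot : -N ∉ Set.image f K := by
    rintro ⟨⟨Y, Q⟩, ⟨h1, h2⟩, h3⟩
    simp only [hf] at h1 h2 h3
    refine hno ⟨Y, h1, ?_⟩
    have : -(N + (F * Y * Gᵀ + G * Y * Fᵀ)) = Q := by
      rw [← hT, neg_add, ← h3]; abel
    rw [this]; exact h2
  have hlc : LocallyConvexSpace ℝ (Matrix p p ℝ) := NormedSpace.toLocallyConvexSpace
  obtain ⟨g, u, hg1, hg2⟩ := geometric_hahn_banach_closed_point hconv hcl hnot
  have hcone : ∀ a ∈ K, g (f a) ≤ 0 := by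
    intro a ha
    by_contra! hpos
    have hu : 0 < u := by
      have := hg1 _ ⟨0, ⟨by simp, PosSemidef.zero⟩, rfl⟩
      simpa using this
    have hm : (u / g (f a)) • a ∈ K := by
      refine ⟨by simp [ha.1], ha.2.smul (by positivity)⟩
    have := hg1 _ ⟨_, hm, rfl⟩
    rw [map_smul, map_smul, smul_eq_mul, div_mul_cancel₀ _ hpos.ne'] at this
    exact lt_irrefl _ this
  have hu : 0 < u := by
    have := hg1 _ ⟨0, ⟨by simp, PosSemidef.zero⟩, rfl⟩
    simpa using this
  obtain ⟨Z, hZs, hZ⟩ := aux_functional (-g.toLinearMap)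
  have hZ' : ∀ M : Matrix p p ℝ, Mᵀ = M → trace (Z * M) = - g M := fun M hM => (hZ M hM).symm
  refine ⟨Z, ?_, ?_, ?_⟩
  · refine .of_dotProduct_mulVec_nonneg (by simpa [IsHermitian] using hZs) fun x => ?_
    have hx := posSemidef_vecMulVec_self_star x
    have := hcone (0, vecMulVec x (star x)) ⟨by simp, hx⟩
    rw [hf] at this
    simp only [map_zero, zero_add] at this
    have h2 := hZ' (vecMulVec x (star x)) hx.isHermitian
    rw [mul_vecMulVec, trace_vecMulVec, dotProduct_comm] at h2
    rw [h2]; linarith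
  · set E := Fᵀ * Z * G + Gᵀ * Z * F with hE
    have hEs : Eᵀ = E := by
      simp only [hE, transpose_add, transpose_mul, transpose_transpose, hZs, Matrix.mul_assoc]
      rw [add_comm]
    have h0 : ∀ Y : Matrix n n ℝ, Yᵀ = Y → trace (Z * T Y) = trace (E * Y) := by
      intro Y hY
      rw [hT, hE, Matrix.mul_add, Matrix.add_mul, trace_add, trace_add, add_comm]
      congr 1
      · rw [← Matrix.mul_assoc, trace_mul_comm]; simp only [Matrix.mul_assoc]
      · rw [← Matrix.mul_assoc, trace_mul_comm]; simp only [Matrix.mul_assoc]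
    have h1 : trace (Z * T E) = 0 := by
      apply le_antisymm
      · have := hcone (-E, 0) ⟨by simp [hEs], PosSemidef.zero⟩
        simp only [hf, add_zero, map_neg] at this
        rw [hZ' _ (hTs _ hEs)]; linarith
      · have := hcone (E, 0) ⟨by simp [hEs], PosSemidef.zero⟩
        simp only [hf, add_zero] at this
        rw [hZ' _ (hTs _ hEs)]; linarith
    rw [h0 _ hEs] at h1
    rw [← trace_conjTranspose_mul_self_eq_zero_iff, conjTranspose_eq_transpose_of_trivial, hEs, h1]
  · rw [hZ' _ hN, ← map_neg]
    linarith

theorem mm {a b c : Type*} [Fintype b] (X : Matrix a b ℝ) (Y : Matrix b c ℝ) :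
    (X * Y).map Complex.ofReal = X.map Complex.ofReal * Y.map Complex.ofReal :=
  Matrix.map_mul (f := Complex.ofRealHom)

theorem mH {a b : Type*} (X : Matrix a b ℝ) :
    (X.map Complex.ofReal)ᴴ = Xᵀ.map Complex.ofReal := by
  ext i j; simp

theorem aux_kyp {n p : Type*} [Fintype n] [Fintype p] [DecidableEq n] [DecidableEq p]
    (F G : Matrix p n ℝ) (N : Matrix p p ℝ) (hN : Nᵀ = N)
    (hker : ∀ Y : Matrix n n ℝ, Yᵀ = Y → (-(F * Y * Gᵀ + G * Y * Fᵀ)).PosSemidef → Y = 0)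
    (hfreq : ∀ (z : p → ℂ) (ω : ℝ),
      (Fᵀ.map Complex.ofReal) *ᵥ z = (Complex.I * ω) • ((Gᵀ.map Complex.ofReal) *ᵥ z) →
      (star z ⬝ᵥ (N.map Complex.ofReal *ᵥ z)).re ≤ 0)
    (hinf : ∀ (z : p → ℂ), (Gᵀ.map Complex.ofReal) *ᵥ z = 0 →
      (star z ⬝ᵥ (N.map Complex.ofReal *ᵥ z)).re ≤ 0) :
    ∃ Y : Matrix n n ℝ, Yᵀ = Y ∧ (-(N + (F * Y * Gᵀ + G * Y * Fᵀ))).PosSemidef := by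
  by_contra hno
  obtain ⟨Z, hZ, hZ0, hZN⟩ := aux_separation F G N hN hker hno
  obtain ⟨M, rfl⟩ := aux_factor hZ
  have hq : ∀ v : p → ℂ, star v ⬝ᵥ ((M * N * Mᵀ).map Complex.ofReal *ᵥ v) =
      star (Mᵀ.map Complex.ofReal *ᵥ v) ⬝ᵥ (N.map Complex.ofReal *ᵥ (Mᵀ.map Complex.ofReal *ᵥ v)) := by
    intro v
    rw [star_mulVec, mH, transpose_transpose, ← dotProduct_mulVec, mulVec_mulVec, mulVec_mulVec,
      mm, mm, Matrix.mul_assoc]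
  have key := aux_skew ((Fᵀ * Mᵀ).map Complex.ofReal) ((Gᵀ * Mᵀ).map Complex.ofReal) ?_
    ((M * N * Mᵀ).map Complex.ofReal) ?_ ?_
  · have : trace ((M * N * Mᵀ).map Complex.ofReal) = ((trace (M * N * Mᵀ) : ℝ) : ℂ) := by
      simp [trace]
    rw [this, Complex.ofReal_re, trace_mul_comm, ← Matrix.mul_assoc] at key
    linarith
  · rw [mH, mH, ← mm, ← mm]
    have : (0 : Matrix n n ℂ) = (0 : Matrix n n ℝ).map Complex.ofReal := by ext; simp
    rw [this, ← hZ0]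
    ext i j
    simp only [Matrix.add_apply, map_apply, transpose_mul, transpose_transpose, Matrix.mul_assoc, Complex.ofReal_add]
  · intro v ω h
    rw [hq]
    apply hfreq _ ω
    rw [mm, mm, ← mulVec_mulVec, ← mulVec_mulVec] at h
    exact h
  · intro v h
    rw [hq]
    apply hinf
    rw [mm, ← mulVec_mulVec] at h
    exact h

theorem hurw_unit {k : Type*} [Fintype k] [DecidableEq k] {A : Matrix k k ℝ} (hA : IsHurwitz A)
    (s : ℂ) (hs : 0 ≤ s.re) : IsUnit (s • (1 : Matrix k k ℂ) - A.map Complex.ofReal) := by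
  by_contra h
  have : s ∈ eigs A := by
    rw [eigs, spectrum.mem_iff, Algebra.algebraMap_eq_smul_one]; exact h
  have := hA s this
  linarith

theorem real_unit {k : Type*} [Fintype k] [DecidableEq k] {A : Matrix k k ℝ}
    (h : IsUnit (A.map Complex.ofReal)) : IsUnit A := by
  rw [isUnit_iff_isUnit_det, isUnit_iff_ne_zero] at h ⊢
  intro h0
  apply h
  have : (A.map Complex.ofReal).det = ((A.det : ℝ) : ℂ) := (RingHom.map_det Complex.ofRealHom A).symm
  rw [this, h0]; simp

theorem hurw_isUnit {k : Type*} [Fintype k] [DecidableEq k] {A : Matrix k k ℝ} (hA : IsHurwitz A) :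
    IsUnit A := by
  apply real_unit
  have := hurw_unit hA 0 (by simp)
  rw [zero_smul, zero_sub] at this
  simpa using this.neg

theorem map_pow_ofReal {k : Type*} [Fintype k] [DecidableEq k] (A : Matrix k k ℝ) (r : ℕ) :
    (A ^ r).map Complex.ofReal = (A.map Complex.ofReal) ^ r :=
  Matrix.map_pow A Complex.ofRealHom r

theorem map_one_ofReal {k : Type*} [DecidableEq k] :
    (1 : Matrix k k ℝ).map Complex.ofReal = 1 :=
  Matrix.map_one _ Complex.ofReal_zero Complex.ofReal_one

theorem msub {a b : Type*} (X Y : Matrix a b ℝ) :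
    (X - Y).map Complex.ofReal = X.map Complex.ofReal - Y.map Complex.ofReal := by
  ext i j; simp

theorem madd {a b : Type*} (X Y : Matrix a b ℝ) :
    (X + Y).map Complex.ofReal = X.map Complex.ofReal + Y.map Complex.ofReal := by
  ext i j; simp

theorem mneg {a b : Type*} (X : Matrix a b ℝ) :
    (-X).map Complex.ofReal = -X.map Complex.ofReal := by
  ext i j; simp

theorem aux_pow_zero {R : Type*} [NormedRing R] [NormedAlgebra ℂ R] [CompleteSpace R] [Nontrivial R]
    (a : R) (h : ∀ z ∈ spectrum ℂ a, ‖z‖ < 1) : Tendsto (fun k : ℕ => ‖a ^ k‖) atTop (𝓝 0) := by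
  have h1 : spectralRadius ℂ a < ((1 : NNReal) : ENNReal) :=
    spectrum.spectralRadius_lt_of_forall_lt a fun z hz => h z hz
  obtain ⟨r, hr1, hr2⟩ := exists_between h1
  have hr : r ≠ ⊤ := ne_top_of_lt hr2
  lift r to NNReal using hr
  have hr2' : r < 1 := by exact_mod_cast hr2
  have hev := (spectrum.pow_nnnorm_pow_one_div_tendsto_nhds_spectralRadius a).eventually (gt_mem_nhds hr1)
  have hz : Tendsto (fun k : ℕ => (r : ℝ) ^ k) atTop (𝓝 0) :=
    tendsto_pow_atTop_nhds_zero_of_lt_one r.2 (by exact_mod_cast hr2')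
  refine squeeze_zero' (Eventually.of_forall fun k => norm_nonneg _) ?_ hz
  filter_upwards [hev, eventually_gt_atTop 0] with k hk hk0
  have hk' : (0 : ℝ) < k := by exact_mod_cast hk0
  have h3 : ((‖a ^ k‖₊ : ENNReal)) ≤ (r : ENNReal) ^ k := by
    have := ENNReal.rpow_le_rpow hk.le hk'.le
    rw [← ENNReal.rpow_mul, one_div, inv_mul_cancel₀ hk'.ne', ENNReal.rpow_one, ENNReal.rpow_natCast] at this
    exact this
  have h4 : ‖a ^ k‖₊ ≤ r ^ k := by exact_mod_cast h3
  exact_mod_cast h4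

open scoped Matrix.Norms.Operator in
theorem aux_mat_pow_zero {k : Type*} [Fintype k] [DecidableEq k] [Nonempty k] (M : Matrix k k ℂ)
    (h : ∀ z ∈ spectrum ℂ M, ‖z‖ < 1) (i j : k) :
    Tendsto (fun r : ℕ => (M ^ r) i j) atTop (𝓝 0) := by
  have h0 := aux_pow_zero M h
  rw [tendsto_zero_iff_norm_tendsto_zero]
  let φ : Matrix k k ℂ →ₗ[ℂ] ℂ := Matrix.entryLinearMap ℂ ℂ i j
  have hb : ∃ c : ℝ, ∀ X : Matrix k k ℂ, ‖φ X‖ ≤ c * ‖X‖ :=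
    ⟨_, fun X => (LinearMap.toContinuousLinearMap φ).le_opNorm X⟩
  obtain ⟨c, hc⟩ := hb
  refine squeeze_zero (fun r => norm_nonneg _) (fun r => hc (M ^ r)) ?_
  simpa using h0.const_mul c

theorem aux_cayley {k : Type*} [Fintype k] [DecidableEq k] {A : Matrix k k ℝ} (hA : IsHurwitz A)
    (N : Matrix k k ℝ) (hN : (1 - A) * N = 1) (z : ℂ)
    (hz : z ∈ spectrum ℂ (((1 + A) * N).map Complex.ofReal)) : ‖z‖ < 1 := by
  by_contra! hn
  rw [spectrum.mem_iff, Algebra.algebraMap_eq_smul_one] at hz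
  apply hz
  set Ac := A.map Complex.ofReal with hAc
  set Nc := N.map Complex.ofReal with hNc
  have e1 : (1 - Ac) * Nc = 1 := by
    have := congrArg (fun X : Matrix k k ℝ => X.map Complex.ofReal) hN
    simpa only [mm, map_one_ofReal, msub] using this
  have hNu : IsUnit Nc := by
    have : Nc * (1 - Ac) = 1 := mul_eq_one_comm.1 e1
    exact ⟨⟨Nc, 1 - Ac, this, e1⟩, rfl⟩
  have e2 : ((1 + A) * N).map Complex.ofReal = (1 + Ac) * Nc := by
    rw [mm, madd, map_one_ofReal]
  have e3 : z • (1 : Matrix k k ℂ) - (1 + Ac) * Nc = ((z - 1) • 1 - (z + 1) • Ac) * Nc := by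
    have e0 : z • (1 : Matrix k k ℂ) = z • ((1 - Ac) * Nc) := by rw [e1]
    rw [e0]
    simp only [Matrix.sub_mul, Matrix.add_mul, Matrix.smul_mul, sub_smul, add_smul, smul_sub, Matrix.one_mul, one_smul]
    abel
  rw [e2, e3]
  refine IsUnit.mul ?_ hNu
  by_cases hz1 : z + 1 = 0
  · rw [hz1, zero_smul, sub_zero]
    have : z - 1 ≠ 0 := by
      intro h
      have : (2 : ℂ) = 0 := by linear_combination hz1 - h
      norm_num at this
    exact (isUnit_one).smul (Units.mk0 _ this)
  · have hs : 0 ≤ ((z - 1) / (z + 1)).re := by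
      rw [Complex.div_re, ← add_div]
      apply div_nonneg _ (Complex.normSq_nonneg _)
      have : 1 ≤ ‖z‖ ^ 2 := by nlinarith
      rw [← Complex.normSq_eq_norm_sq, Complex.normSq_apply] at this
      simp; nlinarith
    have := (hurw_unit hA _ hs).smul (Units.mk0 _ hz1)
    convert this using 1
    rw [Units.smul_def, Units.val_mk0, smul_sub, smul_smul, mul_div_cancel₀ _ hz1]

theorem aux_lyap {k : Type*} [Fintype k] [DecidableEq k] {A : Matrix k k ℝ} (hA : IsHurwitz A)
    (Y : Matrix k k ℝ) (hY : Yᵀ = Y) (hQ : (-(A * Y + Y * Aᵀ)).PosSemidef) : Y.PosSemidef := by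
  rcases isEmpty_or_nonempty k with hk | hk
  · rw [Subsingleton.elim Y 0]; exact .zero
  have hu : IsUnit (1 - A) := by
    apply real_unit
    have := hurw_unit hA 1 (by simp)
    convert this using 1
    rw [msub, map_one_ofReal, one_smul]
  obtain ⟨u, hu⟩ := hu
  set N : Matrix k k ℝ := ((u⁻¹ : (Matrix k k ℝ)ˣ) : Matrix k k ℝ) with hNd
  have hN : (1 - A) * N = 1 := by rw [← hu]; simp [hNd]
  have hN' : N * (1 - A) = 1 := by rw [← hu]; simp [hNd]
  set M := (1 + A) * N with hM
  have hMN : M = N * (1 + A) := by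
    calc M = N * (1 - A) * ((1 + A) * N) := by rw [hN', Matrix.one_mul]
      _ = N * (1 + A) * ((1 - A) * N) := by noncomm_ring
      _ = _ := by rw [hN, Matrix.mul_one]
  have hstep : (Y - M * Y * Mᵀ).PosSemidef := by
    have : Y - M * Y * Mᵀ = (2 : ℝ) • (N * (-(A * Y + Y * Aᵀ)) * Nᴴ) := by
      have e1 : Y = N * ((1 - A) * Y * (1 - A)ᵀ) * Nᵀ := by
        calc Y = (N * (1 - A)) * Y * (N * (1 - A))ᵀ := by rw [hN']; simp
          _ = _ := by rw [transpose_mul]; simp only [Matrix.mul_assoc]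
      have e2 : M * Y * Mᵀ = N * ((1 + A) * Y * (1 + A)ᵀ) * Nᵀ := by
        rw [hMN, transpose_mul]; simp only [Matrix.mul_assoc]
      rw [e2]
      refine (congrArg (fun X => X - N * ((1 + A) * Y * (1 + A)ᵀ) * Nᵀ) e1).trans ?_
      rw [← Matrix.sub_mul, ← Matrix.mul_sub, conjTranspose_eq_transpose_of_trivial, ← Matrix.smul_mul, ← Matrix.mul_smul]
      congr 2
      simp only [transpose_sub, transpose_add, transpose_one, two_smul]
      noncomm_ring
    rw [this]
    exact (hQ.mul_mul_conjTranspose_same N).smul (by norm_num)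
  have hall : ∀ r : ℕ, (Y - M ^ r * Y * (M ^ r)ᵀ).PosSemidef := by
    intro r
    induction r with
    | zero => simpa using PosSemidef.zero
    | succ r ih =>
      have : Y - M ^ (r + 1) * Y * (M ^ (r + 1))ᵀ =
          (Y - M ^ r * Y * (M ^ r)ᵀ) + M ^ r * (Y - M * Y * Mᵀ) * (M ^ r)ᴴ := by
        rw [conjTranspose_eq_transpose_of_trivial, pow_succ, transpose_mul]
        noncomm_ring
      rw [this]
      exact ih.add (hstep.mul_mul_conjTranspose_same _)
  have hlim : Tendsto (fun r : ℕ => M ^ r) atTop (𝓝 0) := by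
    refine tendsto_pi_nhds.2 fun i => tendsto_pi_nhds.2 fun j => ?_
    have := aux_mat_pow_zero (M.map Complex.ofReal) (fun z hz => aux_cayley hA N hN z hz) i j
    simp only [← map_pow_ofReal, map_apply] at this
    have h2 := (Complex.continuous_re.tendsto _).comp this
    simpa [Function.comp_def] using h2
  refine .of_dotProduct_mulVec_nonneg (by simpa [IsHermitian] using hY) fun x => ?_
  have hcont : Continuous fun X : Matrix k k ℝ => star x ⬝ᵥ ((Y - X * Y * Xᵀ) *ᵥ x) := by fun_prop
  have h3 := (hcont.tendsto 0).comp hlim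
  have h4 := ge_of_tendsto' h3 (b := 0) fun r => (hall r).dotProduct_mulVec_nonneg x
  simpa using h4

theorem rank_inj {𝕜 a b : Type*} [Field 𝕜] [Fintype a] [Fintype b] (M : Matrix a b 𝕜) :
    M.rank = Fintype.card b ↔ ∀ v, M *ᵥ v = 0 → v = 0 := by
  have h := M.mulVecLin.finrank_range_add_finrank_ker
  rw [Module.finrank_fintype_fun_eq_card] at h
  rw [Matrix.rank]
  have hk : (∀ v, M *ᵥ v = 0 → v = 0) ↔ LinearMap.ker M.mulVecLin = ⊥ := by
    rw [LinearMap.ker_eq_bot']; rfl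
  rw [hk, ← Submodule.finrank_eq_zero]
  omega

theorem ctrl_vec {n m : ℕ} {A : Matrix (Fin n) (Fin n) ℝ} {B : Matrix (Fin n) (Fin m) ℝ}
    {C : Matrix (Fin m) (Fin n) ℝ} (hmin : IsMinimal A B C) (v : Fin n → ℝ)
    (hv : ∀ k : ℕ, v ᵥ* (A ^ k * B) = 0) : v = 0 := by
  have h := hmin.1
  rw [← rank_transpose] at h
  have h' := (rank_inj _).1 (h.trans (Fintype.card_fin n).symm)
  apply h'
  ext ⟨k, j⟩
  have := congrFun (hv k) j
  rw [mulVec_transpose]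
  exact this

theorem obs_vec {n m : ℕ} {A : Matrix (Fin n) (Fin n) ℝ} {B : Matrix (Fin n) (Fin m) ℝ}
    {C : Matrix (Fin m) (Fin n) ℝ} (hmin : IsMinimal A B C) (v : Fin n → ℝ)
    (hv : ∀ k : ℕ, (C * A ^ k) *ᵥ v = 0) : v = 0 := by
  have h' := (rank_inj _).1 (hmin.2.trans (Fintype.card_fin n).symm)
  apply h'
  ext ⟨k, j⟩
  exact congrFun (hv k) j

theorem aux_block {a b : Type*} [Fintype a] [Fintype b] [DecidableEq a] [DecidableEq b]
    (P : Matrix a a ℝ) (R : Matrix a b ℝ) (h : (fromBlocks P R Rᵀ 0).PosSemidef) :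
    R = 0 ∧ P.PosSemidef := by
  constructor
  · ext i j
    have := aux_ker h (Sum.elim 0 (Pi.single j 1)) (by simp [fromBlocks_mulVec])
    have := congrFun this (Sum.inl i)
    simpa [fromBlocks_mulVec] using this
  · have := h.submatrix (Sum.inl : a → a ⊕ b)
    convert this using 1
    ext i j; rfl

theorem ker_step {n : ℕ} {A Y : Matrix (Fin n) (Fin n) ℝ} (hY : Yᵀ = Y)
    (hQ : (-(A * Y + Y * Aᵀ)).PosSemidef) (v : Fin n → ℝ) (hv : Y *ᵥ v = 0) (k : ℕ) :
    Y *ᵥ ((Aᵀ ^ k) *ᵥ v) = 0 := by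
  induction k with
  | zero => simpa using hv
  | succ k ih =>
    set x := (Aᵀ ^ k) *ᵥ v with hx
    have hxY : x ᵥ* Y = 0 := by rw [← mulVec_transpose, hY, ih]
    have h1 := aux_ker hQ x (by
      rw [neg_mulVec, add_mulVec, ← mulVec_mulVec, ih, ← mulVec_mulVec, mulVec_zero, zero_add,
        dotProduct_neg, dotProduct_mulVec, hxY, zero_dotProduct, neg_zero])
    rw [neg_mulVec, add_mulVec, ← mulVec_mulVec, ih, ← mulVec_mulVec, mulVec_zero, zero_add, neg_eq_zero] at h1
    rw [pow_succ', ← mulVec_mulVec, ← hx, h1]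

theorem aux_trivial {n m : ℕ} {A : Matrix (Fin n) (Fin n) ℝ} {B : Matrix (Fin n) (Fin m) ℝ}
    {C : Matrix (Fin m) (Fin n) ℝ} (hmin : IsMinimal A B C) (Y : Matrix (Fin n) (Fin n) ℝ)
    (hY : Yᵀ = Y) (hQ : (-(A * Y + Y * Aᵀ)).PosSemidef) (hC : Y * Cᵀ = 0) : Y = 0 := by
  have h1 : ∀ k : ℕ, C * A ^ k * Y = 0 := by
    intro k
    have : (C * A ^ k * Y)ᵀ = 0 := by
      rw [transpose_mul, transpose_mul, hY, transpose_pow]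
      ext i j
      have := ker_step hY hQ (Cᵀ *ᵥ Pi.single j 1) (by rw [mulVec_mulVec, hC, zero_mulVec]) k
      rw [mulVec_mulVec, mulVec_mulVec] at this
      simpa [Matrix.mul_assoc] using congrFun this i
    rw [← transpose_transpose (C * A ^ k * Y), this, transpose_zero]
  ext i j
  have := obs_vec hmin (Y *ᵥ Pi.single j 1) fun k => by rw [mulVec_mulVec, h1, zero_mulVec]
  simpa using congrFun this i

theorem aux_posDef {n m : ℕ} {A : Matrix (Fin n) (Fin n) ℝ} {B : Matrix (Fin n) (Fin m) ℝ}
    {C : Matrix (Fin m) (Fin n) ℝ} (hA : IsHurwitz A) (hmin : IsMinimal A B C)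
    (Y : Matrix (Fin n) (Fin n) ℝ)
    (hY : Yᵀ = Y) (hQ : (-(A * Y + Y * Aᵀ)).PosSemidef) (hC : B + A * Y * Cᵀ = 0) : Y.PosDef := by
  have hp := aux_lyap hA Y hY hQ
  refine .of_dotProduct_mulVec_pos hp.isHermitian fun v hv => ?_
  refine lt_of_le_of_ne (hp.dotProduct_mulVec_nonneg v) fun h0 => hv ?_
  have hYv := aux_ker hp v (by simpa using h0.symm)
  apply ctrl_vec hmin
  intro k
  have hB : B = -(A * (Y * Cᵀ)) := by rw [← Matrix.mul_assoc]; exact eq_neg_of_add_eq_zero_left hC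
  have hk := ker_step hY hQ v hYv (k + 1)
  have : v ᵥ* (A ^ (k + 1) * Y) = 0 := by
    rw [← mulVec_transpose, transpose_mul, hY, transpose_pow, ← mulVec_mulVec, hk]
  rw [hB, Matrix.mul_neg, ← Matrix.mul_assoc, ← pow_succ, ← Matrix.mul_assoc, vecMul_neg,
    ← vecMul_vecMul, this, zero_vecMul, neg_zero]

theorem aux_id {n m : ℕ} {A : Matrix (Fin n) (Fin n) ℝ} {B : Matrix (Fin n) (Fin m) ℝ}
    {C : Matrix (Fin m) (Fin n) ℝ} {D : Matrix (Fin m) (Fin m) ℝ} (hA : IsHurwitz A) (hD : D = Dᵀ)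
    {Y L : Matrix (Fin n) (Fin n) ℝ} (hY : Y.PosDef) (hL : Lᵀ * L = -(A * Y + Y * Aᵀ))
    (hB : B + A * Y * Cᵀ = 0) (ω : ℝ) (M : Matrix (Fin n) (Fin m) ℂ)
    (hM : M = (L * Y⁻¹ * A⁻¹).map Complex.ofReal *
              ((Complex.I * ω) • (1 : Matrix (Fin n) (Fin n) ℂ) - A.map Complex.ofReal)⁻¹ *
              B.map Complex.ofReal) :
    Complex.I • (tf A B C D (Complex.I * ω) - (tf A B C D (Complex.I * ω))ᴴ) = (ω : ℂ) • (Mᴴ * M) := by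
  have hYs : Yᵀ = Y := hY.isHermitian
  have hAu := (isUnit_iff_isUnit_det A).1 (hurw_isUnit hA)
  have hYu := (isUnit_iff_isUnit_det Y).1 hY.isUnit
  have hΦu := (isUnit_iff_isUnit_det _).1 (hurw_unit hA (Complex.I * ω) (by simp))
  rw [tf]
  set Φ := ((Complex.I * ω) • (1 : Matrix (Fin n) (Fin n) ℂ) - A.map Complex.ofReal)⁻¹ with hΦ
  have f1 := congrArg (fun X : Matrix _ _ ℝ => X.map Complex.ofReal) (nonsing_inv_mul A hAu)
  have f2 := congrArg (fun X : Matrix _ _ ℝ => X.map Complex.ofReal) (mul_nonsing_inv A hAu)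
  have f3 := congrArg (fun X : Matrix _ _ ℝ => X.map Complex.ofReal) (nonsing_inv_mul Y hYu)
  have f4 := congrArg (fun X : Matrix _ _ ℝ => X.map Complex.ofReal) (mul_nonsing_inv Y hYu)
  have f5 := mul_nonsing_inv _ hΦu
  have f6 := congrArg (fun X : Matrix _ _ ℝ => X.map Complex.ofReal) hL
  have hCt : Cᵀ = -(Y⁻¹ * (A⁻¹ * B)) := by
    have : B = -(A * (Y * Cᵀ)) := by rw [← Matrix.mul_assoc]; exact eq_neg_of_add_eq_zero_left hB
    rw [this, Matrix.mul_neg, ← Matrix.mul_assoc A⁻¹, nonsing_inv_mul A hAu, Matrix.one_mul,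
      Matrix.mul_neg, ← Matrix.mul_assoc, nonsing_inv_mul Y hYu, Matrix.one_mul, neg_neg]
  have hYi : (Y⁻¹)ᵀ = Y⁻¹ := by rw [transpose_nonsing_inv, hYs]
  have hCc : C = -((A⁻¹ * B)ᵀ * Y⁻¹) := by
    rw [← transpose_transpose C, hCt, transpose_neg, transpose_mul (Y⁻¹), hYi]
  have hDc : (D.map Complex.ofReal)ᴴ = D.map Complex.ofReal := by rw [mH, ← hD]
  have hYc : (Y.map Complex.ofReal)ᴴ = Y.map Complex.ofReal := by rw [mH, hYs]
  have hYic : ((Y⁻¹).map Complex.ofReal)ᴴ = (Y⁻¹).map Complex.ofReal := by rw [mH, hYi]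
  have f7 := congrArg (fun X : Matrix _ _ ℝ => X.map Complex.ofReal) hCc
  simp only [mm, mneg, madd, map_one_ofReal, ← mH, conjTranspose_mul] at f1 f2 f3 f4 f6 f7 hM
  set Ac := A.map Complex.ofReal
  set Bc := B.map Complex.ofReal
  set Cc := C.map Complex.ofReal
  set Dc := D.map Complex.ofReal
  set Yc := Y.map Complex.ofReal
  set Lc := L.map Complex.ofReal
  set Ai := (A⁻¹).map Complex.ofReal
  set Yi := (Y⁻¹).map Complex.ofReal
  set E := Ai * Bc with hE
  set W := Ai * (Φ * Bc) with hW
  have hAW : Ac * W = (Complex.I * ω) • W - E := by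
    have e1 : ((Complex.I * ω) • (1 : Matrix (Fin n) (Fin n) ℂ) - Ac) * W = E := by
      have : ((Complex.I * ω) • (1 : Matrix (Fin n) (Fin n) ℂ) - Ac) * Ai =
          Ai * ((Complex.I * ω) • (1 : Matrix (Fin n) (Fin n) ℂ) - Ac) := by
        rw [Matrix.sub_mul, Matrix.mul_sub, f1, f2]; simp
      rw [hW, ← Matrix.mul_assoc, this, Matrix.mul_assoc, ← Matrix.mul_assoc _ Φ, f5, Matrix.one_mul]
    rw [Matrix.sub_mul, Matrix.smul_mul, Matrix.one_mul] at e1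
    rw [← e1]; abel
  have hΦB : Φ * Bc = Ac * W := by rw [hW, ← Matrix.mul_assoc, f2, Matrix.one_mul]
  have f7' : Cc = -(Eᴴ * Yi) := by rw [f7, hE, conjTranspose_mul]
  have hR : Cc * Φ * Bc = -((Complex.I * ω) • (Eᴴ * Yi * W)) + Eᴴ * Yi * E := by
    rw [Matrix.mul_assoc, hΦB, hAW, f7']
    simp only [Matrix.neg_mul, Matrix.mul_sub, Matrix.mul_smul, smul_neg, neg_sub]; abel
  have hMW : M = Lc * (Yi * W) := by rw [hM, hW]; simp only [Matrix.mul_assoc]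
  have hMM : Mᴴ * M = Wᴴ * Yi * E + Eᴴ * Yi * W := by
    have e1 : Mᴴ * M = Wᴴ * Yi * (Lcᴴ * Lc) * (Yi * W) := by
      rw [hMW, conjTranspose_mul, conjTranspose_mul, hYic]; simp only [Matrix.mul_assoc]
    have e2 : Wᴴ * Yi * (Lcᴴ * Lc) * (Yi * W) =
        -(Wᴴ * Yi * (Ac * ((Yc * Yi) * W)) + Wᴴ * ((Yi * Yc) * (Acᴴ * (Yi * W)))) := by
      rw [f6]; simp only [Matrix.mul_neg, Matrix.neg_mul, Matrix.mul_add, Matrix.add_mul, Matrix.mul_assoc]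
    have e3 : Wᴴ * (Acᴴ * (Yi * W)) = (Ac * W)ᴴ * (Yi * W) := by
      rw [conjTranspose_mul Ac W, Matrix.mul_assoc]
    rw [e1, e2, f3, f4, Matrix.one_mul, Matrix.one_mul, e3, hAW]
    simp only [conjTranspose_sub, conjTranspose_smul, Matrix.mul_sub, Matrix.sub_mul, Matrix.mul_smul,
      Matrix.smul_mul, Matrix.mul_assoc]
    have : star (Complex.I * (ω : ℂ)) = -(Complex.I * ω) := by simp
    rw [this, neg_smul]
    abel
  rw [hMM, hR]
  simp only [conjTranspose_add, conjTranspose_neg, conjTranspose_smul, conjTranspose_mul, hDc,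
    conjTranspose_conjTranspose, hYic, Matrix.mul_assoc]
  have : star (Complex.I * (ω : ℂ)) = -(Complex.I * ω) := by simp
  rw [this, neg_smul, neg_neg]
  have h3 : -((Complex.I * (ω:ℂ)) • (Eᴴ * (Yi * W))) + Eᴴ * (Yi * E) + Dc -
      ((Complex.I * (ω:ℂ)) • (Wᴴ * (Yi * E)) + Eᴴ * (Yi * E) + Dc) =
      -((Complex.I * (ω:ℂ)) • (Wᴴ * (Yi * E) + Eᴴ * (Yi * W))) := by
    rw [smul_add]; abel
  rw [h3, smul_neg, smul_smul, ← mul_assoc, Complex.I_mul_I, neg_one_mul, neg_smul, neg_neg]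

theorem aux_lim1 {n : ℕ} {A : Matrix (Fin n) (Fin n) ℝ} (hA : IsHurwitz A) :
    Tendsto (fun ω : ℝ => (ω : ℂ) •
      ((Complex.I * ω) • (1 : Matrix (Fin n) (Fin n) ℂ) - A.map Complex.ofReal)⁻¹) atTop
      (𝓝 (-Complex.I • (1 : Matrix (Fin n) (Fin n) ℂ))) := by
  set Ac := A.map Complex.ofReal with hAc
  have hc : ContinuousAt (fun ε : ℝ => (1 + (Complex.I * ε) • Ac)⁻¹) 0 := by
    simp only [Matrix.inv_def, Ring.inverse_eq_inv']
    refine ContinuousAt.smul (f := fun ε : ℝ => (1 + (Complex.I * (ε : ℂ)) • Ac).det⁻¹)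
      (g := fun ε : ℝ => (1 + (Complex.I * (ε : ℂ)) • Ac).adjugate) ?_ ?_
    · apply ContinuousAt.inv₀
      · apply Continuous.continuousAt
        apply Continuous.matrix_det
        fun_prop
      · simp
    · apply Continuous.continuousAt
      apply Continuous.matrix_adjugate
      fun_prop
  have h1 : Tendsto (fun ω : ℝ => -Complex.I • (1 + (Complex.I * (ω⁻¹ : ℝ)) • Ac)⁻¹) atTop
      (𝓝 (-Complex.I • (1 : Matrix (Fin n) (Fin n) ℂ))) := by
    have := (hc.tendsto.comp tendsto_inv_atTop_zero).const_smul (-Complex.I)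
    simpa using this
  refine h1.congr' ?_
  filter_upwards [eventually_gt_atTop 0] with ω hω
  have hωc : (ω : ℂ) ≠ 0 := by exact_mod_cast hω.ne'
  have hu := hurw_unit hA (Complex.I * ω) (by simp)
  have hd := (isUnit_iff_isUnit_det _).1 hu
  have : (1 + (Complex.I * (ω⁻¹ : ℝ)) • Ac)⁻¹ =
      (Complex.I * ω) • ((Complex.I * ω) • (1 : Matrix (Fin n) (Fin n) ℂ) - Ac)⁻¹ := by
    apply Matrix.inv_eq_right_inv
    have e : 1 + (Complex.I * (ω⁻¹ : ℝ)) • Ac =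
       (-Complex.I * (ω⁻¹ : ℝ)) • ((Complex.I * ω) • (1 : Matrix (Fin n) (Fin n) ℂ) - Ac) := by
      rw [smul_sub, smul_smul]
      have : -Complex.I * (ω⁻¹ : ℝ) * (Complex.I * ω) = 1 := by
        push_cast; field_simp; simp
      rw [this, one_smul, neg_mul, neg_smul, sub_neg_eq_add]
    rw [e, Matrix.smul_mul, Matrix.mul_smul, mul_nonsing_inv _ hd, smul_smul]
    have : -Complex.I * (ω⁻¹ : ℝ) * (Complex.I * ω) = 1 := by
      push_cast; field_simp; simp
    rw [this, one_smul]
  rw [this, smul_smul, ← mul_assoc, neg_mul, Complex.I_mul_I, neg_neg, one_mul]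

theorem aux_lim0 {n : ℕ} {A : Matrix (Fin n) (Fin n) ℝ} (hA : IsHurwitz A) :
    Tendsto (fun ω : ℝ =>
      ((Complex.I * ω) • (1 : Matrix (Fin n) (Fin n) ℂ) - A.map Complex.ofReal)⁻¹) atTop
      (𝓝 0) := by
  have h0 : Tendsto (fun ω : ℝ => ((ω⁻¹ : ℝ) : ℂ)) atTop (𝓝 0) := by
    have := (Complex.continuous_ofReal.tendsto 0).comp tendsto_inv_atTop_zero
    rw [Complex.ofReal_zero] at this
    exact this
  have := h0.smul (aux_lim1 hA)
  rw [zero_smul] at this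
  refine this.congr' ?_
  filter_upwards [eventually_gt_atTop 0] with ω hω
  have hωc : (ω : ℂ) ≠ 0 := by exact_mod_cast hω.ne'
  rw [smul_smul]; push_cast; rw [inv_mul_cancel₀ hωc, one_smul]

/-- The quadratic form of the transfer function. -/
theorem aux_im {n m : ℕ} {A : Matrix (Fin n) (Fin n) ℝ} {B : Matrix (Fin n) (Fin m) ℝ}
    {C : Matrix (Fin m) (Fin n) ℝ} {D : Matrix (Fin m) (Fin m) ℝ} (h : IsSNI A B C D)
    (ω : ℝ) (hω : 0 < ω) (w : Fin m → ℂ) :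
    (star w ⬝ᵥ (tf A B C D (Complex.I * ω) *ᵥ w)).im ≤ 0 := by
  have h1 := (h.2 ω hω).posSemidef.dotProduct_mulVec_nonneg w
  have h2 := (Complex.le_def.1 h1).1
  set R := tf A B C D (Complex.I * ω)
  have e : star w ⬝ᵥ (Rᴴ *ᵥ w) = star (star w ⬝ᵥ (R *ᵥ w)) := by
    rw [← star_dotProduct_star, star_mulVec, star_star]
    rw [← dotProduct_mulVec]
  rw [smul_mulVec, sub_mulVec, dotProduct_smul, dotProduct_sub, e] at h2
  simp at h2
  linarith

theorem aux_Dsymm {n m : ℕ} {A : Matrix (Fin n) (Fin n) ℝ} {B : Matrix (Fin n) (Fin m) ℝ}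
    {C : Matrix (Fin m) (Fin n) ℝ} {D : Matrix (Fin m) (Fin m) ℝ} (h : IsSNI A B C D) :
    D = Dᵀ := by
  have h1 : ∀ w : Fin m → ℂ, (star w ⬝ᵥ (D.map Complex.ofReal *ᵥ w)).im ≤ 0 := by
    intro w
    have hg : Continuous fun X : Matrix (Fin n) (Fin n) ℂ =>
        (star w ⬝ᵥ ((C.map Complex.ofReal * X * B.map Complex.ofReal + D.map Complex.ofReal) *ᵥ w)).im := by
      fun_prop
    have := (hg.tendsto 0).comp (aux_lim0 h.1)
    simp only [Matrix.mul_zero, Matrix.zero_mul, zero_add] at this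
    refine le_of_tendsto this ?_
    filter_upwards [eventually_gt_atTop 0] with ω hω
    exact aux_im h ω hω w
  have h2 : ∀ w : Fin m → ℂ, (star w ⬝ᵥ (D.map Complex.ofReal *ᵥ w)).im = 0 := by
    intro w
    refine le_antisymm (h1 w) ?_
    have := h1 (star w)
    have e : star (star w) ⬝ᵥ (D.map Complex.ofReal *ᵥ (star w)) =
        star (star w ⬝ᵥ (D.map Complex.ofReal *ᵥ w)) := by
      simp [dotProduct, mulVec]
    rw [e] at this
    simpa using this
  ext i j
  have h3 := h2 (Pi.single i 1 + Complex.I • Pi.single j 1)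
  have e : star (Pi.single i 1 + Complex.I • Pi.single j 1 : Fin m → ℂ) =
      Pi.single i 1 - Complex.I • Pi.single j 1 := by
    ext k; simp [Pi.single_apply, apply_ite (starRingEnd ℂ)]; split_ifs <;> simp [sub_eq_add_neg]
  rw [e] at h3
  simp [mulVec_add, mulVec_smul, sub_dotProduct, dotProduct_add] at h3
  simp
  linarith

theorem aux_im0 {n m : ℕ} {A : Matrix (Fin n) (Fin n) ℝ} {B : Matrix (Fin n) (Fin m) ℝ}
    {C : Matrix (Fin m) (Fin n) ℝ} {D : Matrix (Fin m) (Fin m) ℝ} (h : IsSNI A B C D)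
    (ω : ℝ) (hω : 0 < ω) (w : Fin m → ℂ) :
    (star w ⬝ᵥ ((C.map Complex.ofReal *
      ((Complex.I * ω) • (1 : Matrix (Fin n) (Fin n) ℂ) - A.map Complex.ofReal)⁻¹ *
      B.map Complex.ofReal) *ᵥ w)).im ≤ 0 := by
  have h1 := aux_im h ω hω w
  rw [tf, add_mulVec, dotProduct_add, Complex.add_im] at h1
  have hD := aux_Dsymm h
  have e : star (star w ⬝ᵥ (D.map Complex.ofReal *ᵥ w)) = star w ⬝ᵥ (D.map Complex.ofReal *ᵥ w) := by
    rw [← star_dotProduct_star, star_mulVec, star_star, mH, ← hD, ← dotProduct_mulVec]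
  have e2 : (star w ⬝ᵥ (D.map Complex.ofReal *ᵥ w)).im = 0 := Complex.conj_eq_iff_im.1 e
  rw [e2] at h1
  linarith

theorem aux_CB {n m : ℕ} {A : Matrix (Fin n) (Fin n) ℝ} {B : Matrix (Fin n) (Fin m) ℝ}
    {C : Matrix (Fin m) (Fin n) ℝ} {D : Matrix (Fin m) (Fin m) ℝ} (h : IsSNI A B C D)
    (w : Fin m → ℂ) :
    0 ≤ (star w ⬝ᵥ ((C.map Complex.ofReal * B.map Complex.ofReal) *ᵥ w)).re := by
  have hg : Continuous fun X : Matrix (Fin n) (Fin n) ℂ =>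
      (star w ⬝ᵥ ((C.map Complex.ofReal * X * B.map Complex.ofReal) *ᵥ w)).im := by
    fun_prop
  have := (hg.tendsto _).comp (aux_lim1 h.1)
  have h2 := le_of_tendsto (b := 0) this (by
    filter_upwards [eventually_gt_atTop 0] with ω hω
    have := aux_im0 h ω hω w
    simp only [Function.comp, Matrix.mul_smul, Matrix.smul_mul, smul_mulVec, dotProduct_smul,
      smul_eq_mul, Complex.re_ofReal_mul, Complex.im_ofReal_mul]
    exact mul_nonpos_of_nonneg_of_nonpos hω.le this)
  simp only [Matrix.mul_smul, Matrix.smul_mul, smul_mulVec, dotProduct_smul,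
      smul_eq_mul, Matrix.mul_one] at h2
  simpa using h2

theorem aux_N {n m : ℕ} (B : Matrix (Fin n) (Fin m) ℝ) (x : Fin n → ℂ) (u : Fin m → ℂ) :
    (star (Sum.elim x u) ⬝ᵥ ((fromBlocks 0 B Bᵀ 0).map Complex.ofReal *ᵥ (Sum.elim x u))).re =
      2 * (star u ⬝ᵥ (Bᵀ.map Complex.ofReal *ᵥ x)).re := by
  have e0 : star (Sum.elim x u) = Sum.elim (star x) (star u) := by
    ext (i | i) <;> rfl
  have e : star x ⬝ᵥ (B.map Complex.ofReal *ᵥ u) = star (star u ⬝ᵥ (Bᵀ.map Complex.ofReal *ᵥ x)) := by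
    rw [← star_dotProduct_star, star_mulVec, star_star, mH, transpose_transpose, ← dotProduct_mulVec]
  rw [e0, fromBlocks_map, fromBlocks_mulVec, sumElim_dotProduct_sumElim]
  have z1 : (0 : Matrix (Fin n) (Fin n) ℝ).map Complex.ofReal = 0 := by ext; simp
  have z2 : (0 : Matrix (Fin m) (Fin m) ℝ).map Complex.ofReal = 0 := by ext; simp
  rw [z1, z2, zero_mulVec, zero_mulVec, zero_add, add_zero]
  simp only [Function.comp_def, Sum.elim_inl, Sum.elim_inr]
  erw [e]
  simp
  ring

theorem aux_freq {n m : ℕ} {A : Matrix (Fin n) (Fin n) ℝ} {B : Matrix (Fin n) (Fin m) ℝ}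
    {C : Matrix (Fin m) (Fin n) ℝ} {D : Matrix (Fin m) (Fin m) ℝ} (h : IsSNI A B C D)
    (ω : ℝ) (hω : 0 < ω) (x : Fin n → ℂ) (u : Fin m → ℂ)
    (hx : Aᵀ.map Complex.ofReal *ᵥ x = (Complex.I * ω) • (x + Cᵀ.map Complex.ofReal *ᵥ u)) :
    (star u ⬝ᵥ (Bᵀ.map Complex.ofReal *ᵥ x)).re ≤ 0 := by
  have h1 := aux_im0 h ω hω (star u)
  have hd := (isUnit_iff_isUnit_det _).1 (hurw_unit h.1 (Complex.I * ω) (by simp))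
  have f5 := mul_nonsing_inv _ hd
  set Φ := ((Complex.I * ω) • (1 : Matrix (Fin n) (Fin n) ℂ) - A.map Complex.ofReal)⁻¹
  have f6 := congrArg transpose f5
  rw [transpose_mul, transpose_sub, transpose_smul, transpose_one] at f6
  have e1 : ((Complex.I * ω) • (1 : Matrix (Fin n) (Fin n) ℂ) - (A.map Complex.ofReal)ᵀ) *ᵥ x =
      -((Complex.I * ω) • ((C.map Complex.ofReal)ᵀ *ᵥ u)) := by
    rw [sub_mulVec, smul_mulVec, one_mulVec, ← transpose_map, hx, smul_add, transpose_map]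
    abel
  have e2 : x = -((Complex.I * ω) • (Φᵀ *ᵥ ((C.map Complex.ofReal)ᵀ *ᵥ u))) := by
    rw [← mulVec_smul, ← mulVec_neg, ← e1, mulVec_mulVec, f6, one_mulVec]
  have e3 : star u ⬝ᵥ (Bᵀ.map Complex.ofReal *ᵥ x) = -((Complex.I * ω) *
      (star (star u) ⬝ᵥ ((C.map Complex.ofReal * Φ * B.map Complex.ofReal) *ᵥ star u))) := by
    rw [star_star, e2, mulVec_neg, mulVec_smul, dotProduct_neg, dotProduct_smul, smul_eq_mul,
      mulVec_mulVec, mulVec_mulVec, transpose_map, ← transpose_mul, ← transpose_mul,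
      mulVec_transpose, dotProduct_comm, ← dotProduct_mulVec, Matrix.mul_assoc]
  rw [e3]
  set q := star (star u) ⬝ᵥ ((C.map Complex.ofReal * Φ * B.map Complex.ofReal) *ᵥ star u)
  simp
  nlinarith

theorem aux_FG {n m : ℕ} (A : Matrix (Fin n) (Fin n) ℝ) (C : Matrix (Fin m) (Fin n) ℝ)
    (Y : Matrix (Fin n) (Fin n) ℝ) :
    fromRows A (0 : Matrix (Fin m) (Fin n) ℝ) * Y * (fromRows 1 C)ᵀ +
      fromRows 1 C * Y * (fromRows A (0 : Matrix (Fin m) (Fin n) ℝ))ᵀ =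
    fromBlocks (A * Y + Y * Aᵀ) (A * Y * Cᵀ) (C * Y * Aᵀ) 0 := by
  rw [transpose_fromRows, transpose_fromRows, fromRows_mul A, fromRows_mul 1, fromRows_mul_fromCols,
    fromRows_mul_fromCols, fromBlocks_add]
  simp

theorem aux_exists {n m : ℕ} {A : Matrix (Fin n) (Fin n) ℝ} {B : Matrix (Fin n) (Fin m) ℝ}
    {C : Matrix (Fin m) (Fin n) ℝ} {D : Matrix (Fin m) (Fin m) ℝ} (hmin : IsMinimal A B C)
    (h : IsSNI A B C D) : ∃ Y : Matrix (Fin n) (Fin n) ℝ, Yᵀ = Y ∧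
      (-(A * Y + Y * Aᵀ)).PosSemidef ∧ B + A * Y * Cᵀ = 0 := by
  have hAu := (isUnit_iff_isUnit_det A).1 (hurw_isUnit h.1)
  have hF : ∀ (x : Fin n → ℂ) (u : Fin m → ℂ),
      ((fromRows A (0 : Matrix (Fin m) (Fin n) ℝ))ᵀ.map Complex.ofReal) *ᵥ (Sum.elim x u) =
        Aᵀ.map Complex.ofReal *ᵥ x := by
    intro x u
    ext i
    simp [mulVec, dotProduct]
  have hG : ∀ (x : Fin n → ℂ) (u : Fin m → ℂ),
      ((fromRows (1 : Matrix (Fin n) (Fin n) ℝ) C)ᵀ.map Complex.ofReal) *ᵥ (Sum.elim x u) =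
        x + Cᵀ.map Complex.ofReal *ᵥ u := by
    intro x u
    ext i
    simp [mulVec, dotProduct, Matrix.one_apply, apply_ite Complex.ofReal]
  have key := aux_kyp (fromRows A (0 : Matrix (Fin m) (Fin n) ℝ)) (fromRows 1 C)
    (fromBlocks 0 B Bᵀ 0) (by simp [fromBlocks_transpose]) ?_ ?_ ?_
  · obtain ⟨Y, hY, hP⟩ := key
    rw [aux_FG, fromBlocks_add, fromBlocks_neg] at hP
    have e : -(Bᵀ + C * Y * Aᵀ) = (-(B + A * Y * Cᵀ))ᵀ := by
      simp [transpose_mul, hY, Matrix.mul_assoc]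
    rw [e, add_zero, neg_zero, zero_add] at hP
    obtain ⟨h1, h2⟩ := aux_block _ _ hP
    exact ⟨Y, hY, h2, neg_eq_zero.1 h1⟩
  · intro Y hY hP
    rw [aux_FG, fromBlocks_neg] at hP
    have e : -(C * Y * Aᵀ) = (-(A * Y * Cᵀ))ᵀ := by
      simp [transpose_mul, hY, Matrix.mul_assoc]
    rw [e, neg_zero] at hP
    obtain ⟨h1, h2⟩ := aux_block _ _ hP
    refine aux_trivial hmin Y hY h2 ?_
    rw [neg_eq_zero, Matrix.mul_assoc] at h1
    have := congrArg (fun X => A⁻¹ * X) h1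
    simpa [← Matrix.mul_assoc, nonsing_inv_mul A hAu] using this
  · intro z ω hz
    obtain ⟨x, u, rfl⟩ : ∃ x u, z = Sum.elim x u := ⟨_, _, (Sum.elim_comp_inl_inr z).symm⟩
    rw [hF, hG] at hz
    rw [aux_N]
    suffices (star u ⬝ᵥ (Bᵀ.map Complex.ofReal *ᵥ x)).re ≤ 0 by linarith
    rcases lt_trichotomy ω 0 with hω | hω | hω
    · have hst : ∀ {a b : Type} [Fintype b] (X : Matrix a b ℝ) (v : b → ℂ),
          X.map Complex.ofReal *ᵥ star v = star (X.map Complex.ofReal *ᵥ v) := by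
        intro a b _ X v
        ext i
        simp [mulVec, dotProduct]
      have := aux_freq h (-ω) (by linarith) (star x) (star u) (by
        rw [hst, hst, hz]
        ext i
        simp
        ring)
      rw [hst, star_dotProduct_star, dotProduct_comm] at this
      simpa using this
    · subst hω
      have hx : x = 0 := by
        have f := congrArg (fun X : Matrix _ _ ℝ => Xᵀ.map Complex.ofReal) (mul_nonsing_inv A hAu)
        simp only [transpose_mul, transpose_one, mm, map_one_ofReal] at f
        rw [← one_mulVec x, ← f, ← mulVec_mulVec, hz]
        simp
      rw [hx]
      simp
    · exact aux_freq h ω hω x u hz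
  · intro z hz
    obtain ⟨x, u, rfl⟩ : ∃ x u, z = Sum.elim x u := ⟨_, _, (Sum.elim_comp_inl_inr z).symm⟩
    rw [hG] at hz
    rw [aux_N]
    have hx : x = -(Cᵀ.map Complex.ofReal *ᵥ u) := eq_neg_of_add_eq_zero_left hz
    have := aux_CB h (star u)
    have e : star u ⬝ᵥ (Bᵀ.map Complex.ofReal *ᵥ x) =
        -(star (star u) ⬝ᵥ ((C.map Complex.ofReal * B.map Complex.ofReal) *ᵥ star u)) := by
      rw [hx, star_star, mulVec_neg, dotProduct_neg, mulVec_mulVec, transpose_map, transpose_map,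
        ← transpose_mul, mulVec_transpose, dotProduct_comm, ← dotProduct_mulVec]
    rw [e, Complex.neg_re]
    linarith

/-- The weak Strictly Negative Imaginary Lemma. -/
theorem weak_sni_lemma {n m : ℕ}
    (A : Matrix (Fin n) (Fin n) ℝ) (B : Matrix (Fin n) (Fin m) ℝ)
    (C : Matrix (Fin m) (Fin n) ℝ) (D : Matrix (Fin m) (Fin m) ℝ)
    (hmin : IsMinimal A B C) :
    IsSNI A B C D ↔
      (IsHurwitz A ∧ D = Dᵀ ∧ B.rank = m ∧ C.rank = m ∧
        ∃ (Y L : Matrix (Fin n) (Fin n) ℝ), Y.PosDef ∧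
          Lᵀ * L = -(A * Y + Y * Aᵀ) ∧
          (-(A * Y + Y * Aᵀ)).PosSemidef ∧ B + A * Y * Cᵀ = 0 ∧
          ∀ ω : ℝ, 0 < ω →
            ((L * Y⁻¹ * A⁻¹).map Complex.ofReal *
              ((Complex.I * ω) • (1 : Matrix (Fin n) (Fin n) ℂ) - A.map Complex.ofReal)⁻¹ *
              B.map Complex.ofReal).rank = m) := by
  constructor
  · intro h
    obtain ⟨Y, hY, hQ, hB⟩ := aux_exists hmin h
    have hYp := aux_posDef h.1 hmin Y hY hQ hB
    obtain ⟨L, hL⟩ := aux_factor hQ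
    have hD := aux_Dsymm h
    have hinj : ∀ ω : ℝ, 0 < ω → ∀ v, ((L * Y⁻¹ * A⁻¹).map Complex.ofReal *
              ((Complex.I * ω) • (1 : Matrix (Fin n) (Fin n) ℂ) - A.map Complex.ofReal)⁻¹ *
              B.map Complex.ofReal) *ᵥ v = 0 → v = 0 := by
      intro ω hω v hv
      by_contra hne
      have h1 := (h.2 ω hω).dotProduct_mulVec_pos hne
      rw [aux_id h.1 hD hYp hL.symm hB ω _ rfl, smul_mulVec, ← mulVec_mulVec, hv] at h1
      simp at h1
    have hBr : B.rank = m := by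
      refine ((rank_inj B).2 fun u hu => ?_).trans (Fintype.card_fin m)
      have h1 := hinj 1 one_pos (fun i => (u i : ℂ)) (by
        rw [← mulVec_mulVec]
        have : B.map Complex.ofReal *ᵥ (fun i => (u i : ℂ)) = 0 := by
          ext i
          have := congrFun hu i
          simp only [mulVec, dotProduct, map_apply, Pi.zero_apply] at this ⊢
          exact_mod_cast this
        rw [this, mulVec_zero])
      ext i
      simpa using congrFun h1 i
    refine ⟨h.1, hD, hBr, ?_, Y, L, hYp, hL.symm, hQ, hB, ?_⟩
    · have e : B = (-(A * Y)) * Cᵀ := by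
        rw [Matrix.neg_mul]; exact eq_neg_of_add_eq_zero_left hB
      refine le_antisymm (by simpa using rank_le_height C) ?_
      have := rank_mul_le_right (-(A * Y)) Cᵀ
      rw [← e, hBr, rank_transpose] at this
      exact this
    · intro ω hω
      exact ((rank_inj _).2 (hinj ω hω)).trans (Fintype.card_fin m)
  · rintro ⟨hA, hD, -, -, Y, L, hYp, hL, hQ, hB, hM⟩
    refine ⟨hA, fun ω hω => ?_⟩
    rw [aux_id hA hD hYp hL hB ω _ rfl]
    have hi := (rank_inj _).1 ((hM ω hω).trans (Fintype.card_fin m).symm)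
    have hωc : (0 : ℂ) < (ω : ℂ) := by exact_mod_cast hω
    refine Matrix.PosDef.smul (Matrix.PosDef.conjTranspose_mul_self _ ?_) hωc
    intro v w hvw
    have := hi (v - w) (by rw [mulVec_sub]; exact sub_eq_zero.2 hvw)
    exact sub_eq_zero.1 this
end

section
/- Let (A,B,C,D) be a minimal state-space realization of an m×m transfer function R and let ω̄ > 0. Assume every eigenvalue of A has nonpositive real part and, for every purely imaginary eigenvalue jω_i of A with 0 < ω_i ≤ ω̄, the residue Φ_i = lim_{s→jω_i}(s − jω_i)(sI − A)⁻¹ exists (i.e., jω_i is a simple pole of the resolvent of A). Then the following are equivalent: (1) the system is finite frequency negative imaginary (FFNI) with bandwidth ω̄; (2) det(A) ≠ 0, D = Dᵀ, CAΦ_iB = (CAΦ_iB)ᴴ ⪰ 0 for every purely imaginary eigenvalue jω_i of A with 0 < ω_i ≤ ω̄, and there exist real symmetric matrices Y and X ⪰ 0 such that AY + YAᵀ − AXAᵀ + ω̄²X ⪯ 0, B + AYCᵀ = 0, and CX = 0. -/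
open Matrix Filter Topology ComplexOrder

/-- The system `(A,B,C,D)` is finite frequency negative imaginary (FFNI) with bandwidth `ωb`. -/
noncomputable def IsFFNI {n m : ℕ} (A : Matrix (Fin n) (Fin n) ℝ) (B : Matrix (Fin n) (Fin m) ℝ)
    (C : Matrix (Fin m) (Fin n) ℝ) (D : Matrix (Fin m) (Fin m) ℝ) (ωb : ℝ) : Prop :=
  (∀ μ ∈ eigs A, μ ≠ 0 ∧ μ.re ≤ 0) ∧
  (∀ ω : ℝ, 0 < ω → ω ≤ ωb → (Complex.I * ω) ∉ eigs A →
    (Complex.I • (tf A B C D (Complex.I * ω) - (tf A B C D (Complex.I * ω))ᴴ)).PosSemidef) ∧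
  (∀ ω : ℝ, 0 < ω → ω ≤ ωb → (Complex.I * ω) ∈ eigs A →
    ∃ K : Matrix (Fin m) (Fin m) ℂ,
      Tendsto (fun s : ℂ => (s - Complex.I * ω) • Complex.I • tf A B C D s)
        (𝓝[≠] (Complex.I * ω)) (𝓝 K) ∧ K.PosSemidef) ∧
  D = Dᵀ


theorem gram_iso {ι κ : Type*} [Fintype ι] [DecidableEq ι] [Fintype κ] [DecidableEq κ]
    (M N : Matrix ι κ ℝ) (h : Mᵀ * M = Nᵀ * N) :
    ∃ W : Matrix ι ι ℝ, Wᵀ * W = 1 ∧ W * M = N := by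
  let V := EuclideanSpace ℝ ι
  let fM : (κ → ℝ) →ₗ[ℝ] V := (WithLp.linearEquiv 2 ℝ (ι → ℝ)).symm.toLinearMap ∘ₗ M.mulVecLin
  let fN : (κ → ℝ) →ₗ[ℝ] V := (WithLp.linearEquiv 2 ℝ (ι → ℝ)).symm.toLinearMap ∘ₗ N.mulVecLin
  have hn : ∀ x, ‖fN x‖ = ‖fM x‖ := by
    intro x
    have key : ∀ L : Matrix ι κ ℝ, ‖(WithLp.toLp 2 (L *ᵥ x) : V)‖ ^ 2 = x ⬝ᵥ ((Lᵀ * L) *ᵥ x) := by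
      intro L
      rw [EuclideanSpace.real_norm_sq_eq, ← Matrix.mulVec_mulVec, Matrix.dotProduct_mulVec,
        Matrix.vecMul_transpose]
      simp [dotProduct, sq]
    have h1 := key M
    have h2 := key N
    rw [h] at h1
    have : ‖fN x‖ ^ 2 = ‖fM x‖ ^ 2 := by
      exact h2.trans h1.symm
    exact (sq_eq_sq₀ (norm_nonneg _) (norm_nonneg _)).1 this
  have hker : LinearMap.ker fM ≤ LinearMap.ker fN := by
    intro x hx
    rw [LinearMap.mem_ker] at hx ⊢
    rw [← norm_eq_zero, hn, hx, norm_zero]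
  obtain ⟨g, hg⟩ : ∃ g : LinearMap.range fM →ₗ[ℝ] V, ∀ x, g ⟨fM x, x, rfl⟩ = fN x := by
    let e := fM.quotKerEquivRange
    refine ⟨(Submodule.liftQ _ fN hker) ∘ₗ e.symm.toLinearMap, fun x => ?_⟩
    have : e.symm ⟨fM x, x, rfl⟩ = Submodule.Quotient.mk x := by
      rw [LinearEquiv.symm_apply_eq]; rfl
    simp [this]
  let gi : LinearMap.range fM →ₗᵢ[ℝ] V := ⟨g, by
    rintro ⟨_, x, rfl⟩
    rw [hg, hn]; rfl⟩
  let w := gi.extend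
  have hw : ∀ x, w (fM x) = fN x := fun x => by
    have := LinearIsometry.extend_apply gi ⟨fM x, x, rfl⟩
    exact this.trans (hg x)
  let W : Matrix ι ι ℝ := Matrix.toLpLin 2 2 |>.symm w.toLinearMap
  have hW : ∀ x : ι → ℝ, W *ᵥ x = (w (WithLp.toLp 2 x)).ofLp := by
    intro x
    have : w.toLinearMap = Matrix.toLpLin 2 2 W := by simp [W]
    have h2 : w (WithLp.toLp 2 x) = Matrix.toLpLin 2 2 W (WithLp.toLp 2 x) := by
      rw [← this]; rfl
    rw [h2]; simp
  refine ⟨W, ?_, ?_⟩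
  · have hW' : ∀ x : ι → ℝ, w (WithLp.toLp 2 x) = WithLp.toLp 2 (W *ᵥ x) := by
      intro x; rw [hW]
    have key : ∀ x y : ι → ℝ, (W *ᵥ x) ⬝ᵥ (W *ᵥ y) = x ⬝ᵥ y := by
      intro x y
      have h1 := w.inner_map_map (WithLp.toLp 2 y) (WithLp.toLp 2 x)
      rw [hW', hW'] at h1
      erw [EuclideanSpace.inner_toLp_toLp, EuclideanSpace.inner_toLp_toLp] at h1
      simpa using h1
    ext i j
    have h2 := key (Pi.single i 1) (Pi.single j 1)
    simp only [Matrix.mulVec_single_one, single_one_dotProduct] at h2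
    rw [Matrix.one_apply, Matrix.mul_apply]
    rw [Pi.single_apply] at h2
    exact h2
  · apply Matrix.ext_of_mulVec_single
    intro j
    rw [← Matrix.mulVec_mulVec, hW]
    exact congrArg WithLp.ofLp (hw (Pi.single j 1))
open MatrixOrder in
theorem psd_factor {κ : Type*} [Fintype κ] [DecidableEq κ] (Z : Matrix κ κ ℝ)
    (h : Z.PosSemidef) : ∃ E : Matrix κ κ ℝ, Z = Eᵀ * E := by
  obtain ⟨E, hE⟩ := CStarAlgebra.nonneg_iff_eq_star_mul_self.1 h.nonneg
  exact ⟨E, by rw [hE]; simp [star_eq_conjTranspose]⟩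

theorem cone_sep {E F : Type*} [NormedAddCommGroup E] [NormedSpace ℝ E] [FiniteDimensional ℝ E]
    [NormedAddCommGroup F] [NormedSpace ℝ F] 
    (T : E →L[ℝ] F) (K : ProperCone ℝ E) (hker : ∀ x ∈ K, T x = 0 → x = 0) (y : F)
    (hy : ∀ x ∈ K, T x ≠ y) :
    ∃ f : F →L[ℝ] ℝ, (∀ x ∈ K, 0 ≤ f (T x)) ∧ f y < 0 := by
  have hKc : IsClosed (K : Set E) := K.isClosed
  obtain ⟨δ, hδ, hb⟩ : ∃ δ > 0, ∀ x ∈ K, δ * ‖x‖ ≤ ‖T x‖ := by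
    have hcomp : IsCompact ((K : Set E) ∩ Metric.sphere 0 1) :=
      (isCompact_sphere 0 1).inter_left hKc
    rcases ((K : Set E) ∩ Metric.sphere 0 1).eq_empty_or_nonempty with he | hne
    · refine ⟨1, one_pos, fun x hx => ?_⟩
      by_cases h0 : x = 0
      · simp [h0]
      · exfalso
        have : ‖x‖⁻¹ • x ∈ (K : Set E) ∩ Metric.sphere 0 1 := by
          refine ⟨K.smul_mem hx (by positivity), ?_⟩
          simp [norm_smul, h0]
        rw [he] at this; exact this
    · obtain ⟨x0, ⟨hx0, hx0'⟩, hmin⟩ := hcomp.exists_isMinOn hne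
        (f := fun x => ‖T x‖) (by fun_prop)
      refine ⟨‖T x0‖, ?_, fun x hx => ?_⟩
      · rw [gt_iff_lt, norm_pos_iff]
        intro h
        have := hker x0 hx0 h
        simp [this] at hx0'
      · by_cases h0 : x = 0
        · simp [h0]
        · have : ‖x‖⁻¹ • x ∈ (K : Set E) ∩ Metric.sphere 0 1 := by
            refine ⟨K.smul_mem hx (by positivity), ?_⟩
            simp [norm_smul, h0]
          have h2 := hmin this
          have hp : 0 < ‖x‖ := norm_pos_iff.2 h0
          simp only [Set.mem_ofPred_eq, map_smul, norm_smul, norm_inv, norm_norm] at h2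
          rwa [inv_mul_eq_div, le_div_iff₀ hp] at h2
  have hcl : IsClosed (T '' (K : Set E)) := by
    apply isClosed_of_closure_subset
    intro t ht
    have hc : IsCompact (T '' ((K : Set E) ∩ Metric.closedBall 0 ((‖t‖ + 1) / δ))) :=
      ((isCompact_closedBall _ _).inter_left hKc).image T.continuous
    have ht2 : t ∈ closure (T '' (K : Set E) ∩ Metric.ball t 1) := by
      rw [Metric.mem_closure_iff] at ht ⊢
      intro ε hε
      obtain ⟨b, hb, hd⟩ := ht (min ε 1) (by positivity)
      refine ⟨b, ⟨hb, ?_⟩, lt_of_lt_of_le hd (min_le_left _ _)⟩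
      rw [Metric.mem_ball, dist_comm]
      exact lt_of_lt_of_le hd (min_le_right _ _)
    have hsub : T '' (K : Set E) ∩ Metric.ball t 1 ⊆
        T '' ((K : Set E) ∩ Metric.closedBall 0 ((‖t‖ + 1) / δ)) := by
      rintro _ ⟨⟨x, hx, rfl⟩, hd⟩
      refine ⟨x, ⟨hx, ?_⟩, rfl⟩
      rw [mem_closedBall_zero_iff, le_div_iff₀ hδ, mul_comm]
      refine (hb x hx).trans ?_
      rw [mem_ball_iff_norm] at hd
      have := norm_sub_norm_le (T x) t
      linarith
    obtain ⟨x, hx, rfl⟩ := (closure_minimal hsub hc.isClosed) ht2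
    exact ⟨x, hx.1, rfl⟩
  have hconv : Convex ℝ (T '' (K : Set E)) := (K.toPointedCone.convex).linear_image T.toLinearMap
  obtain ⟨f, u, hfu, hfb⟩ := geometric_hahn_banach_point_closed hconv hcl
    (x := y) (by rintro ⟨x, hx, h⟩; exact hy x hx h)
  have hu : u < 0 := by simpa using hfb 0 ⟨0, K.zero_mem, by simp⟩
  refine ⟨f, fun x hx => ?_, hfu.trans hu⟩
  by_contra! hneg
  have := hfb (T ((u / f (T x)) • x)) ⟨_, K.smul_mem hx (by
    exact (div_pos_of_neg_of_neg hu hneg).le), rfl⟩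
  rw [map_smul, map_smul, smul_eq_mul, div_mul_cancel₀ _ hneg.ne] at this
  exact lt_irrefl _ this


theorem cmap_mul {p q r : Type*} [Fintype q] (X : Matrix p q ℝ) (Y : Matrix q r ℝ) :
    (X * Y).map Complex.ofReal = X.map Complex.ofReal * Y.map Complex.ofReal :=
  Matrix.map_mul (f := Complex.ofRealHom)

theorem decomp {ι κ : Type*} [Fintype ι] [DecidableEq ι] [Fintype κ] [DecidableEq κ]
    (P Q : Matrix ι κ ℝ) (h1 : Qᵀ * P + Pᵀ * Q = 0) (h2 : (Qᵀ * Q - Pᵀ * P).PosSemidef) :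
    ∃ (T : Matrix (ι ⊕ κ) ι ℂ) (σ : ι ⊕ κ → ℝ), Tᴴ * T = 1 ∧ (∀ i, |σ i| ≤ 1) ∧
      T * P.map Complex.ofReal
        = Matrix.diagonal (fun i => Complex.I * (σ i : ℂ)) * (T * Q.map Complex.ofReal) := by
  obtain ⟨E, hE⟩ := psd_factor _ h2
  have hEE : Eᵀ * E + Pᵀ * P = Qᵀ * Q := by rw [← hE]; abel
  have hPQ : Pᵀ * Q = - (Qᵀ * P) := by rw [eq_neg_iff_add_eq_zero, add_comm]; exact h1
  let a : Matrix (ι ⊕ κ) κ ℝ := fromRows Q 0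
  let b : Matrix (ι ⊕ κ) κ ℝ := fromRows P E
  let c : Matrix (ι ⊕ κ) κ ℝ := fromRows (-P) E
  obtain ⟨W, hW1, hW2⟩ := gram_iso (fromCols a c) (fromCols b a) (by
    rw [transpose_fromCols, transpose_fromCols, fromRows_mul_fromCols, fromRows_mul_fromCols]
    simp only [a, b, c, transpose_fromRows, fromCols_mul_fromRows]
    congr 1
    · simp; rw [← hEE]; abel
    · simp [hPQ]
    · simp [hPQ]
    · simp; rw [← hEE]; abel)
  rw [mul_fromCols] at hW2
  obtain ⟨hWa, hWc⟩ := fromCols_inj hW2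
  have hWt : Wᵀ * a = c := by rw [← hWc, ← Matrix.mul_assoc, hW1, Matrix.one_mul]
  have hW3 : W * Wᵀ = 1 := mul_eq_one_comm.1 hW1
  let Wc : Matrix (ι ⊕ κ) (ι ⊕ κ) ℂ := W.map Complex.ofReal
  have hWcH : Wcᴴ = Wᵀ.map Complex.ofReal := by
    ext i j; simp [Wc]
  have hW1c : Wcᴴ * Wc = 1 := by
    rw [hWcH, ← cmap_mul, hW1]; simp
  have hW3c : Wc * Wcᴴ = 1 := mul_eq_one_comm.1 hW1c
  let H : Matrix (ι ⊕ κ) (ι ⊕ κ) ℂ := (-Complex.I / 2) • (Wc - Wcᴴ)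
  have hH : H.IsHermitian := by
    unfold H Matrix.IsHermitian
    rw [conjTranspose_smul, conjTranspose_sub, conjTranspose_conjTranspose]
    have : star (-Complex.I / 2) = - (-Complex.I / 2) := by simp; ring
    rw [this, neg_smul, ← smul_neg, neg_sub]
  let U : Matrix (ι ⊕ κ) (ι ⊕ κ) ℂ := (hH.eigenvectorUnitary : Matrix _ _ ℂ)
  have hU1 : Uᴴ * U = 1 := Unitary.coe_star_mul_self hH.eigenvectorUnitary
  have hU2 : U * Uᴴ = 1 := mul_eq_one_comm.1 hU1
  have hsp : Uᴴ * H * U = diagonal (fun i => (hH.eigenvalues i : ℂ)) := by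
    have := hH.conjStarAlgAut_star_eigenvectorUnitary
    rw [Unitary.conjStarAlgAut_apply] at this
    simpa [U, star_eq_conjTranspose, Function.comp_def] using this
  have hsp2 : Uᴴ * H = diagonal (fun i => (hH.eigenvalues i : ℂ)) * Uᴴ := by
    rw [← hsp, Matrix.mul_assoc, hU2, Matrix.mul_one]
  let J : Matrix (ι ⊕ κ) ι ℂ := fromRows 1 0
  have hJ : Jᴴ * J = 1 := by
    simp [J, conjTranspose_fromRows_eq_fromCols_conjTranspose, fromCols_mul_fromRows]
  have hJP : ∀ R : Matrix ι κ ℝ, J * R.map Complex.ofReal =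
      (fromRows R (0 : Matrix κ κ ℝ)).map Complex.ofReal := by
    intro R
    rw [fromRows_mul]
    ext (i | i) j <;> simp
  have hHa : (Complex.I • H) * (J * Q.map Complex.ofReal) = J * P.map Complex.ofReal := by
    have e : Complex.I • H = ((1 / 2 : ℝ) • (W - Wᵀ)).map Complex.ofReal := by
      unfold H
      rw [hWcH, smul_smul]
      have : Complex.I * (-Complex.I / 2) = 1 / 2 := by
        linear_combination (-1 / 2) * Complex.I_mul_I
      rw [this]
      ext i j; simp [Wc]
    rw [e, hJP, hJP, ← cmap_mul]
    congr 1
    rw [smul_mul, Matrix.sub_mul]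
    change (1 / 2 : ℝ) • (W * a - Wᵀ * a) = _
    rw [hWa, hWt]
    ext (i | i) j <;> simp [b, c]; ring
  refine ⟨Uᴴ * J, hH.eigenvalues, ?_, ?_, ?_⟩
  · rw [conjTranspose_mul, conjTranspose_conjTranspose, Matrix.mul_assoc, ← Matrix.mul_assoc U,
      hU2, Matrix.one_mul, hJ]
  · intro i
    let G : Matrix (ι ⊕ κ) (ι ⊕ κ) ℂ := (1 / 2 : ℂ) • (Wc + Wcᴴ)
    have hG : Gᴴ * G + H * H = 1 := by
      have e1 : Gᴴ = G := by
        unfold G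
        rw [conjTranspose_smul, conjTranspose_add, conjTranspose_conjTranspose, add_comm]
        simp
      rw [e1]
      unfold G H
      simp only [smul_mul, Matrix.mul_smul, Matrix.add_mul, Matrix.mul_add,
        Matrix.sub_mul, Matrix.mul_sub, hW1c, hW3c]
      have : -Complex.I / 2 * (-Complex.I / 2) = -(1 / 4) := by
        linear_combination (1 / 4) * Complex.I_mul_I
      rw [← smul_sub, ← smul_add, smul_smul, smul_smul, this]
      module
    have hd : (G * U)ᴴ * (G * U) +
        diagonal (fun i => (hH.eigenvalues i : ℂ)) * diagonal (fun i => (hH.eigenvalues i : ℂ))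
          = 1 := by
      rw [← hsp, conjTranspose_mul]
      calc _ = Uᴴ * (Gᴴ * G) * U + Uᴴ * H * (U * Uᴴ) * H * U := by simp only [Matrix.mul_assoc]
        _ = Uᴴ * (Gᴴ * G + H * H) * U := by
            rw [hU2, Matrix.mul_one]; simp only [Matrix.mul_assoc, Matrix.mul_add, Matrix.add_mul]
        _ = 1 := by rw [hG, Matrix.mul_one, hU1]
    have hd2 := congrArg (fun M => (M i i).re) hd
    simp only [Matrix.add_apply, diagonal_mul_diagonal, diagonal_apply_eq, one_apply_eq] at hd2
    have hnn : 0 ≤ (((G * U)ᴴ * (G * U)) i i).re := by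
      rw [Matrix.mul_apply, Complex.re_sum]
      apply Finset.sum_nonneg
      intro k _
      simp [conjTranspose_apply]
      nlinarith [mul_self_nonneg ((G * U) k i).re, mul_self_nonneg ((G * U) k i).im]
    simp at hd2 hnn
    rw [abs_le_one_iff_mul_self_le_one]
    linarith
  · rw [Matrix.mul_assoc, ← hHa, smul_mul, Matrix.mul_smul, ← Matrix.mul_assoc, hsp2,
      Matrix.mul_assoc, Matrix.mul_assoc, ← Matrix.smul_mul]
    congr 1
    ext i j
    by_cases h : i = j <;> simp [h, diagonal]


theorem fb_sub {a b c d : Type*} (P P' : Matrix a c ℝ) (Q Q' : Matrix a d ℝ) (R R' : Matrix b c ℝ)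
    (S S' : Matrix b d ℝ) : fromBlocks P Q R S - fromBlocks P' Q' R' S' =
      fromBlocks (P - P') (Q - Q') (R - R') (S - S') := by
  ext (i | i) (j | j) <;> simp

theorem psd_closed {κ : Type*} [Fintype κ] : IsClosed {X : Matrix κ κ ℝ | X.PosSemidef} := by
  have : {X : Matrix κ κ ℝ | X.PosSemidef} =
      {X | Xᵀ = X} ∩ ⋂ x : κ → ℝ, {X | 0 ≤ x ⬝ᵥ X *ᵥ x} := by
    ext X
    simp only [Set.mem_ofPred_eq, Set.mem_inter_iff, Set.mem_iInter]
    constructor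
    · intro h
      refine ⟨by simpa [IsSymm] using h.isHermitian, fun x => by simpa using h.dotProduct_mulVec_nonneg x⟩
    · rintro ⟨h1, h2⟩
      refine PosSemidef.of_dotProduct_mulVec_nonneg (by simpa [IsHermitian] using h1) ?_
      intro x; simpa using h2 x
  rw [this]
  apply IsClosed.inter
  · exact isClosed_eq (by fun_prop) (by fun_prop)
  · apply isClosed_iInter
    intro x
    exact isClosed_le (by fun_prop) (by fun_prop)

/-- The linear part of the LMI in block form. -/
def lmiL {ν μ : Type*} [Fintype ν] [DecidableEq ν] (A : Matrix ν ν ℝ) (C : Matrix μ ν ℝ) (w : ℝ)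
    (Y X : Matrix ν ν ℝ) : Matrix (ν ⊕ μ) (ν ⊕ μ) ℝ :=
  fromRows A 0 * Y * (fromRows 1 (-C))ᵀ + fromRows 1 (-C) * Y * (fromRows A 0)ᵀ
    + w ^ 2 • (fromRows 1 (-C) * X * (fromRows 1 (-C))ᵀ) - fromRows A 0 * X * (fromRows A 0)ᵀ

theorem lmiL_blocks {ν μ : Type*} [Fintype ν] [DecidableEq ν] (A : Matrix ν ν ℝ)
    (C : Matrix μ ν ℝ) (w : ℝ) (Y X : Matrix ν ν ℝ) :
    lmiL A C w Y X = fromBlocks (A * Y + Y * Aᵀ - A * X * Aᵀ + w ^ 2 • X)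
      (-(A * Y * Cᵀ) - w ^ 2 • (X * Cᵀ)) (-(C * Y * Aᵀ) - w ^ 2 • (C * X))
      (w ^ 2 • (C * X * Cᵀ)) := by
  unfold lmiL
  simp only [transpose_fromRows, fromRows_mul]
  simp only [mul_fromCols]
  ext (i | i) (j | j) <;> simp <;> ring

theorem lmi_extract {ν μ : Type*} [Fintype ν] [DecidableEq ν] [Fintype μ] [DecidableEq μ]
    (A : Matrix ν ν ℝ) (B : Matrix ν μ ℝ)
    (C : Matrix μ ν ℝ) (w : ℝ) (hw : 0 < w) (Y X : Matrix ν ν ℝ) (S : Matrix (ν ⊕ μ) (ν ⊕ μ) ℝ)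
    (hX : X.PosSemidef) (hS : S.PosSemidef)
    (h : S + lmiL A C w Y X = fromBlocks 0 B Bᵀ 0) :
    X * Cᵀ = 0 ∧ B + A * Y * Cᵀ = 0 ∧
      (-(A * Y + Y * Aᵀ - A * X * Aᵀ + (w ^ 2) • X)).PosSemidef := by
  rw [lmiL_blocks, ← eq_sub_iff_add_eq, fb_sub] at h
  have hw2 : 0 < w ^ 2 := by positivity
  have key : ∀ u : μ → ℝ, X *ᵥ (Cᵀ *ᵥ u) = 0 ∧ S *ᵥ (Sum.elim 0 u) = 0 := by
    intro u
    have h1 := hS.dotProduct_mulVec_nonneg (Sum.elim 0 u)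
    have h2 := hX.dotProduct_mulVec_nonneg (Cᵀ *ᵥ u)
    have h3 : star (Sum.elim 0 u) ⬝ᵥ S *ᵥ (Sum.elim 0 u) =
        - w ^ 2 * (star (Cᵀ *ᵥ u) ⬝ᵥ X *ᵥ (Cᵀ *ᵥ u)) := by
      rw [h, fromBlocks_mulVec]
      simp only [star_trivial]
      rw [sumElim_dotProduct_sumElim]
      simp only [Sum.elim_comp_inl, Sum.elim_comp_inr, mulVec_zero, zero_add, zero_dotProduct,
        zero_sub, neg_mulVec, smul_mulVec, dotProduct_neg, dotProduct_smul, smul_eq_mul, neg_mul]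
      rw [← mulVec_mulVec, ← mulVec_mulVec, dotProduct_mulVec u C, ← mulVec_transpose]
    have h4 : star (Cᵀ *ᵥ u) ⬝ᵥ X *ᵥ (Cᵀ *ᵥ u) = 0 := by
      rw [h3] at h1
      nlinarith
    refine ⟨(hX.dotProduct_mulVec_zero_iff _).1 h4, (hS.dotProduct_mulVec_zero_iff _).1 ?_⟩
    rw [h3, h4, mul_zero]
  have hXC : X * Cᵀ = 0 := by
    apply Matrix.ext_of_mulVec_single
    intro j
    rw [← mulVec_mulVec, (key _).1, zero_mulVec]
  refine ⟨hXC, ?_, ?_⟩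
  · apply Matrix.ext_of_mulVec_single
    intro j
    have h6 : ∀ u : μ → ℝ, (B + A * Y * Cᵀ) *ᵥ u = 0 := by
      intro u
      have h5 := (key u).2
      rw [h, fromBlocks_mulVec, hXC] at h5
      have h6 := congrArg (fun z => z ∘ Sum.inl) h5
      simp only [Sum.elim_comp_inl, Sum.elim_comp_inr, mulVec_zero, zero_add, smul_zero,
        sub_zero, sub_neg_eq_add] at h6
      exact h6
    rw [h6, zero_mulVec]
  · have h7 := hS.submatrix (Sum.inl : ν → ν ⊕ μ)
    rw [h] at h7
    convert h7 using 1
    ext i j; simp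

theorem lmi_kernel {ν μ : Type*} [Fintype ν] [DecidableEq ν] [Fintype μ] [DecidableEq μ]
    (A : Matrix ν ν ℝ) (hA : IsUnit A.det)
    (C : Matrix μ ν ℝ)
    (hobs : ∀ N : Submodule ℝ (ν → ℝ), (∀ u, Cᵀ *ᵥ u ∈ N) → (∀ y ∈ N, Aᵀ *ᵥ y ∈ N) → N = ⊤)
    (w : ℝ) (hw : 0 < w) (Y X : Matrix ν ν ℝ) (hY : Yᵀ = Y) (hX : X.PosSemidef)
    (hN : (-(A * Y + Y * Aᵀ - A * X * Aᵀ + (w ^ 2) • X)).PosSemidef)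
    (hXC : X * Cᵀ = 0) (hYC : Y * Cᵀ = 0) : Y = 0 ∧ X = 0 := by
  have hw2 : 0 < w ^ 2 := by positivity
  let N : Submodule ℝ (ν → ℝ) := LinearMap.ker Y.mulVecLin ⊓ LinearMap.ker X.mulVecLin
  have memN : ∀ y, y ∈ N ↔ Y *ᵥ y = 0 ∧ X *ᵥ y = 0 := by intro y; simp [N]
  have hAinj : ∀ z, A *ᵥ z = 0 → z = 0 := by
    intro z hz
    have : A⁻¹ *ᵥ (A *ᵥ z) = z := by rw [mulVec_mulVec, nonsing_inv_mul _ hA, one_mulVec]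
    rw [← this, hz, mulVec_zero]
  have hback : ∀ z, Aᵀ *ᵥ z ∈ N → z ∈ N := by
    intro z hz
    rw [memN] at hz ⊢
    obtain ⟨hz1, hz2⟩ := hz
    have e : (-(A * Y + Y * Aᵀ - A * X * Aᵀ + (w ^ 2) • X)) *ᵥ z =
        - (A *ᵥ (Y *ᵥ z)) - w ^ 2 • (X *ᵥ z) := by
      simp only [neg_mulVec, add_mulVec, sub_mulVec, ← mulVec_mulVec, hz1, hz2, smul_mulVec,
        mulVec_zero]
      abel
    have e2 : z ⬝ᵥ A *ᵥ (Y *ᵥ z) = 0 := by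
      rw [dotProduct_mulVec, ← mulVec_transpose, dotProduct_mulVec, ← mulVec_transpose, hY, hz1,
        zero_dotProduct]
    have h1 := hN.dotProduct_mulVec_nonneg z
    have h2 := hX.dotProduct_mulVec_nonneg z
    have e3 := e
    rw [e] at h1
    simp only [star_trivial, dotProduct_sub, dotProduct_neg, e2, dotProduct_smul,
      smul_eq_mul] at h1 h2
    have h4 : z ⬝ᵥ X *ᵥ z = 0 := by nlinarith
    have hXz : X *ᵥ z = 0 := (hX.dotProduct_mulVec_zero_iff z).1 (by simpa using h4)
    have h5 : -(A *ᵥ (Y *ᵥ z)) - w ^ 2 • (X *ᵥ z) = 0 := by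
      rw [← e]
      refine (hN.dotProduct_mulVec_zero_iff z).1 ?_
      rw [e]
      simp only [star_trivial, dotProduct_sub, dotProduct_neg, e2, dotProduct_smul, h4]
      simp
    rw [hXz] at h5
    exact ⟨hAinj _ (by simpa using h5), hXz⟩
  have hAT : IsUnit Aᵀ.det := by rwa [det_transpose]
  let a : (ν → ℝ) ≃ₗ[ℝ] (ν → ℝ) := Matrix.toLinearEquiv' Aᵀ ((Matrix.isUnit_iff_isUnit_det _).2 hAT).invertible
  have ha : ∀ z, a z = Aᵀ *ᵥ z := fun z => rfl
  have hle : N.map a.symm.toLinearMap ≤ N := by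
    rintro _ ⟨y, hy, rfl⟩
    apply hback
    rw [← ha]
    simpa using hy
  have heq : N.map a.symm.toLinearMap = N :=
    Submodule.eq_of_le_of_finrank_eq hle (LinearEquiv.finrank_map_eq a.symm N)
  have hfw : ∀ y ∈ N, Aᵀ *ᵥ y ∈ N := by
    intro y hy
    rw [← heq] at hy
    obtain ⟨x, hx, rfl⟩ := hy
    rw [← ha]
    simpa using hx
  have htop := hobs N (by
    intro u
    rw [memN, mulVec_mulVec, mulVec_mulVec, hXC, hYC]; simp) hfw
  constructor
  · apply Matrix.ext_of_mulVec_single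
    intro j
    rw [((memN _).1 (htop ▸ Submodule.mem_top : Pi.single j (1:ℝ) ∈ N)).1, zero_mulVec]
  · apply Matrix.ext_of_mulVec_single
    intro j
    rw [((memN _).1 (htop ▸ Submodule.mem_top : Pi.single j (1:ℝ) ∈ N)).2, zero_mulVec]


/-- The closed convex cone of the unknowns of the LMI. -/
def lmiCone (ν κ : Type*) [Fintype ν] [Fintype κ] :
    ProperCone ℝ (Matrix ν ν ℝ × Matrix ν ν ℝ × Matrix κ κ ℝ) where
  carrier := {p | p.1ᵀ = p.1 ∧ p.2.1.PosSemidef ∧ p.2.2.PosSemidef}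
  add_mem' := by
    rintro ⟨Y, X, S⟩ ⟨Y', X', S'⟩ ⟨h1, h2, h3⟩ ⟨h1', h2', h3'⟩
    refine ⟨?_, h2.add h2', h3.add h3'⟩
    simp only [Prod.mk_add_mk, transpose_add] at *
    rw [h1, h1']
  zero_mem' := by
    refine ⟨by simp, PosSemidef.zero, PosSemidef.zero⟩
  smul_mem' := by
    rintro ⟨c, hc⟩ ⟨Y, X, S⟩ ⟨h1, h2, h3⟩
    refine ⟨?_, h2.smul hc, h3.smul hc⟩
    change (c • Y)ᵀ = c • Y
    rw [transpose_smul]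
    exact congrArg _ h1
  isClosed' := by
    have : IsClosed ({p : Matrix ν ν ℝ × Matrix ν ν ℝ × Matrix κ κ ℝ | p.1ᵀ = p.1} ∩
      ((fun p => p.2.1) ⁻¹' {X : Matrix ν ν ℝ | X.PosSemidef} ∩
      (fun p => p.2.2) ⁻¹' {X : Matrix κ κ ℝ | X.PosSemidef})) := by
      apply IsClosed.inter
      · exact isClosed_eq (by fun_prop) (by fun_prop)
      · exact (psd_closed.preimage (by fun_prop)).inter (psd_closed.preimage (by fun_prop))
    exact this

theorem mem_lmiCone {ν κ : Type*} [Fintype ν] [Fintype κ]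
    (p : Matrix ν ν ℝ × Matrix ν ν ℝ × Matrix κ κ ℝ) :
    p ∈ lmiCone ν κ ↔ p.1ᵀ = p.1 ∧ p.2.1.PosSemidef ∧ p.2.2.PosSemidef := Iff.rfl

/-- The linear map of the LMI. -/
def lmiT {ν μ : Type*} [Fintype ν] [DecidableEq ν] (A : Matrix ν ν ℝ) (C : Matrix μ ν ℝ) (w : ℝ) :
    (Matrix ν ν ℝ × Matrix ν ν ℝ × Matrix (ν ⊕ μ) (ν ⊕ μ) ℝ) →ₗ[ℝ] Matrix (ν ⊕ μ) (ν ⊕ μ) ℝ where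
  toFun p := p.2.2 + lmiL A C w p.1 p.2.1
  map_add' := by
    rintro ⟨Y, X, S⟩ ⟨Y', X', S'⟩
    simp only [lmiL, Prod.mk_add_mk, Matrix.mul_add, Matrix.add_mul, smul_add]
    abel
  map_smul' := by
    rintro c ⟨Y, X, S⟩
    simp only [lmiL, Prod.smul_mk, Matrix.mul_smul, Matrix.smul_mul, RingHom.id_apply,
      smul_add, smul_sub, smul_comm (w ^ 2) c]

/-- A linear functional acts on symmetric matrices through a symmetric matrix. -/
theorem functional_sym {κ : Type*} [Fintype κ] [DecidableEq κ] (f : Matrix κ κ ℝ →ₗ[ℝ] ℝ)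
    (hf : ∀ S : Matrix κ κ ℝ, S.PosSemidef → 0 ≤ f S) :
    ∃ G : Matrix κ κ ℝ, ∀ M : Matrix κ κ ℝ, Mᵀ = M → f M = (G * M * Gᵀ).trace := by
  let Z : Matrix κ κ ℝ := Matrix.of fun i j => (f (single i j 1) + f (single j i 1)) / 2
  have hfM : ∀ M : Matrix κ κ ℝ, f M = ∑ i, ∑ j, M i j * f (single i j 1) := by
    intro M
    conv_lhs => rw [matrix_eq_sum_single M]
    rw [map_sum]
    refine Finset.sum_congr rfl fun i _ => ?_
    rw [map_sum]
    refine Finset.sum_congr rfl fun j _ => ?_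
    rw [← smul_eq_mul, ← map_smul, smul_single, smul_eq_mul, mul_one]
  have hZ : ∀ M : Matrix κ κ ℝ, Mᵀ = M → f M = ∑ i, ∑ j, M i j * Z i j := by
    intro M hM
    have h1 := hfM M
    have h2 : f M = ∑ i, ∑ j, M i j * f (single j i 1) := by
      rw [h1, Finset.sum_comm]
      refine Finset.sum_congr rfl fun i _ => Finset.sum_congr rfl fun j _ => ?_
      conv_lhs => rw [← hM]
      rfl
    have h3 : ∑ i, ∑ j, M i j * Z i j = ((∑ i, ∑ j, M i j * f (single i j 1)) +
        ∑ i, ∑ j, M i j * f (single j i 1)) / 2 := by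
      rw [← Finset.sum_add_distrib, Finset.sum_div]
      refine Finset.sum_congr rfl fun i _ => ?_
      rw [← Finset.sum_add_distrib, Finset.sum_div]
      refine Finset.sum_congr rfl fun j _ => ?_
      simp only [Z, Matrix.of_apply]; ring
    rw [h3, ← h1, ← h2]; ring
  have hZpsd : Z.PosSemidef := by
    refine PosSemidef.of_dotProduct_mulVec_nonneg ?_ ?_
    · ext i j; simp [Z, add_comm]
    · intro x
      have h1 := hf _ (posSemidef_vecMulVec_self_star x)
      rw [hZ _ (by ext i j; simp [vecMulVec_apply, mul_comm])] at h1
      refine h1.trans_eq ?_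
      simp only [dotProduct, mulVec, Finset.mul_sum]
      refine Finset.sum_congr rfl fun i _ => Finset.sum_congr rfl fun j _ => ?_
      simp [vecMulVec_apply]; ring
  obtain ⟨G, hG⟩ := psd_factor _ hZpsd
  refine ⟨G, fun M hM => ?_⟩
  rw [hZ M hM, Matrix.mul_assoc, trace_mul_comm, Matrix.mul_assoc, ← hG, Matrix.trace]
  refine Finset.sum_congr rfl fun i _ => ?_
  rw [diag_apply, Matrix.mul_apply]
  refine Finset.sum_congr rfl fun j _ => ?_
  simp only [Z, Matrix.of_apply]; ring

theorem lmiL_symm {ν μ : Type*} [Fintype ν] [DecidableEq ν] (A : Matrix ν ν ℝ) (C : Matrix μ ν ℝ)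
    (w : ℝ) (Y X : Matrix ν ν ℝ) (hY : Yᵀ = Y) (hX : Xᵀ = X) :
    (lmiL A C w Y X)ᵀ = lmiL A C w Y X := by
  unfold lmiL
  simp only [transpose_sub, transpose_add, transpose_smul, transpose_mul, transpose_transpose,
    hY, hX, Matrix.mul_assoc]
  abel

theorem trace_lmiL {ν μ : Type*} [Fintype ν] [DecidableEq ν] [Fintype μ]
    (A : Matrix ν ν ℝ) (C : Matrix μ ν ℝ)
    (w : ℝ) (Y X : Matrix ν ν ℝ) {κ : Type*} [Fintype κ] (G : Matrix κ (ν ⊕ μ) ℝ)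
    (P Q : Matrix κ ν ℝ)
    (hP : P = G * (fromRows A 0 : Matrix (ν ⊕ μ) ν ℝ))
    (hQ : Q = G * (fromRows 1 (-C) : Matrix (ν ⊕ μ) ν ℝ)) :
    (G * lmiL A C w Y X * Gᵀ).trace =
      (Y * (Qᵀ * P + Pᵀ * Q)).trace + (X * (w ^ 2 • (Qᵀ * Q) - Pᵀ * P)).trace := by
  have h : G * lmiL A C w Y X * Gᵀ = P * Y * Qᵀ + Q * Y * Pᵀ + w ^ 2 • (Q * X * Qᵀ) -
      P * X * Pᵀ := by
    have hPt : Pᵀ = (fromRows A 0 : Matrix (ν ⊕ μ) ν ℝ)ᵀ * Gᵀ := by rw [hP]; exact transpose_mul _ _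
    have hQt : Qᵀ = (fromRows 1 (-C) : Matrix (ν ⊕ μ) ν ℝ)ᵀ * Gᵀ := by rw [hQ]; exact transpose_mul _ _
    rw [hPt, hQt, hP, hQ]
    unfold lmiL
    simp only [Matrix.mul_add, Matrix.mul_sub, Matrix.add_mul, Matrix.sub_mul,
      Matrix.mul_assoc, Matrix.mul_smul, Matrix.smul_mul]
  rw [h]
  have t : ∀ (R S : Matrix κ ν ℝ) (M : Matrix ν ν ℝ),
      (R * M * Sᵀ).trace = (M * (Sᵀ * R)).trace := by
    intro R S M
    rw [Matrix.mul_assoc, trace_mul_comm, Matrix.mul_assoc]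
  simp only [trace_add, trace_sub, trace_smul, t, Matrix.mul_add, Matrix.mul_sub,
    Matrix.mul_smul]
  ring

open scoped Matrix.Norms.Elementwise in
theorem lmi_sep {ν μ : Type*} [Fintype ν] [DecidableEq ν] [Fintype μ] [DecidableEq μ]
    (A : Matrix ν ν ℝ) (C : Matrix μ ν ℝ) (w : ℝ) (y : Matrix (ν ⊕ μ) (ν ⊕ μ) ℝ)
    (hker : ∀ (Y X : Matrix ν ν ℝ) (S : Matrix (ν ⊕ μ) (ν ⊕ μ) ℝ), Yᵀ = Y → X.PosSemidef →
      S.PosSemidef → S + lmiL A C w Y X = 0 → Y = 0 ∧ X = 0 ∧ S = 0)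
    (hy : ∀ (Y X : Matrix ν ν ℝ) (S : Matrix (ν ⊕ μ) (ν ⊕ μ) ℝ), Yᵀ = Y → X.PosSemidef →
      S.PosSemidef → S + lmiL A C w Y X ≠ y) :
    ∃ f : Matrix (ν ⊕ μ) (ν ⊕ μ) ℝ →ₗ[ℝ] ℝ, (∀ (Y X : Matrix ν ν ℝ)
      (S : Matrix (ν ⊕ μ) (ν ⊕ μ) ℝ), Yᵀ = Y → X.PosSemidef →
      S.PosSemidef → 0 ≤ f (S + lmiL A C w Y X)) ∧ f y < 0 := by
  obtain ⟨f, hf1, hf2⟩ := cone_sep (LinearMap.toContinuousLinearMap (lmiT A C w))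
    (lmiCone ν (ν ⊕ μ)) (by
    rintro ⟨Y, X, S⟩ ⟨h1, h2, h3⟩ h4
    obtain ⟨h5, h6, h7⟩ := hker Y X S h1 h2 h3 h4
    rw [h5, h6, h7]; rfl) y (by
    rintro ⟨Y, X, S⟩ ⟨h1, h2, h3⟩ h4
    exact hy Y X S h1 h2 h3 h4)
  exact ⟨f.toLinearMap, fun Y X S h1 h2 h3 => hf1 (Y, X, S) ⟨h1, h2, h3⟩, hf2⟩

theorem lmi_exists {ν μ : Type*} [Fintype ν] [DecidableEq ν] [Fintype μ] [DecidableEq μ]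
    (A : Matrix ν ν ℝ) (hA : IsUnit A.det) (B : Matrix ν μ ℝ)
    (C : Matrix μ ν ℝ)
    (hobs : ∀ N : Submodule ℝ (ν → ℝ), (∀ u, Cᵀ *ᵥ u ∈ N) → (∀ y ∈ N, Aᵀ *ᵥ y ∈ N) → N = ⊤)
    (w : ℝ) (hw : 0 < w)
    (hfreq : ∀ (σ : ℝ) (v : ν → ℂ) (u : μ → ℂ), |σ| ≤ w →
      v ᵥ* (A.map Complex.ofReal) =
        (Complex.I * (σ : ℂ)) • (v - u ᵥ* (C.map Complex.ofReal)) →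
      0 ≤ (star v ⬝ᵥ (B.map Complex.ofReal) *ᵥ u).re) :
    ∃ (Y X : Matrix ν ν ℝ), Yᵀ = Y ∧ X.PosSemidef ∧
          (-(A * Y + Y * Aᵀ - A * X * Aᵀ + (w ^ 2) • X)).PosSemidef ∧
          B + A * Y * Cᵀ = 0 ∧ C * X = 0 := by
  by_contra hcon
  obtain ⟨f, hf1, hf2⟩ := lmi_sep A C w (fromBlocks 0 B Bᵀ 0) (by
    intro Y X S h1 h2 h3 h4
    obtain ⟨hXC, hBY, hN⟩ := lmi_extract A 0 C w hw Y X S h2 h3 (by simpa using h4)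
    have hYC : Y * Cᵀ = 0 := by
      rw [zero_add, Matrix.mul_assoc] at hBY
      have : A⁻¹ * (A * (Y * Cᵀ)) = Y * Cᵀ := by
        rw [← Matrix.mul_assoc, nonsing_inv_mul _ hA, Matrix.one_mul]
      rw [← this, hBY, Matrix.mul_zero]
    obtain ⟨rfl, rfl⟩ := lmi_kernel A hA C hobs w hw Y X h1 h2 hN hXC hYC
    exact ⟨rfl, rfl, by simpa [lmiL] using h4⟩) (by
    intro Y X S h1 h2 h3 h4
    obtain ⟨hXC, hBY, hN⟩ := lmi_extract A B C w hw Y X S h2 h3 h4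
    refine hcon ⟨Y, X, h1, h2, hN, hBY, ?_⟩
    have hXs : Xᵀ = X := by simpa [IsSymm] using h2.isHermitian
    have := congrArg transpose hXC
    rwa [transpose_mul, transpose_transpose, hXs, transpose_zero] at this)
  have hfS : ∀ S : Matrix (ν ⊕ μ) (ν ⊕ μ) ℝ, S.PosSemidef → 0 ≤ f S := by
    intro S hS
    have := hf1 0 0 S (by simp) PosSemidef.zero hS
    simpa [lmiL] using this
  obtain ⟨G, hG⟩ := functional_sym f hfS
  let P : Matrix (ν ⊕ μ) ν ℝ := G * (fromRows A 0 : Matrix (ν ⊕ μ) ν ℝ)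
  let Q : Matrix (ν ⊕ μ) ν ℝ := G * (fromRows 1 (-C) : Matrix (ν ⊕ μ) ν ℝ)
  have hL : ∀ Y X : Matrix ν ν ℝ, Yᵀ = Y → X.PosSemidef →
      0 ≤ (Y * (Qᵀ * P + Pᵀ * Q)).trace + (X * (w ^ 2 • (Qᵀ * Q) - Pᵀ * P)).trace := by
    intro Y X hY hX
    have h1 := hf1 Y X 0 hY hX PosSemidef.zero
    rw [zero_add, hG _ (lmiL_symm A C w Y X hY (by simpa [IsSymm] using hX.isHermitian)),
      trace_lmiL A C w Y X G P Q rfl rfl] at h1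
    exact h1
  have hskew : Qᵀ * P + Pᵀ * Q = 0 := by
    set R := Qᵀ * P + Pᵀ * Q with hR
    have hRs : Rᵀ = R := by
      rw [hR]; simp only [transpose_add, transpose_mul, transpose_transpose]; abel
    have h1 := hL (-R) 0 (by rw [transpose_neg, hRs]) PosSemidef.zero
    simp only [Matrix.zero_mul, trace_zero, add_zero, Matrix.neg_mul, trace_neg] at h1
    have h2 : (Rᴴ * R).trace = 0 := by
      rw [conjTranspose_eq_transpose_of_trivial, hRs]
      refine le_antisymm (by linarith) ?_
      have := (posSemidef_conjTranspose_mul_self R).trace_nonneg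
      rwa [conjTranspose_eq_transpose_of_trivial, hRs] at this
    exact trace_conjTranspose_mul_self_eq_zero_iff.1 h2
  have hpsd : (w ^ 2 • (Qᵀ * Q) - Pᵀ * P).PosSemidef := by
    refine PosSemidef.of_dotProduct_mulVec_nonneg ?_ ?_
    · rw [IsHermitian, conjTranspose_eq_transpose_of_trivial]
      simp [transpose_sub, transpose_smul, transpose_mul]
    · intro x
      have h1 := hL 0 _ (by simp) (posSemidef_vecMulVec_self_star x)
      rw [Matrix.zero_mul, trace_zero, zero_add, vecMulVec_mul, trace_vecMulVec] at h1
      rw [dotProduct_mulVec, dotProduct_comm]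
      exact h1
  have hw2 : w ≠ 0 := hw.ne'
  obtain ⟨U, σ, hU, hσ, hUP⟩ := decomp (w⁻¹ • P) Q (by
    rw [transpose_smul, Matrix.mul_smul, Matrix.smul_mul, ← smul_add, hskew, smul_zero]) (by
    have := hpsd.smul (show (0:ℝ) ≤ (w ^ 2)⁻¹ by positivity)
    convert this using 1
    rw [smul_sub, smul_smul, inv_mul_cancel₀ (by positivity), one_smul, transpose_smul,
      Matrix.mul_smul, Matrix.smul_mul, smul_smul]
    congr 2
    field_simp)
  let G' := U * G.map Complex.ofReal
  have hrow : ∀ i, 0 ≤ (star (G' i ∘ Sum.inl) ⬝ᵥ (B.map Complex.ofReal) *ᵥ (G' i ∘ Sum.inr)).re := by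
    intro i
    apply hfreq (w * σ i)
    · rw [abs_mul, abs_of_pos hw]
      exact mul_le_of_le_one_right hw.le (hσ i)
    · have e1 : U * (w⁻¹ • P).map Complex.ofReal =
          (w⁻¹ : ℂ) • (G' * (fromRows (A.map Complex.ofReal) 0 : Matrix (ν ⊕ μ) ν ℂ)) := by
        have : (w⁻¹ • P).map Complex.ofReal = (w⁻¹ : ℂ) • P.map Complex.ofReal := by
          ext i j; simp
        rw [this, cmap_mul, Matrix.mul_smul, ← Matrix.mul_assoc]
        congr 2
        ext (i | i) j <;> simp
      have e2 : U * Q.map Complex.ofReal = G' * (fromRows 1 (-C.map Complex.ofReal) : Matrix (ν ⊕ μ) ν ℂ) := by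
        rw [cmap_mul, ← Matrix.mul_assoc]
        congr 1
        ext (i | i) j <;> simp [Matrix.one_apply]
        split_ifs <;> simp
      rw [e1, e2] at hUP
      ext j
      have h3 := congrFun (congrFun hUP i) j
      rw [diagonal_mul, Matrix.smul_apply, Matrix.mul_apply, Matrix.mul_apply] at h3
      simp only [Fintype.sum_sum_type, fromRows_apply_inl, fromRows_apply_inr] at h3
      simp only [vecMul, dotProduct, Pi.smul_apply, Pi.sub_apply, Function.comp_apply,
        smul_eq_mul, Complex.ofReal_mul]
      have hwc : (w : ℂ) ≠ 0 := by exact_mod_cast hw2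
      simp only [Matrix.zero_apply, mul_zero, Finset.sum_const_zero, add_zero, Matrix.neg_apply,
        mul_neg, Finset.sum_neg_distrib, smul_eq_mul, Matrix.one_apply, mul_ite, mul_one,
        Finset.sum_ite_eq', Finset.sum_ite_eq, Finset.mem_univ, if_true] at h3
      rw [inv_mul_eq_iff_eq_mul₀ hwc] at h3
      rw [h3]; ring
  have hfin : (f (fromBlocks 0 B Bᵀ 0) : ℂ) =
      (G' * (fromBlocks 0 (B.map Complex.ofReal) (B.map Complex.ofReal)ᵀ 0) * G'ᴴ).trace := by
    rw [hG _ (by simp [fromBlocks_transpose])]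
    have e1 : ((G * fromBlocks 0 B Bᵀ 0 * Gᵀ).trace : ℂ) =
        ((G * fromBlocks 0 B Bᵀ 0 * Gᵀ).map Complex.ofReal).trace := by
      simp [Matrix.trace]
    have e2 : (fromBlocks 0 B Bᵀ 0).map Complex.ofReal =
        fromBlocks 0 (B.map Complex.ofReal) (B.map Complex.ofReal)ᵀ 0 := by
      ext (i | i) (j | j) <;> simp
    have e3 : Gᵀ.map Complex.ofReal = (G.map Complex.ofReal)ᴴ := by
      ext i j; simp
    rw [e1, cmap_mul, cmap_mul, e2, e3]
    simp only [G', conjTranspose_mul]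
    rw [trace_mul_comm (U * _ * _), ← Matrix.mul_assoc, ← Matrix.mul_assoc, Matrix.mul_assoc _ Uᴴ,
      hU, Matrix.mul_one, trace_mul_comm, Matrix.mul_assoc, trace_mul_comm]
    try simp only [Matrix.mul_assoc]
  have hfin2 : 0 ≤ f (fromBlocks 0 B Bᵀ 0) := by
    have h1 := congrArg Complex.re hfin
    rw [Complex.ofReal_re, Matrix.trace, Complex.re_sum] at h1
    rw [h1]
    apply Finset.sum_nonneg
    intro i _
    have h2 := hrow i
    have e : (G' * fromBlocks 0 (B.map Complex.ofReal) (B.map Complex.ofReal)ᵀ 0 * G'ᴴ).diag i =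
        (star (G' i ∘ Sum.inl) ⬝ᵥ (B.map Complex.ofReal) *ᵥ (G' i ∘ Sum.inr)) +
        star (star (G' i ∘ Sum.inl) ⬝ᵥ (B.map Complex.ofReal) *ᵥ (G' i ∘ Sum.inr)) := by
      rw [diag_apply, Matrix.mul_apply]
      simp only [Fintype.sum_sum_type, Matrix.mul_apply, fromBlocks_apply₁₁, fromBlocks_apply₁₂,
        fromBlocks_apply₂₁, fromBlocks_apply₂₂, dotProduct, mulVec, Finset.mul_sum, star_sum]
      congr 1
      · refine Finset.sum_congr rfl fun j _ => ?_
        simp [Finset.sum_mul]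
        refine Finset.sum_congr rfl fun k _ => ?_
        ring
      · rw [Finset.sum_comm]
        refine Finset.sum_congr rfl fun j _ => ?_
        simp [Finset.sum_mul]
        refine Finset.sum_congr rfl fun k _ => ?_
        ring
    rw [e, Complex.add_re]
    simp only [RCLike.star_def, Complex.conj_re] at *
    linarith
  linarith

theorem obs_real {n m : ℕ} (A : Matrix (Fin n) (Fin n) ℝ) (C : Matrix (Fin m) (Fin n) ℝ)
    (h : (Matrix.of fun (p : Fin n × Fin m) (i : Fin n) => (C * A ^ (p.1 : ℕ)) p.2 i).rank = n)
    (N : Submodule ℝ (Fin n → ℝ)) (h1 : ∀ u, Cᵀ *ᵥ u ∈ N) (h2 : ∀ y ∈ N, Aᵀ *ᵥ y ∈ N) :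
    N = ⊤ := by
  rw [Matrix.rank_eq_finrank_span_row] at h
  have h3 := Submodule.eq_top_of_finrank_eq (h.trans (by simp : n = Module.finrank ℝ (Fin n → ℝ)))
  rw [eq_top_iff, ← h3, Submodule.span_le]
  rintro _ ⟨p, rfl⟩
  have key : ∀ k : ℕ, ∀ j : Fin m, (fun i => (C * A ^ k) j i) ∈ N := by
    intro k j
    induction k with
    | zero =>
      have := h1 (Pi.single j 1)
      convert this using 1
      ext i
      simp
    | succ k ih =>
      have := h2 _ ih
      convert this using 1
      ext i
      rw [pow_succ, ← Matrix.mul_assoc, Matrix.mul_apply]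
      simp [mulVec, dotProduct, mul_comm]
  exact key p.1 p.2

theorem obs_complex {n m : ℕ} (A : Matrix (Fin n) (Fin n) ℝ) (C : Matrix (Fin m) (Fin n) ℝ)
    (hobs : ∀ N : Submodule ℝ (Fin n → ℝ), (∀ u, Cᵀ *ᵥ u ∈ N) → (∀ y ∈ N, Aᵀ *ᵥ y ∈ N) → N = ⊤)
    (z : ℂ) (w : Fin n → ℂ) (h1 : A.map Complex.ofReal *ᵥ w = z • w)
    (h2 : C.map Complex.ofReal *ᵥ w = 0) : w = 0 := by
  have e1 : ∀ u : Fin m → ℝ, (fun i => ((Cᵀ *ᵥ u) i : ℂ)) =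
      (fun i => (u i : ℂ)) ᵥ* C.map Complex.ofReal := by
    intro u
    ext i
    simp [mulVec, vecMul, dotProduct, mul_comm]
  have e2 : ∀ u : Fin n → ℝ, (fun i => ((Aᵀ *ᵥ u) i : ℂ)) =
      (fun i => (u i : ℂ)) ᵥ* A.map Complex.ofReal := by
    intro u
    ext i
    simp [mulVec, vecMul, dotProduct, mul_comm]
  let N : Submodule ℝ (Fin n → ℝ) :=
    { carrier := {y | (fun i => (y i : ℂ)) ⬝ᵥ w = 0}
      add_mem' := by
        intro a b ha hb
        simp only [Set.mem_ofPred_eq, dotProduct, Pi.add_apply, Complex.ofReal_add, add_mul,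
          Finset.sum_add_distrib] at ha hb ⊢
        rw [ha, hb, add_zero]
      zero_mem' := by simp [dotProduct]
      smul_mem' := by
        intro r a ha
        simp only [Set.mem_ofPred_eq, dotProduct, Pi.smul_apply, smul_eq_mul, Complex.ofReal_mul,
          mul_assoc, ← Finset.mul_sum] at ha ⊢
        rw [ha, mul_zero] }
  have hN : N = ⊤ := by
    apply hobs
    · intro u
      change (fun i => ((Cᵀ *ᵥ u) i : ℂ)) ⬝ᵥ w = 0
      rw [e1, ← dotProduct_mulVec, h2, dotProduct_zero]
    · intro y hy
      change (fun i => ((Aᵀ *ᵥ y) i : ℂ)) ⬝ᵥ w = 0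
      change (fun i => (y i : ℂ)) ⬝ᵥ w = 0 at hy
      rw [e2, ← dotProduct_mulVec, h1, dotProduct_smul, hy, smul_zero]
  ext i
  have hi : Pi.single i (1 : ℝ) ∈ N := by rw [hN]; trivial
  change (fun k => ((Pi.single i (1 : ℝ) : Fin n → ℝ) k : ℂ)) ⬝ᵥ w = 0 at hi
  have : (fun k => ((Pi.single i (1 : ℝ) : Fin n → ℝ) k : ℂ)) = Pi.single i 1 := by
    ext k
    by_cases hk : k = i
    · subst hk; simp
    · simp [hk]
  rw [this] at hi
  simpa using hi

theorem reg_inv {ν : Type*} [Fintype ν] [DecidableEq ν] (a : Matrix ν ν ℂ) (s : ℂ)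
    (hs : s ∉ spectrum ℂ a) : IsUnit (s • (1 : Matrix ν ν ℂ) - a).det := by
  rw [spectrum.notMem_iff, Algebra.algebraMap_eq_smul_one] at hs
  exact (Matrix.isUnit_iff_isUnit_det _).1 hs

theorem ev_reg {ν : Type*} [Fintype ν] [DecidableEq ν] (a : Matrix ν ν ℂ) (z : ℂ) :
    ∀ᶠ s in 𝓝[≠] z, s ∉ spectrum ℂ a := by
  have hf : (spectrum ℂ a \ {z}).Finite := (Matrix.finite_spectrum a).subset Set.sdiff_subset
  have := hf.isClosed.isOpen_compl.mem_nhds (x := z) (by simp)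
  rw [eventually_nhdsWithin_iff]
  filter_upwards [this] with s hs hne h
  exact hs ⟨h, hne⟩

theorem res_id {ν : Type*} [Fintype ν] [DecidableEq ν] (a : Matrix ν ν ℂ) (z s : ℂ)
    (hs : s ∉ spectrum ℂ a) :
    (z • (1 : Matrix ν ν ℂ) - a) * (s • (1 : Matrix ν ν ℂ) - a)⁻¹ =
      1 - (s - z) • (s • (1 : Matrix ν ν ℂ) - a)⁻¹ := by
  have h := Matrix.mul_nonsing_inv _ (reg_inv a s hs)
  have e : z • (1 : Matrix ν ν ℂ) - a = (s • (1 : Matrix ν ν ℂ) - a) - (s - z) • 1 := by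
    rw [sub_smul]; abel
  rw [e, Matrix.sub_mul, h, Matrix.smul_mul, Matrix.one_mul]

theorem res_tendsto {ν : Type*} [Fintype ν] [DecidableEq ν] (a P : Matrix ν ν ℂ) (z : ℂ)
    (hP : Tendsto (fun s : ℂ => (s - z) • (s • (1 : Matrix ν ν ℂ) - a)⁻¹) (𝓝[≠] z) (𝓝 P)) :
    Tendsto (fun s : ℂ => (z • (1 : Matrix ν ν ℂ) - a) * (s • (1 : Matrix ν ν ℂ) - a)⁻¹)
      (𝓝[≠] z) (𝓝 (1 - P)) := by
  refine Tendsto.congr' ?_ (hP.const_sub 1)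
  filter_upwards [ev_reg a z] with s hs
  rw [res_id a z s hs]

theorem res_zero {ν : Type*} [Fintype ν] [DecidableEq ν] (a P : Matrix ν ν ℂ) (z : ℂ)
    (hP : Tendsto (fun s : ℂ => (s - z) • (s • (1 : Matrix ν ν ℂ) - a)⁻¹) (𝓝[≠] z) (𝓝 P)) :
    (z • (1 : Matrix ν ν ℂ) - a) * P = 0 := by
  have h1 := res_tendsto a P z hP
  have h0 : Tendsto (fun s : ℂ => s - z) (𝓝[≠] z) (𝓝 0) := by
    have : Tendsto (fun s : ℂ => s - z) (𝓝 z) (𝓝 (z - z)) := (continuous_sub_right z).tendsto z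
    rw [sub_self] at this
    exact this.mono_left nhdsWithin_le_nhds
  have h2 := h0.smul h1
  have hc : Continuous (fun M : Matrix ν ν ℂ => (z • (1 : Matrix ν ν ℂ) - a) * M) :=
    continuous_const.matrix_mul continuous_id
  have h3 := (hc.tendsto P).comp hP
  rw [zero_smul] at h2
  refine tendsto_nhds_unique h3 (h2.congr ?_)
  intro s
  simp

theorem tf_tendsto {n m : ℕ} (A : Matrix (Fin n) (Fin n) ℝ) (B : Matrix (Fin n) (Fin m) ℝ)
    (C : Matrix (Fin m) (Fin n) ℝ) (D : Matrix (Fin m) (Fin m) ℝ) (z : ℂ)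
    (P : Matrix (Fin n) (Fin n) ℂ)
    (hP : Tendsto (fun s : ℂ => (s - z) • (s • (1 : Matrix (Fin n) (Fin n) ℂ)
      - A.map Complex.ofReal)⁻¹) (𝓝[≠] z) (𝓝 P)) :
    Tendsto (fun s : ℂ => (s - z) • Complex.I • tf A B C D s) (𝓝[≠] z)
      (𝓝 (Complex.I • (C.map Complex.ofReal * P * B.map Complex.ofReal))) := by
  have h0 : Tendsto (fun s : ℂ => s - z) (𝓝[≠] z) (𝓝 0) := by
    have : Tendsto (fun s : ℂ => s - z) (𝓝 z) (𝓝 (z - z)) := (continuous_sub_right z).tendsto z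
    rw [sub_self] at this
    exact this.mono_left nhdsWithin_le_nhds
  have hc : Continuous (fun M : Matrix (Fin n) (Fin n) ℂ =>
      Complex.I • (C.map Complex.ofReal * M * B.map Complex.ofReal)) := by
    fun_prop
  have h1 := (hc.tendsto P).comp hP
  have h2 := h1.add (h0.smul (tendsto_const_nhds (x := Complex.I • D.map Complex.ofReal)))
  rw [zero_smul, add_zero] at h2
  refine h2.congr ?_
  intro s
  simp only [Function.comp, tf, smul_add, Matrix.mul_smul, Matrix.smul_mul]
  rw [smul_comm Complex.I]

theorem im_nonpos {n m : ℕ} (A : Matrix (Fin n) (Fin n) ℝ) (B : Matrix (Fin n) (Fin m) ℝ)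
    (C : Matrix (Fin m) (Fin n) ℝ) (D : Matrix (Fin m) (Fin m) ℝ) (hD : D = Dᵀ) (s : ℂ)
    (h : (Complex.I • (tf A B C D s - (tf A B C D s)ᴴ)).PosSemidef) (u : Fin m → ℂ) :
    (star u ⬝ᵥ (C.map Complex.ofReal * (s • (1 : Matrix (Fin n) (Fin n) ℂ)
      - A.map Complex.ofReal)⁻¹ * B.map Complex.ofReal) *ᵥ u).im ≤ 0 := by
  have hd : (D.map Complex.ofReal)ᴴ = D.map Complex.ofReal := by
    ext i j
    have : D j i = D i j := by conv_lhs => rw [hD, transpose_apply]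
    simp [conjTranspose_apply, this]
  have h1 := h.dotProduct_mulVec_nonneg u
  unfold tf at h1
  set G := C.map Complex.ofReal * (s • (1 : Matrix (Fin n) (Fin n) ℂ)
      - A.map Complex.ofReal)⁻¹ * B.map Complex.ofReal with hG
  rw [conjTranspose_add, hd, add_sub_add_right_eq_sub, smul_mulVec, sub_mulVec, dotProduct_smul,
    dotProduct_sub] at h1
  have e : star u ⬝ᵥ Gᴴ *ᵥ u = star (star u ⬝ᵥ G *ᵥ u) := by
    rw [← star_dotProduct_star, star_star, star_mulVec, ← dotProduct_mulVec]
  rw [e, Complex.le_def] at h1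
  have := h1.1
  simp at this
  linarith

theorem freq_pos {n m : ℕ} (A : Matrix (Fin n) (Fin n) ℝ) (B : Matrix (Fin n) (Fin m) ℝ)
    (C : Matrix (Fin m) (Fin n) ℝ) (D : Matrix (Fin m) (Fin m) ℝ)
    (hobs : ∀ N : Submodule ℝ (Fin n → ℝ), (∀ u, Cᵀ *ᵥ u ∈ N) → (∀ y ∈ N, Aᵀ *ᵥ y ∈ N) → N = ⊤)
    (ωb : ℝ) (Φ : ℝ → Matrix (Fin n) (Fin n) ℂ)
    (hΦ : ∀ ω : ℝ, 0 < ω → ω ≤ ωb → (Complex.I * ω) ∈ eigs A →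
      Tendsto (fun s : ℂ =>
          (s - Complex.I * ω) • (s • (1 : Matrix (Fin n) (Fin n) ℂ) - A.map Complex.ofReal)⁻¹)
        (𝓝[≠] (Complex.I * ω)) (𝓝 (Φ ω)))
    (h : IsFFNI A B C D ωb) (ω : ℝ) (h0 : 0 < ω) (h1 : ω ≤ ωb) (p : Fin n → ℂ) (u : Fin m → ℂ)
    (hp : p ᵥ* A.map Complex.ofReal =
      (Complex.I * (ω : ℂ)) • (p - star u ᵥ* C.map Complex.ofReal)) :
    0 ≤ (p ⬝ᵥ B.map Complex.ofReal *ᵥ u).re := by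
  obtain ⟨-, h2, h3, hD⟩ := h
  set z : ℂ := Complex.I * ω with hz
  set a := A.map Complex.ofReal with ha
  set b := B.map Complex.ofReal with hb
  set c := C.map Complex.ofReal with hc
  have hp' : p ᵥ* (z • (1 : Matrix (Fin n) (Fin n) ℂ) - a) = z • (star u ᵥ* c) := by
    rw [vecMul_sub, hp, vecMul_smul, vecMul_one, smul_sub]
    abel
  have hq : ∀ M : Matrix (Fin n) (Fin n) ℂ, z * (star u ⬝ᵥ (c * M * b) *ᵥ u) =
      p ⬝ᵥ ((z • (1 : Matrix (Fin n) (Fin n) ℂ) - a) * M) *ᵥ (b *ᵥ u) := by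
    intro M
    rw [dotProduct_mulVec p, ← vecMul_vecMul, hp', dotProduct_mulVec, ← vecMul_vecMul,
      ← vecMul_vecMul, smul_vecMul, smul_dotProduct, smul_eq_mul, dotProduct_mulVec]
  have hre : ∀ q : ℂ, q.im ≤ 0 → 0 ≤ (z * q).re := by
    intro q hq
    simp only [hz, Complex.mul_re, Complex.mul_im, Complex.I_re, Complex.I_im, Complex.ofReal_re,
      Complex.ofReal_im]
    nlinarith
  by_cases hs : z ∈ eigs A
  · have hP := hΦ ω h0 h1 hs
    have hP0 := res_zero _ _ _ hP
    obtain ⟨K, hK, hKp⟩ := h3 ω h0 h1 hs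
    have hKe := tendsto_nhds_unique hK (tf_tendsto A B C D z _ hP)
    have hlim := res_tendsto _ _ _ hP
    -- the limit inequality
    have hA : 0 ≤ (p ⬝ᵥ (1 - Φ ω) *ᵥ (b *ᵥ u)).re := by
      have hmap : Tendsto (fun x : ℝ => Complex.I * (x : ℂ)) (𝓝[<] ω) (𝓝[≠] z) := by
        apply tendsto_nhdsWithin_of_tendsto_nhds_of_eventually_within
        · have : Continuous (fun x : ℝ => Complex.I * (x : ℂ)) := by fun_prop
          exact (this.tendsto ω).mono_left nhdsWithin_le_nhds
        · filter_upwards [self_mem_nhdsWithin] with x hx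
          simp only [Set.mem_compl_iff, Set.mem_singleton_iff, hz]
          intro h
          have := mul_left_cancel₀ Complex.I_ne_zero h
          exact (ne_of_lt hx) (Complex.ofReal_injective this)
      have hcont : Continuous (fun M : Matrix (Fin n) (Fin n) ℂ =>
          (p ⬝ᵥ M *ᵥ (b *ᵥ u)).re) := by fun_prop
      have ht := ((hcont.tendsto _).comp hlim).comp hmap
      refine ge_of_tendsto ht ?_
      have hpos : ∀ᶠ x : ℝ in 𝓝[<] ω, 0 < x :=
        nhdsWithin_le_nhds (Ioi_mem_nhds h0)
      filter_upwards [hpos, self_mem_nhdsWithin, hmap.eventually (ev_reg a z)] with x hx1 hx2 hx3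
      simp only [Function.comp]
      rw [← hq]
      exact hre _ (im_nonpos A B C D hD _ (h2 x hx1 ((le_of_lt hx2).trans h1) hx3) u)
    have hz0 : z ≠ 0 := by simp [hz, h0.ne']
    have hcP : star u ᵥ* (c * Φ ω) = 0 := by
      have : z • (star u ᵥ* (c * Φ ω)) = 0 := by
        rw [← vecMul_vecMul, ← smul_vecMul, ← hp', vecMul_vecMul, hP0, vecMul_zero]
      exact (smul_eq_zero.1 this).resolve_left hz0
    have hKu : K *ᵥ u = 0 := by
      have e1 : star u ᵥ* K = 0 := by
        rw [hKe, vecMul_smul, ← vecMul_vecMul, hcP, zero_vecMul, smul_zero]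
      have e2 : star (K *ᵥ u) = 0 := by
        rw [star_mulVec, hKp.1.eq, e1]
      exact star_eq_zero.1 e2
    have hw : Φ ω *ᵥ (b *ᵥ u) = 0 := by
      apply obs_complex A C hobs z
      · have : (z • (1 : Matrix (Fin n) (Fin n) ℂ) - a) *ᵥ (Φ ω *ᵥ (b *ᵥ u)) = 0 := by
          rw [mulVec_mulVec, hP0, zero_mulVec]
        rw [sub_mulVec, smul_mulVec, one_mulVec] at this
        exact (sub_eq_zero.1 this).symm
      · rw [hKe, smul_mulVec] at hKu
        have := (smul_eq_zero.1 hKu).resolve_left Complex.I_ne_zero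
        rw [mulVec_mulVec, mulVec_mulVec]
        exact this
    rwa [sub_mulVec, one_mulVec, hw, sub_zero] at hA
  · have e := hq (z • (1 : Matrix (Fin n) (Fin n) ℂ) - a)⁻¹
    rw [Matrix.mul_nonsing_inv _ (reg_inv a z hs), one_mulVec] at e
    rw [← e]
    exact hre _ (im_nonpos A B C D hD _ (h2 ω h0 h1 hs) u)

theorem det_ne {n : ℕ} (A : Matrix (Fin n) (Fin n) ℝ) : (0 : ℂ) ∈ eigs A ↔ A.det = 0 := by
  unfold eigs
  rw [spectrum.zero_mem_iff, Matrix.isUnit_iff_isUnit_det, isUnit_iff_ne_zero, not_not]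
  have : (A.map Complex.ofReal).det = (A.det : ℂ) := by
    have := RingHom.map_det Complex.ofRealHom A
    exact this.symm
  rw [this]
  simp

theorem hfreq_all {n m : ℕ} (A : Matrix (Fin n) (Fin n) ℝ) (B : Matrix (Fin n) (Fin m) ℝ)
    (C : Matrix (Fin m) (Fin n) ℝ) (D : Matrix (Fin m) (Fin m) ℝ)
    (hobs : ∀ N : Submodule ℝ (Fin n → ℝ), (∀ u, Cᵀ *ᵥ u ∈ N) → (∀ y ∈ N, Aᵀ *ᵥ y ∈ N) → N = ⊤)
    (ωb : ℝ) (Φ : ℝ → Matrix (Fin n) (Fin n) ℂ)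
    (hΦ : ∀ ω : ℝ, 0 < ω → ω ≤ ωb → (Complex.I * ω) ∈ eigs A →
      Tendsto (fun s : ℂ =>
          (s - Complex.I * ω) • (s • (1 : Matrix (Fin n) (Fin n) ℂ) - A.map Complex.ofReal)⁻¹)
        (𝓝[≠] (Complex.I * ω)) (𝓝 (Φ ω)))
    (h : IsFFNI A B C D ωb) (σ : ℝ) (v : Fin n → ℂ) (u : Fin m → ℂ) (hσ : |σ| ≤ ωb)
    (hv : v ᵥ* (A.map Complex.ofReal) =
      (Complex.I * (σ : ℂ)) • (v - u ᵥ* (C.map Complex.ofReal))) :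
    0 ≤ (star v ⬝ᵥ (B.map Complex.ofReal) *ᵥ u).re := by
  have hreal : ∀ {k l : ℕ} (F : Matrix (Fin k) (Fin l) ℝ) (x : Fin k → ℂ),
      star (x ᵥ* F.map Complex.ofReal) = star x ᵥ* F.map Complex.ofReal := by
    intro k l F x
    ext i
    simp [vecMul, dotProduct]
  rcases lt_trichotomy σ 0 with h0 | h0 | h0
  · have hv' := congrArg star hv
    rw [hreal, star_smul, star_sub, hreal] at hv'
    refine freq_pos A B C D hobs ωb Φ hΦ h (-σ) (by linarith) ?_ (star v) u ?_
    · rwa [abs_of_neg h0] at hσ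
    · rw [hv']
      simp
  · have h1 : v = 0 := by
      have hu : IsUnit (A.map Complex.ofReal) := by
        by_contra hc
        exact (h.1 0 (by unfold eigs; rw [spectrum.zero_mem_iff]; exact hc)).1 rfl
      have hv' : v ᵥ* (A.map Complex.ofReal) = 0 := by rw [hv, h0]; simp
      have h2 : v ᵥ* (A.map Complex.ofReal * (A.map Complex.ofReal)⁻¹) = 0 := by
        rw [← vecMul_vecMul, hv', zero_vecMul]
      rwa [Matrix.mul_nonsing_inv _ ((Matrix.isUnit_iff_isUnit_det _).1 hu), vecMul_one] at h2
    simp [h1]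
  · have := freq_pos A B C D hobs ωb Φ hΦ h σ h0 (by rwa [abs_of_pos h0] at hσ) v (star u)
      (by rw [star_star]; exact hv)
    have e : star v ⬝ᵥ (B.map Complex.ofReal) *ᵥ u =
        star (v ⬝ᵥ (B.map Complex.ofReal) *ᵥ star u) := by
      rw [dotProduct_mulVec, dotProduct_mulVec, ← hreal, ← star_dotProduct_star, star_star,
        dotProduct_comm]
    rw [e]
    simpa using this

theorem psd_map {n : ℕ} (Z : Matrix (Fin n) (Fin n) ℝ) (hZ : Z.PosSemidef) :
    (Z.map Complex.ofReal).PosSemidef := by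
  obtain ⟨E, rfl⟩ := psd_factor _ hZ
  have : (Eᵀ * E).map Complex.ofReal = (E.map Complex.ofReal)ᴴ * E.map Complex.ofReal := by
    rw [cmap_mul]
    congr 1
    ext i j
    simp [conjTranspose_apply]
  rw [this]
  exact posSemidef_conjTranspose_mul_self _

theorem alg_id {ν μ : Type*} [Fintype ν] [Fintype μ] (L c : Matrix μ ν ℂ)
    (Lh ch : Matrix ν μ ℂ) (a ah y x : Matrix ν ν ℂ) (w wb : ℂ)
    (h1 : L * a = (Complex.I * w) • L - c) (h2 : ah * Lh = -((Complex.I * w) • Lh) - ch)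
    (h3 : c * x = 0) (h4 : x * ch = 0) :
    Complex.I • (L * (-(a * y * ch)) - (-(c * y * ah)) * Lh) =
      w • (L * (-(a * y + y * ah - a * x * ah + wb ^ 2 • x)) * Lh) +
        (w * (wb ^ 2 - w ^ 2)) • (L * x * Lh) := by
  have i1 : ∀ (T : Matrix ν μ ℂ), L * (a * T) = (Complex.I * w) • (L * T) - c * T := by
    intro T
    rw [← Matrix.mul_assoc, h1, Matrix.sub_mul, Matrix.smul_mul]
  have i2 : ∀ (T : Matrix ν μ ℂ), c * (x * T) = 0 := by
    intro T
    rw [← Matrix.mul_assoc, h3, Matrix.zero_mul]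
  simp only [Matrix.mul_neg, Matrix.neg_mul, Matrix.mul_add, Matrix.add_mul, Matrix.mul_sub,
    Matrix.sub_mul, Matrix.mul_assoc, Matrix.mul_smul, Matrix.smul_mul, i1, i2, h2, h4,
    Matrix.mul_zero, smul_zero, sub_zero, zero_sub, smul_sub, smul_neg, smul_add, smul_smul]
  have hI : Complex.I ^ 2 = -1 := Complex.I_sq
  match_scalars <;> first
    | ring1
    | linear_combination (-w) * hI
    | linear_combination (w ^ 3) * hI

theorem conv_psd {n m : ℕ} (A : Matrix (Fin n) (Fin n) ℝ) (B : Matrix (Fin n) (Fin m) ℝ)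
    (C : Matrix (Fin m) (Fin n) ℝ) (D : Matrix (Fin m) (Fin m) ℝ) (hD : D = Dᵀ)
    (ωb ω : ℝ) (h0 : 0 < ω) (h1 : ω ≤ ωb) (hs : (Complex.I * ω) ∉ eigs A)
    (Y X : Matrix (Fin n) (Fin n) ℝ) (hY : Yᵀ = Y) (hX : X.PosSemidef)
    (hN : (-(A * Y + Y * Aᵀ - A * X * Aᵀ + (ωb ^ 2) • X)).PosSemidef)
    (hB : B + A * Y * Cᵀ = 0) (hC : C * X = 0) :
    (Complex.I • (tf A B C D (Complex.I * ω) - (tf A B C D (Complex.I * ω))ᴴ)).PosSemidef := by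
  have hct : ∀ {k l : ℕ} (F : Matrix (Fin k) (Fin l) ℝ),
      (F.map Complex.ofReal)ᴴ = Fᵀ.map Complex.ofReal := by
    intro k l F
    ext i j
    simp [conjTranspose_apply]
  have hd : (D.map Complex.ofReal)ᴴ = D.map Complex.ofReal := by rw [hct, ← hD]
  have hXs : Xᵀ = X := by simpa using hX.1.eq
  have hCt : X * Cᵀ = 0 := by
    have := congrArg transpose hC
    rwa [transpose_mul, hXs, transpose_zero] at this
  have hB' : B = -(A * Y * Cᵀ) := eq_neg_of_add_eq_zero_left hB
  set z : ℂ := Complex.I * ω with hz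
  have hdet := reg_inv (A.map Complex.ofReal) z hs
  set a := A.map Complex.ofReal with ha
  set c := C.map Complex.ofReal with hc
  set M := (z • (1 : Matrix (Fin n) (Fin n) ℂ) - a)⁻¹ with hM
  have hMa : (c * M) * a = z • (c * M) - c := by
    have e := Matrix.nonsing_inv_mul _ hdet
    rw [← hM, Matrix.mul_sub, Matrix.mul_smul, Matrix.mul_one] at e
    have : M * a = z • M - 1 := by rw [← e]; abel
    rw [Matrix.mul_assoc, this, Matrix.mul_sub, Matrix.mul_smul, Matrix.mul_one]
  have hMh : aᴴ * (c * M)ᴴ = -(z • (c * M)ᴴ) - cᴴ := by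
    rw [← conjTranspose_mul, hMa, conjTranspose_sub, conjTranspose_smul]
    simp [hz]
  have hb : B.map Complex.ofReal = -(a * Y.map Complex.ofReal * cᴴ) := by
    rw [hc, hct, ha, ← cmap_mul, ← cmap_mul, hB']
    ext i j
    simp
  have hbh : (B.map Complex.ofReal)ᴴ = -(c * Y.map Complex.ofReal * aᴴ) := by
    rw [hb, conjTranspose_neg, conjTranspose_mul, conjTranspose_mul, conjTranspose_conjTranspose,
      hct Y, hY, Matrix.mul_assoc]
  have hcx : c * X.map Complex.ofReal = 0 := by
    rw [hc, ← cmap_mul, hC]; ext i j; simp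
  have hxc : X.map Complex.ofReal * cᴴ = 0 := by
    rw [hc, hct, ← cmap_mul, hCt]; ext i j; simp
  have hN0 : (-(A * Y + Y * Aᵀ - A * X * Aᵀ + (ωb ^ 2) • X)).map Complex.ofReal =
      -(a * Y.map Complex.ofReal + Y.map Complex.ofReal * aᴴ - a * X.map Complex.ofReal * aᴴ
        + (ωb : ℂ) ^ 2 • X.map Complex.ofReal) := by
    rw [ha, hct, ← cmap_mul, ← cmap_mul, ← cmap_mul, ← cmap_mul]
    ext i j
    simp
  have key := alg_id (c * M) c (c * M)ᴴ cᴴ a aᴴ (Y.map Complex.ofReal) (X.map Complex.ofReal)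
    (ω : ℂ) (ωb : ℂ) hMa hMh hcx hxc
  rw [← hb, ← hbh, ← conjTranspose_mul, ← hN0] at key
  unfold tf
  rw [conjTranspose_add, hd, add_sub_add_right_eq_sub, key]
  have p1 := (psd_map _ hN).mul_mul_conjTranspose_same (c * M)
  have p2 := (psd_map _ hX).mul_mul_conjTranspose_same (c * M)
  refine (p1.smul (by exact_mod_cast h0.le)).add (p2.smul ?_)
  have : 0 ≤ ω * (ωb ^ 2 - ω ^ 2) := by
    apply mul_nonneg h0.le
    nlinarith
  exact_mod_cast this

/-- The finite frequency Negative Imaginary Lemma (LMI form (4) of Theorem 8). -/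
theorem ffni_lemma {n m : ℕ}
    (A : Matrix (Fin n) (Fin n) ℝ) (B : Matrix (Fin n) (Fin m) ℝ)
    (C : Matrix (Fin m) (Fin n) ℝ) (D : Matrix (Fin m) (Fin m) ℝ)
    (hmin : IsMinimal A B C) (ωb : ℝ) (hωb : 0 < ωb)
    (hstable : ∀ μ ∈ eigs A, μ.re ≤ 0)
    (Φ : ℝ → Matrix (Fin n) (Fin n) ℂ)
    (hΦ : ∀ ω : ℝ, 0 < ω → ω ≤ ωb → (Complex.I * ω) ∈ eigs A →
      Tendsto (fun s : ℂ =>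
          (s - Complex.I * ω) • (s • (1 : Matrix (Fin n) (Fin n) ℂ) - A.map Complex.ofReal)⁻¹)
        (𝓝[≠] (Complex.I * ω)) (𝓝 (Φ ω))) :
    IsFFNI A B C D ωb ↔
      (A.det ≠ 0 ∧ D = Dᵀ ∧
        (∀ ω : ℝ, 0 < ω → ω ≤ ωb → (Complex.I * ω) ∈ eigs A →
          ((C * A).map Complex.ofReal * Φ ω * B.map Complex.ofReal).PosSemidef) ∧
        ∃ (Y X : Matrix (Fin n) (Fin n) ℝ), Yᵀ = Y ∧ X.PosSemidef ∧
          (-(A * Y + Y * Aᵀ - A * X * Aᵀ + (ωb ^ 2) • X)).PosSemidef ∧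
          B + A * Y * Cᵀ = 0 ∧ C * X = 0) := by
  have hres : ∀ ω : ℝ, 0 < ω → ω ≤ ωb → (Complex.I * ω) ∈ eigs A →
      (C * A).map Complex.ofReal * Φ ω * B.map Complex.ofReal =
        (ω : ℂ) • Complex.I • (C.map Complex.ofReal * Φ ω * B.map Complex.ofReal) := by
    intro ω h0 h1 hs
    have h := res_zero _ _ _ (hΦ ω h0 h1 hs)
    rw [Matrix.sub_mul, Matrix.smul_mul, Matrix.one_mul, sub_eq_zero] at h
    rw [cmap_mul, Matrix.mul_assoc (C.map Complex.ofReal), ← h, Matrix.mul_smul, Matrix.smul_mul,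
      smul_smul, mul_comm]
  constructor
  · intro h
    have hdet : A.det ≠ 0 := fun h0 => (h.1 0 ((det_ne A).2 h0)).1 rfl
    have hobs := obs_real A C hmin.2
    refine ⟨hdet, h.2.2.2, ?_, ?_⟩
    · intro ω h0 h1 hs
      obtain ⟨K, hK, hKp⟩ := h.2.2.1 ω h0 h1 hs
      have hKe := tendsto_nhds_unique hK (tf_tendsto A B C D _ _ (hΦ ω h0 h1 hs))
      rw [hres ω h0 h1 hs, ← hKe]
      exact hKp.smul (by exact_mod_cast h0.le)
    · exact lmi_exists A (isUnit_iff_ne_zero.2 hdet) B C hobs ωb hωb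
        (fun σ v u h1 h2 => hfreq_all A B C D hobs ωb Φ hΦ h σ v u h1 h2)
  · rintro ⟨hdet, hD, hP, Y, X, hY, hX, hN, hB, hC⟩
    refine ⟨?_, ?_, ?_, hD⟩
    · intro μ hμ
      refine ⟨?_, hstable μ hμ⟩
      rintro rfl
      exact hdet ((det_ne A).1 hμ)
    · intro ω h0 h1 hs
      exact conv_psd A B C D hD ωb ω h0 h1 hs Y X hY hX hN hB hC
    · intro ω h0 h1 hs
      refine ⟨_, tf_tendsto A B C D _ _ (hΦ ω h0 h1 hs), ?_⟩
      have h := hP ω h0 h1 hs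
      rw [hres ω h0 h1 hs] at h
      have h2 := h.smul (a := ((ω⁻¹ : ℝ) : ℂ)) (by exact_mod_cast (inv_pos.2 h0).le)
      rw [smul_smul, ← Complex.ofReal_mul, inv_mul_cancel₀ h0.ne', Complex.ofReal_one,
        one_smul] at h2
      exact h2
end

section
/- Let (A,B,C,D) be a minimal state-space realization of a SISO transfer function G(s) = C(sI − A)⁻¹B + D (A ∈ ℝ^{n×n}, B ∈ ℝ^{n×1}, C ∈ ℝ^{1×n}, D ∈ ℝ) with CB > 0. Assume: every eigenvalue of A has nonpositive real part, 0 is not an eigenvalue of A, every purely imaginary eigenvalue of A is simple (algebraic multiplicity one), and G has no zeros in the open right half-plane, i.e., G(s) ≠ 0 for every s ∈ ℂ with Re(s) > 0. Then G is negative imaginary if and only if: (1) the matrix (I − (1/(CB))·BC)·A² has no eigenvalue of odd algebraic multiplicity on the open negative real axis (−∞, 0); and (2) for every ω₀ ∈ ℝ, ω₀ ≠ 0, such that jω₀ is an eigenvalue of A, the residue lim_{s→jω₀}(s − jω₀)·s·(G(s) − D) exists and is a positive real number. -/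
open Matrix Filter Topology ComplexOrder

/-- Scalar transfer function of a SISO system `(A,B,C,D)`. -/
noncomputable def sisoTf {n : ℕ} (A : Matrix (Fin n) (Fin n) ℝ) (B : Matrix (Fin n) (Fin 1) ℝ)
    (C : Matrix (Fin 1) (Fin n) ℝ) (D : ℝ) (s : ℂ) : ℂ :=
  (C.map Complex.ofReal * (s • (1 : Matrix (Fin n) (Fin n) ℂ) - A.map Complex.ofReal)⁻¹ *
      B.map Complex.ofReal) 0 0 + D

/-- A SISO system is negative imaginary. -/
noncomputable def SisoNI {n : ℕ} (A : Matrix (Fin n) (Fin n) ℝ) (B : Matrix (Fin n) (Fin 1) ℝ)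
    (C : Matrix (Fin 1) (Fin n) ℝ) (D : ℝ) : Prop :=
  (∀ μ ∈ eigs A, μ ≠ 0 ∧ μ.re ≤ 0) ∧
  (∀ ω : ℝ, 0 < ω → (Complex.I * ω) ∉ eigs A → (sisoTf A B C D (Complex.I * ω)).im ≤ 0) ∧
  (∀ ω : ℝ, 0 < ω → (Complex.I * ω) ∈ eigs A →
    ∃ k : ℝ, 0 ≤ k ∧
      Filter.Tendsto (fun s : ℂ => (s - Complex.I * ω) * (Complex.I * sisoTf A B C D s))
        (nhdsWithin (Complex.I * ω) {Complex.I * ω}ᶜ) (nhds (k : ℂ)))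


lemma aux_alg {n : ℕ} (a : Matrix (Fin n) (Fin n) ℂ) (b : Matrix (Fin n) (Fin 1) ℂ)
    (c : Matrix (Fin 1) (Fin n) ℂ) (s κ : ℂ) (hκ : (c * b) 0 0 = κ) (hκ0 : κ ≠ 0)
    (h1 : IsUnit (s • (1 : Matrix (Fin n) (Fin n) ℂ) - a).det)
    (h2 : IsUnit (s • (1 : Matrix (Fin n) (Fin n) ℂ) + a).det) :
    ((s ^ 2) • (1 : Matrix (Fin n) (Fin n) ℂ) - (1 - κ⁻¹ • (b * c)) * a ^ 2).det * κ =
      (s • (1 : Matrix (Fin n) (Fin n) ℂ) - a).det * (s • (1 : Matrix (Fin n) (Fin n) ℂ) + a).det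
      * (s / 2 * ((c * (s • (1 : Matrix (Fin n) (Fin n) ℂ) - a)⁻¹ * b) 0 0
        + (c * (s • (1 : Matrix (Fin n) (Fin n) ℂ) + a)⁻¹ * b) 0 0)) := by
  set U := s • (1 : Matrix (Fin n) (Fin n) ℂ) - a with hU
  set V := s • (1 : Matrix (Fin n) (Fin n) ℂ) + a with hV
  have hUX : U * U⁻¹ = 1 := Matrix.mul_nonsing_inv _ h1
  have hYV : V⁻¹ * V = 1 := Matrix.nonsing_inv_mul _ h2
  have hVY : V * V⁻¹ = 1 := Matrix.mul_nonsing_inv _ h2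
  set X := U⁻¹
  set Y := V⁻¹
  have hP : U * V = (s ^ 2) • (1 : Matrix (Fin n) (Fin n) ℂ) - a ^ 2 := by
    simp only [hU, hV, sub_mul, mul_add, smul_mul_assoc, one_mul, mul_smul_comm, mul_one, pow_two, smul_smul, smul_sub]
    abel
  have hXY : X + Y = (2 * s) • (Y * X) := by
    have : (2 * s) • (1 : Matrix (Fin n) (Fin n) ℂ) = V + U := by
      rw [hU, hV, two_mul, add_smul]; abel
    calc X + Y = Y * (V + U) * X := by
          rw [mul_add, add_mul, hYV, one_mul, mul_assoc, hUX, mul_one]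
      _ = _ := by rw [← this]; simp
  have hPZ : (U * V) * (Y * X) = 1 := by
    rw [mul_assoc, ← mul_assoc V, hVY, one_mul, hUX]
  have ha2 : a ^ 2 * (Y * X) = (s ^ 2) • (Y * X) - 1 := by
    have : a ^ 2 = (s ^ 2) • (1 : Matrix (Fin n) (Fin n) ℂ) - U * V := by rw [hP]; abel
    rw [this, sub_mul, hPZ]; simp
  have hfac : (s ^ 2) • (1 : Matrix (Fin n) (Fin n) ℂ) - (1 - κ⁻¹ • (b * c)) * a ^ 2
      = (U * V) * (1 + (Y * X * (κ⁻¹ • b)) * (c * a ^ 2)) := by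
    have e : (U * V) * ((Y * X * (κ⁻¹ • b)) * (c * a ^ 2)) = κ⁻¹ • (b * c * a ^ 2) := by
      rw [← Matrix.mul_assoc, ← Matrix.mul_assoc (U * V), hPZ, Matrix.one_mul, Matrix.smul_mul,
        Matrix.mul_assoc]
    rw [mul_add, mul_one, e, hP, sub_mul, one_mul, Matrix.smul_mul]
    abel
  rw [hfac, Matrix.det_mul, Matrix.det_mul, Matrix.det_one_add_mul_comm]
  have e1 : c * a ^ 2 * (Y * X * (κ⁻¹ • b)) = κ⁻¹ • ((s ^ 2) • (c * (Y * X) * b) - c * b) := by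
    rw [Matrix.mul_smul, Matrix.mul_smul]
    congr 1
    rw [← Matrix.mul_assoc, Matrix.mul_assoc c, ha2]
    simp [Matrix.mul_sub, Matrix.sub_mul]
  have e2 : (c * X * b) 0 0 + (c * Y * b) 0 0 = 2 * s * (c * (Y * X) * b) 0 0 := by
    rw [← Matrix.add_apply, ← Matrix.add_mul, ← Matrix.mul_add, hXY]
    simp
  rw [e1, e2]
  simp [hκ]
  field_simp
  ring

open Polynomial in
lemma poly_noroot (q : ℝ[X]) (hq : q.Monic) (h : ∀ x < 0, q.eval x ≠ 0) :
    ∀ x < 0, 0 < (-1) ^ q.natDegree * q.eval x := by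
  by_contra! hc
  obtain ⟨x, hx, hle⟩ := hc
  set p : ℝ[X] := C ((-1) ^ q.natDegree) * q.comp (-X) with hp
  have hev : ∀ y, p.eval y = (-1) ^ q.natDegree * q.eval (-y) := by intro y; simp [hp]
  have hnd : (q.comp (-X)).natDegree = q.natDegree := by simp [natDegree_comp]
  by_cases h0 : q.natDegree = 0
  · have := Polynomial.eq_one_of_monic_natDegree_zero hq h0
    simp [this] at hle
    linarith
  have hlead : p.leadingCoeff = 1 := by
    rw [hp, leadingCoeff_mul, leadingCoeff_C, leadingCoeff_comp (by simp)]
    simp [hq.leadingCoeff, ← mul_pow]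
  have hdeg : 0 < p.degree := by
    rw [← natDegree_pos_iff_degree_pos, hp, natDegree_C_mul (by simp), hnd]; omega
  have ht := p.tendsto_atTop_of_leadingCoeff_nonneg hdeg (by rw [hlead]; norm_num)
  obtain ⟨y, hy1, hy2⟩ := ((ht.eventually_gt_atTop 0).and (eventually_ge_atTop (-x))).exists
  have := intermediate_value_Icc (f := fun y => p.eval y) hy2 p.continuous.continuousOn
  obtain ⟨z, hz, hz0⟩ := this (show (0:ℝ) ∈ _ from ⟨by simpa [hev] using hle, hy1.le⟩)
  simp only [hev] at hz0
  exact h (-z) (by linarith [hz.1]) (by simpa using hz0)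

open Polynomial in
lemma poly_even (d : ℕ) : ∀ (q : ℝ[X]), q.natDegree = d → q.Monic → (∀ x < 0, Even (q.rootMultiplicity x)) →
    ∀ x < 0, 0 ≤ (-1) ^ q.natDegree * q.eval x := by
  induction d using Nat.strong_induction_on with
  | _ d ih =>
  intro q hd hq he
  by_cases h : ∀ x < 0, q.eval x ≠ 0
  · exact fun x hx => (poly_noroot q hq h x hx).le
  push Not at h
  obtain ⟨y, hy, hy0⟩ := h
  have hpos : 0 < q.rootMultiplicity y := (rootMultiplicity_pos hq.ne_zero).2 hy0
  have h2 : 2 ≤ q.rootMultiplicity y := by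
    obtain ⟨k, hk⟩ := he y hy; omega
  obtain ⟨r, hr⟩ := (le_rootMultiplicity_iff hq.ne_zero).1 h2
  have hX : ((X - C y) ^ 2 : ℝ[X]).Monic := (monic_X_sub_C y).pow 2
  have hrm : r.Monic := hX.of_mul_monic_left (hr ▸ hq)
  have hnd : q.natDegree = 2 + r.natDegree := by
    rw [hr, hX.natDegree_mul hrm]; simp [natDegree_pow]
  intro x hx
  have := ih r.natDegree (by omega) r rfl hrm (by
    intro z hz
    have := he z hz
    rw [hr, rootMultiplicity_mul (hr ▸ hq.ne_zero)] at this
    by_cases hzy : z = y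
    · subst hzy
      rw [rootMultiplicity_X_sub_C_pow] at this
      obtain ⟨k, hk⟩ := this
      exact ⟨k - 1, by omega⟩
    · rw [rootMultiplicity_eq_zero (p := (X - C y) ^ 2)] at this
      · simpa using this
      · simp [sub_eq_zero, hzy]) x hx
  rw [hnd, hr, pow_add]
  simp only [eval_mul, eval_pow, eval_sub, eval_X, eval_C]
  nlinarith [mul_nonneg (sq_nonneg (x - y)) this]

open Polynomial in
lemma poly_odd (q : ℝ[X]) (hq : q ≠ 0) (e : ℝ) (x : ℝ) (he : e ≠ 0)
    (h : ∀ᶠ y in 𝓝[≠] x, 0 ≤ e * q.eval y) : Even (q.rootMultiplicity x) := by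
  by_contra hodd
  rw [Nat.not_even_iff_odd] at hodd
  obtain ⟨r, hr, hr2⟩ := exists_eq_pow_rootMultiplicity_mul_and_not_dvd q hq x
  set m := q.rootMultiplicity x
  rw [dvd_iff_isRoot] at hr2
  have hrx : e * r.eval x ≠ 0 := mul_ne_zero he hr2
  have hcont : Tendsto (fun y => e * r.eval y) (𝓝 x) (𝓝 (e * r.eval x)) :=
    (continuous_const.mul r.continuous).tendsto x
  have hev : ∀ y, e * q.eval y = (y - x) ^ m * (e * r.eval y) := by
    intro y; rw [hr]; simp; ring
  simp only [hev] at h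
  rcases lt_or_gt_of_ne hrx with hl | hl
  · have h1 := (hcont.eventually_lt_const hl)
    have := ((h.filter_mono (nhdsGT_le_nhdsNE x)).and ((h1.filter_mono nhdsWithin_le_nhds).and self_mem_nhdsWithin)).exists
    obtain ⟨y, h1, h2, h3⟩ := this
    have : 0 < (y - x) ^ m := pow_pos (sub_pos.2 h3) _
    nlinarith
  · have h1 := (hcont.eventually_const_lt hl)
    have := ((h.filter_mono (nhdsLT_le_nhdsNE x)).and ((h1.filter_mono nhdsWithin_le_nhds).and self_mem_nhdsWithin)).exists
    obtain ⟨y, h1, h2, h3⟩ := this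
    have : (y - x) ^ m < 0 := hodd.pow_neg (sub_neg.2 h3)
    nlinarith
lemma aux_rinv {n : ℕ} {p : Type*} [Fintype p] [DecidableEq p] (W : Matrix (Fin n) p ℝ)
    (h : W.rank = n) : ∃ R : Matrix p (Fin n) ℝ, W * R = 1 := by
  rw [← Matrix.mulVec_surjective_iff_exists_right_inverse]
  have : LinearMap.range W.mulVecLin = ⊤ := by
    apply Submodule.eq_top_of_finrank_eq
    rw [← Matrix.rank, h]; simp
  exact LinearMap.range_eq_top.1 this

lemma map_mul' {l m n : Type*} [Fintype m] (M : Matrix l m ℝ) (N : Matrix m n ℝ) :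
    (M * N).map Complex.ofReal = M.map Complex.ofReal * N.map Complex.ofReal :=
  Matrix.map_mul (f := Complex.ofRealHom)

lemma map_one' {n : ℕ} : (1 : Matrix (Fin n) (Fin n) ℝ).map Complex.ofReal = 1 :=
  Matrix.map_one _ (by simp) (by simp)

lemma map_pow' {n : ℕ} (M : Matrix (Fin n) (Fin n) ℝ) (k : ℕ) :
    (M ^ k).map Complex.ofReal = M.map Complex.ofReal ^ k := 
  map_pow (Complex.ofRealHom.mapMatrix) M k

lemma aux_ctrl {n : ℕ} (A : Matrix (Fin n) (Fin n) ℝ) (B : Matrix (Fin n) (Fin 1) ℝ)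
    (h : (Matrix.of fun (i : Fin n) (p : Fin n × Fin 1) => (A ^ (p.1 : ℕ) * B) i p.2).rank = n)
    {m : ℕ} (P : Matrix (Fin m) (Fin n) ℂ)
    (hP : ∀ k : ℕ, P * (A.map Complex.ofReal ^ k * B.map Complex.ofReal) = 0) : P = 0 := by
  obtain ⟨R, hR⟩ := aux_rinv _ h
  have h2 := congrArg (fun M => M.map Complex.ofReal) hR
  simp only [map_mul', map_one'] at h2
  rw [← Matrix.mul_one P, ← h2, ← Matrix.mul_assoc]
  convert Matrix.zero_mul _
  ext i p
  have := congrFun (congrFun (hP p.1) i) p.2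
  rw [← map_pow', ← map_mul'] at this
  simpa [Matrix.mul_apply] using this

lemma aux_obs {n : ℕ} (A : Matrix (Fin n) (Fin n) ℝ) (C : Matrix (Fin 1) (Fin n) ℝ)
    (h : (Matrix.of fun (p : Fin n × Fin 1) (i : Fin n) => (C * A ^ (p.1 : ℕ)) p.2 i).rank = n)
    {m : ℕ} (P : Matrix (Fin n) (Fin m) ℂ)
    (hP : ∀ k : ℕ, (C.map Complex.ofReal * A.map Complex.ofReal ^ k) * P = 0) : P = 0 := by
  have := aux_ctrl Aᵀ Cᵀ (by
    rw [← Matrix.rank_transpose] at h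
    refine Eq.trans (congrArg Matrix.rank ?_) h
    ext i p
    simp [← Matrix.transpose_pow, ← Matrix.transpose_mul]) Pᵀ (by
    intro k
    have := congrArg Matrix.transpose (hP k)
    simpa [Matrix.transpose_mul, Matrix.transpose_pow, Matrix.transpose_map] using this)
  simpa using this

open Polynomial in
lemma aux_adj {n : ℕ} (a : Matrix (Fin n) (Fin n) ℂ) (l : ℂ) (r : ℂ[X])
    (hr : a.charpoly = (X - C l) * r) (hrl : r.eval l ≠ 0) :
    (l • (1 : Matrix (Fin n) (Fin n) ℂ) - a).adjugate ≠ 0 := by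
  intro h0
  have hcm : (evalRingHom l).mapMatrix a.charmatrix = l • (1 : Matrix (Fin n) (Fin n) ℂ) - a := by
    ext i j
    by_cases hij : i = j
    · subst hij; simp [charmatrix_apply]
    · simp [charmatrix_apply, hij]
  have h1 : (evalRingHom l).mapMatrix a.charmatrix.adjugate = 0 := by
    rw [RingHom.map_adjugate, hcm, h0]
  have h2 : ∀ i j, ∃ q : ℂ[X], a.charmatrix.adjugate i j = (X - C l) * q := by
    intro i j
    have := congrFun (congrFun h1 i) j
    simp only [RingHom.mapMatrix_apply, Matrix.map_apply, coe_evalRingHom, Matrix.zero_apply] at this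
    exact dvd_iff_isRoot.2 this
  choose Q hQ using h2
  have h3 : a.charmatrix.adjugate = (X - C l) • (Matrix.of Q) := by
    ext1 i j; simp [hQ]
  have h4 := a.charmatrix.mul_adjugate
  rw [h3, ← Matrix.charpoly, hr, Matrix.mul_smul, mul_smul] at h4
  have h5 : a.charmatrix * Matrix.of Q = r • 1 := by
    exact smul_right_injective _ (X_sub_C_ne_zero l) h4
  have h6 := congrArg (fun M => ((evalRingHom l).mapMatrix M).det) h5
  simp only [map_mul, hcm, Matrix.det_mul] at h6
  have h7 : (l • (1 : Matrix (Fin n) (Fin n) ℂ) - a).det = 0 := by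
    rw [← hcm, ← RingHom.map_det, ← Matrix.charpoly, hr]; simp
  rw [h7, zero_mul, ← RingHom.map_det, Matrix.det_smul] at h6
  simp at h6
  exact pow_ne_zero n hrl h6.symm
lemma tf_eq {n : ℕ} (A : Matrix (Fin n) (Fin n) ℝ) (B : Matrix (Fin n) (Fin 1) ℝ)
    (C : Matrix (Fin 1) (Fin n) ℝ) (D : ℝ) (s : ℂ) :
    sisoTf A B C D s = (C.map Complex.ofReal *
      (s • (1 : Matrix (Fin n) (Fin n) ℂ) - A.map Complex.ofReal).adjugate *
      B.map Complex.ofReal) 0 0 / (s • (1 : Matrix (Fin n) (Fin n) ℂ) - A.map Complex.ofReal).det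
      + D := by
  rw [sisoTf, Matrix.inv_def, Ring.inverse_eq_inv']
  simp [div_eq_inv_mul]

lemma map_conj {m n : ℕ} (M : Matrix (Fin m) (Fin n) ℝ) :
    (M.map Complex.ofReal).map (starRingEnd ℂ) = M.map Complex.ofReal := by
  ext i j; simp

lemma conj_mat {n : ℕ} (A : Matrix (Fin n) (Fin n) ℝ) (s : ℂ) :
    (starRingEnd ℂ).mapMatrix (s • (1 : Matrix (Fin n) (Fin n) ℂ) - A.map Complex.ofReal) =
    (starRingEnd ℂ s) • (1 : Matrix (Fin n) (Fin n) ℂ) - A.map Complex.ofReal := by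
  ext i j
  by_cases h : i = j
  · subst h; simp
  · simp [h]

lemma det_conj {n : ℕ} (A : Matrix (Fin n) (Fin n) ℝ) (s : ℂ) :
    ((starRingEnd ℂ s) • (1 : Matrix (Fin n) (Fin n) ℂ) - A.map Complex.ofReal).det =
    starRingEnd ℂ (s • (1 : Matrix (Fin n) (Fin n) ℂ) - A.map Complex.ofReal).det := by
  rw [RingHom.map_det, conj_mat]

lemma tf_conj {n : ℕ} (A : Matrix (Fin n) (Fin n) ℝ) (B : Matrix (Fin n) (Fin 1) ℝ)
    (C : Matrix (Fin 1) (Fin n) ℝ) (D : ℝ) (s : ℂ) :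
    sisoTf A B C D (starRingEnd ℂ s) = starRingEnd ℂ (sisoTf A B C D s) := by
  rw [tf_eq, tf_eq, map_add, map_div₀, det_conj, ← conj_mat, ← RingHom.map_adjugate, Complex.conj_ofReal]
  congr 2
  conv_lhs => rw [← map_conj C, ← map_conj B]
  rw [RingHom.mapMatrix_apply, ← Matrix.map_mul, ← Matrix.map_mul]
  rfl

lemma mem_eigs {n : ℕ} (A : Matrix (Fin n) (Fin n) ℝ) (s : ℂ) :
    s ∈ eigs A ↔ (s • (1 : Matrix (Fin n) (Fin n) ℂ) - A.map Complex.ofReal).det = 0 := by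
  rw [eigs, Matrix.mem_spectrum_iff_isRoot_charpoly, Polynomial.IsRoot, Matrix.eval_charpoly,
    Matrix.smul_one_eq_diagonal]
  rfl

lemma eigs_conj {n : ℕ} (A : Matrix (Fin n) (Fin n) ℝ) (s : ℂ) (h : s ∈ eigs A) :
    starRingEnd ℂ s ∈ eigs A := by
  rw [mem_eigs] at *
  rw [det_conj, h, map_zero]

lemma conj_I_mul (ω : ℝ) : starRingEnd ℂ (Complex.I * ω) = Complex.I * ((-ω : ℝ) : ℂ) := by
  simp

lemma residue_lemma {n : ℕ} (A : Matrix (Fin n) (Fin n) ℝ) (B : Matrix (Fin n) (Fin 1) ℝ)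
    (C : Matrix (Fin 1) (Fin n) ℝ) (D : ℝ) (hmin : IsMinimal A B C) (l : ℂ)
    (hs : (A.map Complex.ofReal).charpoly.rootMultiplicity l = 1) :
    ∃ ρ : ℂ, ρ ≠ 0 ∧ Tendsto (fun s : ℂ => (s - l) * (sisoTf A B C D s - D)) (𝓝[≠] l) (𝓝 ρ) := by
  obtain ⟨hc, ho⟩ := hmin
  set a := A.map Complex.ofReal with ha
  set b := B.map Complex.ofReal with hb
  set c := C.map Complex.ofReal with hcc
  obtain ⟨r, hr, hr2⟩ := Polynomial.exists_eq_pow_rootMultiplicity_mul_and_not_dvd a.charpoly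
    a.charpoly_monic.ne_zero l
  rw [hs, pow_one] at hr
  rw [Polynomial.dvd_iff_isRoot, Polynomial.IsRoot] at hr2
  have hdet : ∀ s : ℂ, (s • (1 : Matrix (Fin n) (Fin n) ℂ) - a).det = (s - l) * r.eval s := by
    intro s
    have := Matrix.eval_charpoly a s
    rw [hr, Matrix.scalar_apply, ← Matrix.smul_one_eq_diagonal] at this
    rw [← this]; simp
  set P := (l • (1 : Matrix (Fin n) (Fin n) ℂ) - a).adjugate with hP
  have hP0 : P ≠ 0 := aux_adj a l r hr hr2
  have hdl : (l • (1 : Matrix (Fin n) (Fin n) ℂ) - a).det = 0 := by rw [hdet]; simp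
  have e1 : a * P = l • P := by
    have := (l • (1 : Matrix (Fin n) (Fin n) ℂ) - a).mul_adjugate
    rw [hdl, zero_smul, ← hP, sub_mul, sub_eq_zero] at this
    rw [← this]; simp
  have e2 : P * a = l • P := by
    have := (l • (1 : Matrix (Fin n) (Fin n) ℂ) - a).adjugate_mul
    rw [hdl, zero_smul, ← hP, mul_sub, sub_eq_zero] at this
    rw [← this]; simp
  have e1k : ∀ k : ℕ, a ^ k * P = l ^ k • P := by
    intro k
    induction k with
    | zero => simp
    | succ k ih => rw [pow_succ, mul_assoc, e1, mul_smul_comm, ih, smul_smul, pow_succ, mul_comm]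
  have e2k : ∀ k : ℕ, P * a ^ k = l ^ k • P := by
    intro k
    induction k with
    | zero => simp
    | succ k ih => rw [pow_succ, ← mul_assoc, ih, smul_mul_assoc, e2, smul_smul, pow_succ]
  have hN : (c * P * b) 0 0 ≠ 0 := by
    intro h0
    have h0' : c * P * b = 0 := by
      ext i j; rw [Subsingleton.elim i 0, Subsingleton.elim j 0, h0]; rfl
    have hy : P * b = 0 := by
      apply aux_obs A C ho
      intro k
      rw [← ha, ← hcc, Matrix.mul_assoc, ← Matrix.mul_assoc (a ^ k), e1k, Matrix.smul_mul,
        Matrix.mul_smul, ← Matrix.mul_assoc, h0', smul_zero]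
    apply hP0
    apply aux_ctrl A B hc
    intro k
    rw [← ha, ← hb, ← Matrix.mul_assoc, e2k, Matrix.smul_mul, hy, smul_zero]
  refine ⟨(c * P * b) 0 0 / r.eval l, div_ne_zero hN hr2, ?_⟩
  have hcont : Continuous (fun s : ℂ =>
      (c * (s • (1 : Matrix (Fin n) (Fin n) ℂ) - a).adjugate * b) 0 0) := by
    have h1 : Continuous (fun s : ℂ => (s • (1 : Matrix (Fin n) (Fin n) ℂ) - a)) := by fun_prop
    have h2 : Continuous (fun s : ℂ =>
      (c * (s • (1 : Matrix (Fin n) (Fin n) ℂ) - a).adjugate * b)) :=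
      (continuous_const.matrix_mul h1.matrix_adjugate).matrix_mul continuous_const
    exact h2.matrix_elem 0 0
  have ht := ((hcont.tendsto l).div (r.continuous.tendsto l) hr2).mono_left
    (nhdsWithin_le_nhds (s := {l}ᶜ))
  refine ht.congr' ?_
  filter_upwards [self_mem_nhdsWithin] with s hs
  have hs' : s - l ≠ 0 := sub_ne_zero.2 hs
  rw [tf_eq, ← ha, ← hb, ← hcc, hdet, add_sub_cancel_right, ← mul_div_assoc, mul_div_mul_left _ _ hs']
  rfl

lemma key_identity {n : ℕ} (A : Matrix (Fin n) (Fin n) ℝ) (B : Matrix (Fin n) (Fin 1) ℝ)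
    (C : Matrix (Fin 1) (Fin n) ℝ) (D : ℝ) (hCB : 0 < (C * B) 0 0) (ω : ℝ)
    (h : Complex.I * ω ∉ eigs A) :
    ∃ t : ℝ, 0 < t ∧
      ((1 - (1 / ((C * B) 0 0)) • (B * C)) * A ^ 2).charpoly.eval (-ω ^ 2) * (C * B) 0 0 =
      (-1) ^ n * t * (-ω * (sisoTf A B C D (Complex.I * ω)).im) := by
  set s : ℂ := Complex.I * ω with hs
  have hss : starRingEnd ℂ s = -s := by simp [hs]
  set a := A.map Complex.ofReal with ha
  set b := B.map Complex.ofReal with hb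
  set c := C.map Complex.ofReal with hcc
  have h1 : (s • (1 : Matrix (Fin n) (Fin n) ℂ) - a).det ≠ 0 := fun h' => h ((mem_eigs A s).2 h')
  have hVeq : s • (1 : Matrix (Fin n) (Fin n) ℂ) + a
      = -((starRingEnd ℂ s) • (1 : Matrix (Fin n) (Fin n) ℂ) - a) := by
    rw [hss, neg_smul]; abel
  have hV : (s • (1 : Matrix (Fin n) (Fin n) ℂ) + a).det =
      (-1) ^ n * starRingEnd ℂ (s • (1 : Matrix (Fin n) (Fin n) ℂ) - a).det := by
    rw [hVeq, Matrix.det_neg, ha, det_conj]; simp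
  have h2 : (s • (1 : Matrix (Fin n) (Fin n) ℂ) + a).det ≠ 0 := by
    rw [hV]; exact mul_ne_zero (by simp) (by simpa using h1)
  have hκ : (c * b) 0 0 = (((C * B) 0 0 : ℝ) : ℂ) := by
    rw [hcc, hb, ← map_mul']; rfl
  have key := aux_alg a b c s _ hκ (by exact_mod_cast hCB.ne') h1.isUnit h2.isUnit
  refine ⟨Complex.normSq (s • (1 : Matrix (Fin n) (Fin n) ℂ) - a).det, Complex.normSq_pos.2 h1, ?_⟩
  have hX : (c * (s • (1 : Matrix (Fin n) (Fin n) ℂ) - a)⁻¹ * b) 0 0 = sisoTf A B C D s - D := by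
    rw [sisoTf]; simp [ha, hb, hcc]
  have hY : (c * (s • (1 : Matrix (Fin n) (Fin n) ℂ) + a)⁻¹ * b) 0 0
      = - (starRingEnd ℂ (sisoTf A B C D s) - D) := by
    have hi : (s • (1 : Matrix (Fin n) (Fin n) ℂ) + a)⁻¹ = 
       -((starRingEnd ℂ s) • (1 : Matrix (Fin n) (Fin n) ℂ) - a)⁻¹ := by
      apply Matrix.inv_eq_right_inv
      rw [hVeq, neg_mul_neg, Matrix.mul_nonsing_inv]
      rw [hVeq, Matrix.det_neg] at h2
      exact (right_ne_zero_of_mul h2).isUnit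
    rw [hi, ← tf_conj, sisoTf]; simp [ha, hb, hcc]
  have hM : (s ^ 2 • (1 : Matrix (Fin n) (Fin n) ℂ)
      - (1 - ((((C * B) 0 0 : ℝ) : ℂ))⁻¹ • (b * c)) * a ^ 2).det =
      ((((1 - (1 / ((C * B) 0 0)) • (B * C)) * A ^ 2).charpoly.eval (-ω ^ 2) : ℝ) : ℂ) := by
    rw [Matrix.eval_charpoly]
    change _ = Complex.ofRealHom _
    rw [RingHom.map_det]
    congr 1
    have e : (1 - ((((C * B) 0 0 : ℝ) : ℂ))⁻¹ • (b * c)) * a ^ 2 =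
        ((1 - (1 / ((C * B) 0 0)) • (B * C)) * A ^ 2).map Complex.ofReal := by
      rw [map_mul', map_pow', hb, hcc, ← map_mul']
      congr 1
      ext i j
      by_cases hij : i = j
      · subst hij; simp
      · simp [hij]
    rw [e]
    ext i j
    have hs2 : s ^ 2 = ((-ω ^ 2 : ℝ) : ℂ) := by rw [hs, mul_pow]; simp
    rw [hs2]
    by_cases hij : i = j
    · subst hij; simp
    · simp [hij]
  rw [hM, hX, hY, hV] at key
  apply Complex.ofReal_injective
  push_cast
  rw [key, ← Complex.mul_conj]
  set g := sisoTf A B C D s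
  have hg : g - starRingEnd ℂ g = 2 * Complex.I * g.im := by
    rw [Complex.sub_conj]; push_cast; ring
  have : s / 2 * (g - D + -(starRingEnd ℂ g - D)) = -ω * g.im := by
    have : g - D + -(starRingEnd ℂ g - D) = g - starRingEnd ℂ g := by ring
    rw [this, hg, hs]
    linear_combination (ω * g.im) * Complex.I_mul_I
  rw [this]; ring

/-- Eigenvalue/residue test for the NI property of a SISO system. -/
theorem siso_ni_test {n : ℕ}
    (A : Matrix (Fin n) (Fin n) ℝ) (B : Matrix (Fin n) (Fin 1) ℝ)
    (C : Matrix (Fin 1) (Fin n) ℝ) (D : ℝ)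
    (hmin : IsMinimal A B C) (hCB : 0 < (C * B) 0 0)
    (hstable : ∀ μ ∈ eigs A, μ.re ≤ 0) (h0 : (0 : ℂ) ∉ eigs A)
    (hsimple : ∀ ω : ℝ, (Complex.I * ω) ∈ eigs A →
      (A.map Complex.ofReal).charpoly.rootMultiplicity (Complex.I * ω) = 1)
    (hzeros : ∀ s : ℂ, 0 < s.re → sisoTf A B C D s ≠ 0) :
    SisoNI A B C D ↔
      ((∀ x : ℝ, x < 0 →
          Even ((((1 - (1 / ((C * B) 0 0)) • (B * C)) * A ^ 2).map
              Complex.ofReal).charpoly.rootMultiplicity (x : ℂ))) ∧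
        (∀ ω₀ : ℝ, ω₀ ≠ 0 → (Complex.I * ω₀) ∈ eigs A →
          ∃ r : ℝ, 0 < r ∧
            Filter.Tendsto (fun s : ℂ =>
                (s - Complex.I * ω₀) * (s * (sisoTf A B C D s - D)))
              (nhdsWithin (Complex.I * ω₀) {Complex.I * ω₀}ᶜ) (nhds (r : ℂ)))) := by
  have hq1 : ∀ x : ℝ, (((1 - (1 / ((C * B) 0 0)) • (B * C)) * A ^ 2).map
      Complex.ofReal).charpoly.rootMultiplicity (x : ℂ) =
      ((1 - (1 / ((C * B) 0 0)) • (B * C)) * A ^ 2).charpoly.rootMultiplicity x := by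
    intro x
    have := Matrix.charpoly_map ((1 - (1 / ((C * B) 0 0)) • (B * C)) * A ^ 2) Complex.ofRealHom
    change (Matrix.map _ Complex.ofReal).charpoly = _ at this
    rw [this]
    exact (Polynomial.eq_rootMultiplicity_map Complex.ofReal_injective x).symm
  simp only [hq1]
  have hkey := fun ω => key_identity A B C D hCB ω
  set q := ((1 - (1 / ((C * B) 0 0)) • (B * C)) * A ^ 2).charpoly with hq
  have hqm : q.Monic := Matrix.charpoly_monic _
  have hqd : q.natDegree = n := by rw [hq, Matrix.charpoly_natDegree_eq_dim]; simp
  have hres : ∀ ω : ℝ, Complex.I * ω ∈ eigs A → ∃ ρ : ℂ, ρ ≠ 0 ∧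
      Tendsto (fun s : ℂ => (s - Complex.I * ω) * (Complex.I * sisoTf A B C D s))
        (𝓝[≠] (Complex.I * ω)) (𝓝 ρ) ∧
      Tendsto (fun s : ℂ => (s - Complex.I * ω) * (s * (sisoTf A B C D s - D)))
        (𝓝[≠] (Complex.I * ω)) (𝓝 (ω * ρ)) := by
    intro ω hω
    obtain ⟨ρ, h1, h2⟩ := residue_lemma A B C D hmin _ (hsimple ω hω)
    have hid : Tendsto (fun s : ℂ => s) (𝓝[≠] (Complex.I * ω)) (𝓝 (Complex.I * ω)) :=
      tendsto_id.mono_left nhdsWithin_le_nhds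
    refine ⟨Complex.I * ρ, mul_ne_zero Complex.I_ne_zero h1, ?_, ?_⟩
    · have := (h2.const_mul Complex.I).add
        ((hid.sub_const (Complex.I * ω)).mul_const (Complex.I * D))
      rw [sub_self, zero_mul, add_zero] at this
      refine this.congr fun s => ?_
      ring
    · have := hid.mul h2
      rw [show (ω : ℂ) * (Complex.I * ρ) = Complex.I * ω * ρ by ring]
      refine this.congr fun s => ?_
      ring
  have hsq : (-1 : ℝ) ^ n * (-1) ^ n = 1 := by rw [← mul_pow]; simp
  constructor
  · rintro ⟨-, h2, h3⟩
    have hpos : ∀ ω : ℝ, 0 < ω → (Complex.I * ω) ∈ eigs A →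
          ∃ r : ℝ, 0 < r ∧
            Filter.Tendsto (fun s : ℂ =>
                (s - Complex.I * ω) * (s * (sisoTf A B C D s - D)))
              (nhdsWithin (Complex.I * ω) {Complex.I * ω}ᶜ) (nhds (r : ℂ)) := by
      intro ω hω he
      obtain ⟨ρ, hρ, t1, t2⟩ := hres ω he
      obtain ⟨k, hk, t3⟩ := h3 ω hω he
      have := tendsto_nhds_unique t1 t3
      subst this
      refine ⟨ω * k, mul_pos hω (lt_of_le_of_ne hk ?_), by simpa using t2⟩
      rintro rfl
      simp at hρ
    constructor
    · intro x hx
      apply poly_odd q hqm.ne_zero ((-1) ^ n) x (by simp)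
      have hfin : (eigs A).Finite := by
        have : eigs A = {s | (A.map Complex.ofReal).charpoly.IsRoot s} := by
          ext s; exact Matrix.mem_spectrum_iff_isRoot_charpoly
        rw [this]
        exact Polynomial.finite_setOfPred_isRoot (Matrix.charpoly_monic _).ne_zero
      have hfin2 : ((fun s : ℂ => (s ^ 2).re) '' eigs A).Finite := hfin.image _
      have hev1 : ∀ᶠ y in 𝓝[≠] x, y ∉ ((fun s : ℂ => (s ^ 2).re) '' eigs A) := by
        have : ((fun s : ℂ => (s ^ 2).re) '' eigs A \ {x})ᶜ ∈ 𝓝 x :=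
          (hfin2.subset Set.sdiff_subset).isClosed.isOpen_compl.mem_nhds (by simp)
        filter_upwards [nhdsWithin_le_nhds this, self_mem_nhdsWithin] with y hy hyx hm
        exact hy ⟨hm, hyx⟩
      filter_upwards [hev1, nhdsWithin_le_nhds (Iio_mem_nhds hx)] with y hy hy0
      have hy0 : y < 0 := hy0
      have hw : 0 < Real.sqrt (-y) := Real.sqrt_pos.2 (by linarith)
      have hw2 : -(Real.sqrt (-y)) ^ 2 = y := by rw [Real.sq_sqrt (by linarith)]; ring
      have hne : Complex.I * (Real.sqrt (-y) : ℝ) ∉ eigs A := by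
        intro hm
        apply hy
        refine ⟨_, hm, ?_⟩
        dsimp only
        rw [mul_pow, Complex.I_sq, ← Complex.ofReal_pow, neg_one_mul, ← Complex.ofReal_neg, hw2]
        exact Complex.ofReal_re y
      obtain ⟨t, ht, e⟩ := hkey _ hne
      have him := h2 _ hw hne
      rw [hw2] at e
      have h5 : 0 ≤ t * (-Real.sqrt (-y) * (sisoTf A B C D (Complex.I * (Real.sqrt (-y) : ℝ))).im) :=
        mul_nonneg ht.le (by nlinarith)
      have h6 : ((-1 : ℝ) ^ n * q.eval y) * (C * B) 0 0 = t * (-Real.sqrt (-y) * (sisoTf A B C D (Complex.I * (Real.sqrt (-y) : ℝ))).im) := by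
        linear_combination ((-1 : ℝ) ^ n) * e + t * (-Real.sqrt (-y) * (sisoTf A B C D (Complex.I * (Real.sqrt (-y) : ℝ))).im) * hsq
      exact nonneg_of_mul_nonneg_left (h6 ▸ h5) hCB
    · intro ω hω he
      rcases lt_or_gt_of_ne hω with hl | hl
      · have he' : Complex.I * ((-ω : ℝ) : ℂ) ∈ eigs A := by
          rw [← conj_I_mul]; exact eigs_conj A _ he
        obtain ⟨r, hr, t⟩ := hpos (-ω) (by linarith) he'
        refine ⟨r, hr, ?_⟩
        have hcj : Tendsto (starRingEnd ℂ) (𝓝[≠] (Complex.I * ω))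
            (𝓝[≠] (Complex.I * ((-ω : ℝ) : ℂ))) := by
          rw [← conj_I_mul]
          exact (Complex.continuous_conj.continuousWithinAt.tendsto_nhdsWithin (fun s hs h => hs ((starRingEnd ℂ).injective h)))
        have := (Complex.continuous_conj.tendsto (r : ℂ)).comp (t.comp hcj)
        rw [Complex.conj_ofReal] at this
        refine this.congr fun s => ?_
        simp [tf_conj, sub_eq_add_neg]
      · exact hpos ω hl he
  · rintro ⟨h1, h2⟩
    refine ⟨fun μ hμ => ⟨fun h => h0 (h ▸ hμ), hstable μ hμ⟩, ?_, ?_⟩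
    · intro ω hω hne
      have := poly_even _ q rfl hqm h1 (-ω ^ 2) (by nlinarith)
      obtain ⟨t, ht, e⟩ := hkey ω hne
      rw [hqd] at this
      have h6 : ((-1 : ℝ) ^ n * q.eval (-ω ^ 2)) * (C * B) 0 0 = -((t * ω) * (sisoTf A B C D (Complex.I * ω)).im) := by
        linear_combination ((-1 : ℝ) ^ n) * e + t * (-ω * (sisoTf A B C D (Complex.I * ω)).im) * hsq
      have h7 := mul_nonneg this hCB.le
      rw [h6] at h7
      by_contra! hc
      have := mul_pos (mul_pos ht hω) hc
      linarith
    · intro ω hω he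
      obtain ⟨ρ, hρ, t1, t2⟩ := hres ω he
      obtain ⟨r, hr, t3⟩ := h2 ω hω.ne' he
      have := tendsto_nhds_unique t2 t3
      refine ⟨r / ω, (div_pos hr hω).le, ?_⟩
      have hω' : (ω : ℂ) ≠ 0 := by exact_mod_cast hω.ne'
      have e : ((r / ω : ℝ) : ℂ) = ρ := by
        push_cast; rw [← this]; field_simp
      rw [e]; exact t1
end
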